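/- arXiv:1610.06617 — 2 statements merged into one kernel-verified Lean document; each statement's English description precedes it below -/
import Mathlib

section
/- Let K be an algebraically closed field of characteristic 0 and let n, m be positive integers. The ring of matrix invariants S(n,m) = K[Mat_{n,n}^m]^{GL_n} is generated by its homogeneous elements of degree at most n^2. -/
open MvPolynomial Matrix

/-- Coordinate functions of an `m`-tuple of `n × n` matrices. -/
def matCoords {K : Type} [Field K] {n m : ℕ} (X : Fin m → Matrix (Fin n) (Fin n) K) :
    Fin m × Fin n × Fin n → K :=
  fun p => X p.1 p.2.1 p.2.2

/-- The ring of matrix semi-invariants `R(n,m) = K[Mat_{n,n}^m]^{SL_n × SL_n}`, where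
`(A,B)` acts by `(X_1, …, X_m) ↦ (A X_1 B⁻¹, …, A X_m B⁻¹)`. -/
noncomputable def matrixSemiInvariants (K : Type) [Field K] (n m : ℕ) :
    Subalgebra K (MvPolynomial (Fin m × Fin n × Fin n) K) :=
  ⨅ (A : SpecialLinearGroup (Fin n) K) (B : SpecialLinearGroup (Fin n) K)
    (X : Fin m → Matrix (Fin n) (Fin n) K),
      AlgHom.equalizer
        (aeval (matCoords fun i => A.val * X i * (B⁻¹).val))
        (aeval (matCoords X))

/-- The ring of matrix invariants `S(n,m) = K[Mat_{n,n}^m]^{GL_n}`, where `A` acts by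
simultaneous conjugation. -/
noncomputable def matrixInvariants (K : Type) [Field K] (n m : ℕ) :
    Subalgebra K (MvPolynomial (Fin m × Fin n × Fin n) K) :=
  ⨅ (A : GeneralLinearGroup (Fin n) K) (X : Fin m → Matrix (Fin n) (Fin n) K),
      AlgHom.equalizer
        (aeval (matCoords fun i => A.val * X i * (A⁻¹).val))
        (aeval (matCoords X))


noncomputable def TT {R : Type} [CommRing R] {α : Type} [Fintype α] [DecidableEq α] {n : ℕ} (σ : Equiv.Perm α)
    (Z : α → Matrix (Fin n) (Fin n) R) : R :=
  ∑ J : α → Fin n, ∏ k, Z k (J (σ k)) (J k)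

theorem TT_eq {R : Type} [CommRing R] {α : Type} [Fintype α] [DecidableEq α] {n : ℕ} (σ : Equiv.Perm α)
    (Z : α → Matrix (Fin n) (Fin n) R) :
    TT σ Z = ∑ I : α → Fin n, ∑ J : α → Fin n, if I = J ∘ σ then ∏ k, Z k (I k) (J k) else 0 := by
  rw [Finset.sum_comm]
  unfold TT
  refine Finset.sum_congr rfl fun J _ => ?_
  simp

theorem TT_conj {R : Type} [CommRing R] {α : Type} [Fintype α] [DecidableEq α] {n : ℕ} (σ : Equiv.Perm α)
    (Z : α → Matrix (Fin n) (Fin n) R) (g h : Matrix (Fin n) (Fin n) R) (hg : h * g = 1) :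
    TT σ (fun k => g * Z k * h) = TT σ Z := by
  have e1 : ∀ J : α → Fin n, ∏ k, (g * Z k * h) (J (σ k)) (J k) =
      ∑ E : α → Fin n, ∑ C : α → Fin n, (∏ k, Z k (C k) (E k)) *
        ∏ k, (h (E (σ k)) (J (σ k)) * g (J (σ k)) (C k)) := by
    intro J
    simp only [Matrix.mul_apply, Finset.sum_mul]
    rw [Finset.prod_univ_sum]
    simp only [Fintype.piFinset_univ]
    refine Finset.sum_congr rfl fun E _ => ?_
    rw [Finset.prod_univ_sum]
    simp only [Fintype.piFinset_univ]
    refine Finset.sum_congr rfl fun C _ => ?_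
    simp only [Finset.prod_mul_distrib]
    rw [Equiv.prod_comp σ (fun k => h (E k) (J k))]
    ring
  unfold TT
  simp only [e1]
  rw [Finset.sum_comm]
  refine Finset.sum_congr rfl fun E _ => ?_
  rw [Finset.sum_comm]
  have e2 : ∀ C : α → Fin n, ∑ J : α → Fin n, (∏ k, Z k (C k) (E k)) *
        ∏ k, (h (E (σ k)) (J (σ k)) * g (J (σ k)) (C k)) =
        if C = E ∘ σ then ∏ k, Z k (C k) (E k) else 0 := by
    intro C
    rw [← Finset.mul_sum]
    have : ∑ J : α → Fin n, ∏ k, (h (E (σ k)) (J (σ k)) * g (J (σ k)) (C k)) =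
        ∑ J : α → Fin n, ∏ k, (h (E (σ k)) (J k) * g (J k) (C k)) :=
      Equiv.sum_comp (σ.symm.arrowCongr (Equiv.refl (Fin n)))
        (fun J => ∏ k, (h (E (σ k)) (J k) * g (J k) (C k)))
    rw [this]
    have h3 := Finset.prod_univ_sum (fun _ : α => (Finset.univ : Finset (Fin n)))
      (fun k j => h (E (σ k)) j * g j (C k))
    simp only [Fintype.piFinset_univ] at h3
    rw [← h3]
    simp only [← Matrix.mul_apply, hg, Matrix.one_apply]
    split_ifs with hc
    · subst hc; simp
    · have : ∃ k, E (σ k) ≠ C k := by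
        by_contra hcon; push Not at hcon; exact hc (funext fun k => (hcon k).symm)
      obtain ⟨k, hk⟩ := this
      have h4 : (∏ i, if E (σ i) = C i then (1 : R) else 0) = 0 :=
        Finset.prod_eq_zero (Finset.mem_univ k) (if_neg hk)
      rw [h4, mul_zero]
  simp [e2]

theorem TT_split {R : Type} [CommRing R] {α : Type} [Fintype α] [DecidableEq α] {n : ℕ} (σ : Equiv.Perm α)
    (Z : α → Matrix (Fin n) (Fin n) R) (p : α → Prop) [DecidablePred p] (hp : ∀ x, p (σ x) ↔ p x) :
    TT σ Z = TT (σ.subtypePerm hp) (fun k => Z k) *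
      TT (σ.subtypePerm (p := fun x => ¬ p x) (fun x => not_congr (hp x))) (fun k => Z k) := by
  unfold TT
  rw [Finset.sum_mul_sum, ← Fintype.sum_prod_type']
  rw [← Equiv.sum_comp (Equiv.piEquivPiSubtypeProd p (fun _ => Fin n))]
  refine Finset.sum_congr rfl fun J _ => ?_
  rw [← Fintype.prod_subtype_mul_prod_subtype p]
  rfl

open Classical in
theorem razm {α : Type} [Fintype α] [DecidableEq α] {n : ℕ} (hn : 0 < n)
    (hα : n ^ 2 < Fintype.card α) (c : Equiv.Perm α) :
    ∃ q : {σ : Equiv.Perm α // ¬ σ.IsCycleOn Set.univ} → ℚ,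
      ∀ I J : α → Fin n, (if I = J ∘ c then (1:ℚ) else 0) =
        ∑ σ, q σ * (if I = J ∘ σ.1 then 1 else 0) := by
  classical
  let t : Equiv.Perm α → ((α → Fin n) × (α → Fin n) → ℚ) :=
    fun σ e => if e.1 = e.2 ∘ σ then 1 else 0
  have key : t c ∈ Submodule.span ℚ (Set.range fun σ : {σ : Equiv.Perm α // ¬ σ.IsCycleOn Set.univ} => t σ) := by
    by_contra hc
    obtain ⟨x, hx, hker⟩ := Submodule.exists_le_ker_of_notMem hc
    apply hx
    let y : (α → Fin n) → (α → Fin n) → ℚ := fun I J => x (Pi.single (I, J) 1)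
    have hxt : ∀ σ, x (t σ) = ∑ J : α → Fin n, y (J ∘ σ) J := by
      intro σ
      have : t σ = ∑ J : α → Fin n, Pi.single (J ∘ σ, J) 1 := by
        ext ⟨I, J⟩
        simp only [t, Finset.sum_apply, Pi.single_apply, Prod.mk.injEq]
        rw [Finset.sum_eq_single J]
        · simp
        · intro b _ hb
          simp [hb.symm]
        · simp
      rw [this, map_sum]
    have h0 : ∀ σ : Equiv.Perm α, ¬ σ.IsCycleOn Set.univ → x (t σ) = 0 := by
      intro σ hσ
      exact hker (Submodule.subset_span ⟨⟨σ, hσ⟩, rfl⟩)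
    have hsum : ∑ σ : Equiv.Perm α, ((Equiv.Perm.sign σ : ℤ) : ℚ) * (x (t σ)) ^ 2 = 0 := by
      simp only [hxt, sq, Finset.sum_mul_sum]
      simp only [Finset.mul_sum]
      rw [Finset.sum_comm]
      refine Finset.sum_eq_zero fun J _ => ?_
      rw [Finset.sum_comm]
      refine Finset.sum_eq_zero fun J' _ => ?_
      have : ¬ Function.Injective (fun k => (J k, J' k)) := by
        intro hi
        have := Fintype.card_le_of_injective _ hi
        simp [← sq] at this
        omega
      simp only [Function.Injective, not_forall, Prod.mk.injEq] at this
      obtain ⟨a, b, ⟨h1, h2⟩, hab⟩ := this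
      have hJ : ∀ L : α → Fin n, L a = L b → ∀ σ : Equiv.Perm α, L ∘ ⇑(Equiv.swap a b * σ) = L ∘ σ := by
        intro L hL σ
        ext k
        simp only [Function.comp, Equiv.Perm.mul_apply, Equiv.swap_apply_def]
        split_ifs with ha hb
        · rw [ha, hL]
        · rw [hb, hL]
        · rfl
      have := Equiv.sum_comp (Equiv.mulLeft (Equiv.swap a b)) (fun σ : Equiv.Perm α => ((Equiv.Perm.sign σ : ℤ) : ℚ) * (y (J ∘ σ) J * y (J' ∘ σ) J'))
      simp only [Equiv.coe_mulLeft, hJ J h1, hJ J' h2, map_mul, Equiv.Perm.sign_swap hab] at this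
      simp at this
      linarith
    have hcard : 1 < Fintype.card α := by nlinarith
    have hs : ∀ σ : Equiv.Perm α, ((Equiv.Perm.sign σ : ℤ) : ℚ) * (x (t σ)) ^ 2 =
        -(-1) ^ (Fintype.card α) * (x (t σ)) ^ 2 := by
      intro σ
      by_cases hσ : σ.IsCycleOn Set.univ
      · have hnt : Nontrivial α := Fintype.one_lt_card_iff_nontrivial.mp hcard
        have hne : ∀ a, σ a ≠ a := fun a => hσ.apply_ne Set.nontrivial_univ (Set.mem_univ a)
        have hcyc : σ.IsCycle := by
          obtain ⟨a⟩ := hnt.to_nonempty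
          exact ⟨a, hne a, fun b _ => hσ.2 (Set.mem_univ a) (Set.mem_univ b)⟩
        have : σ.support = Finset.univ := by ext a; simp [hne a]
        rw [hcyc.sign, this, Finset.card_univ]
        push_cast
        rfl
      · rw [h0 σ hσ]; simp
    simp only [hs, ← Finset.mul_sum] at hsum
    have h2 : ∑ σ : Equiv.Perm α, (x (t σ)) ^ 2 = 0 := by
      rcases mul_eq_zero.mp hsum with h | h
      · exfalso; revert h; simp
      · exact h
    rw [Finset.sum_eq_zero_iff_of_nonneg (fun _ _ => sq_nonneg _)] at h2
    simpa using h2 c (Finset.mem_univ c)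
  rw [Submodule.mem_span_range_iff_exists_fun] at key
  obtain ⟨q, hq⟩ := key
  refine ⟨q, ?_⟩
  intro I J
  have := congrFun hq (I, J)
  simp only [Finset.sum_apply, Pi.smul_apply, smul_eq_mul, t] at this
  rw [← this]

open Classical in
theorem TT_razm {K R : Type} [Field K] [CharZero K] [CommRing R] [Algebra K R]
    {α : Type} [Fintype α] [DecidableEq α] {n : ℕ} (hn : 0 < n)
    (hα : n ^ 2 < Fintype.card α) (c : Equiv.Perm α) :
    ∃ q : {σ : Equiv.Perm α // ¬ σ.IsCycleOn Set.univ} → K,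
      ∀ Z : α → Matrix (Fin n) (Fin n) R, TT c Z = ∑ σ, q σ • TT σ.1 Z := by
  classical
  obtain ⟨q, hq⟩ := razm hn hα c
  refine ⟨fun σ => (q σ : K), fun Z => ?_⟩
  simp only [TT_eq, Finset.smul_sum]
  symm
  rw [Finset.sum_comm]
  refine Finset.sum_congr rfl fun I _ => ?_
  rw [Finset.sum_comm]
  refine Finset.sum_congr rfl fun J _ => ?_
  symm
  have h := congrArg (fun x : ℚ => (x : K) • ∏ k, Z k (I k) (J k)) (hq I J)
  simp only [Rat.cast_sum, Finset.sum_smul] at h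
  convert h using 1
  · split_ifs <;> simp
  · refine Finset.sum_congr rfl fun σ _ => ?_
    split_ifs <;> simp

noncomputable def genX (K : Type) [Field K] (n m : ℕ) (i : Fin m) :
    Matrix (Fin n) (Fin n) (MvPolynomial (Fin m × Fin n × Fin n) K) :=
  Matrix.of fun a b => X (i, a, b)

theorem mem_matInv (K : Type) [Field K] (n m : ℕ) (f : MvPolynomial (Fin m × Fin n × Fin n) K) :
    f ∈ matrixInvariants K n m ↔ ∀ (A : GeneralLinearGroup (Fin n) K)
      (X : Fin m → Matrix (Fin n) (Fin n) K),
      aeval (matCoords fun i => A.val * X i * (A⁻¹).val) f = aeval (matCoords X) f := by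
  simp only [matrixInvariants, Algebra.mem_iInf, AlgHom.mem_equalizer]

theorem TT_mem_inv (K : Type) [Field K] (n m : ℕ) {α : Type} [Fintype α] [DecidableEq α]
    (σ : Equiv.Perm α) (w : α → Fin m) :
    TT σ (fun k => genX K n m (w k)) ∈ matrixInvariants K n m := by
  rw [mem_matInv]
  intro A Y
  have h : ∀ Y : Fin m → Matrix (Fin n) (Fin n) K,
      aeval (matCoords Y) (TT σ (fun k => genX K n m (w k))) = TT σ (fun k => Y (w k)) := by
    intro Y
    simp [TT, genX, matCoords]
  rw [h, h]
  exact TT_conj σ (fun k => Y (w k)) A.val (A⁻¹).val (by simp)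

theorem TT_homog (K : Type) [Field K] (n m : ℕ) {α : Type} [Fintype α] [DecidableEq α]
    (σ : Equiv.Perm α) (w : α → Fin m) :
    (TT σ (fun k => genX K n m (w k))).IsHomogeneous (Fintype.card α) := by
  unfold TT
  refine IsHomogeneous.sum _ _ _ fun J _ => ?_
  have := IsHomogeneous.prod (R := K) Finset.univ (fun k => genX K n m (w k) (J (σ k)) (J k))
    (fun _ => 1) (fun k _ => by simp [genX, isHomogeneous_X])
  simpa using this

theorem TT_mem_adjoin (K : Type) [Field K] [CharZero K] (n m : ℕ) (hn : 0 < n) (N : ℕ) :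
    ∀ (α : Type) [Fintype α] [DecidableEq α] (_ : Fintype.card α = N)
    (σ : Equiv.Perm α) (w : α → Fin m),
    TT σ (fun k => genX K n m (w k)) ∈ Algebra.adjoin K
        {f | f ∈ matrixInvariants K n m ∧ ∃ d ≤ n ^ 2, f.IsHomogeneous d} := by
  induction N using Nat.strong_induction_on with
  | _ N ih =>
  intro α _ _ hN σ w
  by_cases hle : Fintype.card α ≤ n ^ 2
  · exact Algebra.subset_adjoin ⟨TT_mem_inv K n m σ w, _, hle, TT_homog K n m σ w⟩
  push Not at hle
  obtain ⟨q, hq⟩ := TT_razm (K := K) (R := MvPolynomial (Fin m × Fin n × Fin n) K) hn hle σ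
  rw [hq]
  refine Subalgebra.sum_mem _ fun τ _ => Subalgebra.smul_mem _ ?_ _
  obtain ⟨τ, hτ⟩ := τ
  classical
  have : ∃ x y, ¬ τ.SameCycle x y := by
    by_contra hcon
    push Not at hcon
    exact hτ ⟨by simpa using τ.bijective, fun x _ y _ => hcon x y⟩
  obtain ⟨x, y, hxy⟩ := this
  rw [TT_split τ _ (fun z => τ.SameCycle x z) (fun z => Equiv.Perm.sameCycle_apply_right)]
  have h1 := ih (Fintype.card {z // τ.SameCycle x z})
    (by rw [← hN]; exact Fintype.card_subtype_lt (x := y) hxy) {z // τ.SameCycle x z} rfl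
    (τ.subtypePerm (fun z => Equiv.Perm.sameCycle_apply_right)) (fun k => w k.1)
  have h2 := ih (Fintype.card {z // ¬ τ.SameCycle x z})
    (by rw [← hN]; exact Fintype.card_subtype_lt (x := x) (not_not.mpr (Equiv.Perm.SameCycle.refl τ x))) {z // ¬ τ.SameCycle x z} rfl
    (τ.subtypePerm (fun z => not_congr Equiv.Perm.sameCycle_apply_right)) (fun k => w k.1)
  convert Subalgebra.mul_mem _ h1 h2

noncomputable def expo {α ι : Type} [Fintype α] (t : α → ι) : ι →₀ ℕ := ∑ k, Finsupp.single (t k) 1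

theorem prod_X_eq {K α ι : Type} [Field K] [Fintype α] (t : α → ι) :
    ∏ k, (X (t k) : MvPolynomial ι K) = monomial (expo t) 1 := by
  simp only [expo, X]
  rw [← MvPolynomial.monomial_sum_one]

theorem expo_apply {α ι : Type} [Fintype α] [DecidableEq ι] (t : α → ι) (p : ι) :
    expo t p = Fintype.card {k // t k = p} := by
  simp [expo, Finsupp.finsetSum_apply, Finsupp.single_apply, Fintype.card_subtype]

theorem expo_perm {α ι : Type} [Fintype α] [DecidableEq ι] (t t' : α → ι) (h : expo t = expo t') :
    ∃ σ : Equiv.Perm α, t = t' ∘ σ := by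
  have e : ∀ p, Nonempty ({k // t k = p} ≃ {k // t' k = p}) := by
    intro p
    rw [← Fintype.card_eq, ← expo_apply, ← expo_apply, h]
  replace e := fun p => (e p).some
  refine ⟨Equiv.ofFiberEquiv e, ?_⟩
  ext k
  exact (Equiv.ofFiberEquiv_map e k).symm

theorem expo_comp {α ι : Type} [Fintype α] (t : α → ι) (σ : Equiv.Perm α) :
    expo (t ∘ σ) = expo t := by
  unfold expo
  exact Equiv.sum_comp σ (fun k => Finsupp.single (t k) 1)

theorem expo_surj {d : ℕ} {ι : Type} [DecidableEq ι] (s : ι →₀ ℕ) (hs : s.degree = d) :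
    ∃ t : Fin d → ι, expo t = s := by
  classical
  let l := (Finsupp.toMultiset s).toList
  have hl : l.length = d := by
    simp only [l, Multiset.length_toList, Finsupp.card_toMultiset, ← hs]
    rfl
  subst hl
  refine ⟨l.get, ?_⟩
  ext p
  have : s p = l.count p := by
    rw [← Multiset.coe_count, Multiset.coe_toList, Finsupp.count_toMultiset]
  rw [this, expo_apply, Fintype.card_subtype]
  simp only [List.get_eq_getElem]
  exact Fin.card_filter_univ_eq_vector_get_eq_count p ⟨l, rfl⟩

theorem sym_inj {K α ι : Type} [Field K] [CharZero K] [Fintype α] [DecidableEq α] [Fintype ι] [DecidableEq ι]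
    (a : (α → ι) → K) (ha : ∀ t (σ : Equiv.Perm α), a (t ∘ σ) = a t)
    (h : ∑ t, C (a t) * ∏ k, (X (t k) : MvPolynomial ι K) = 0) : ∀ t, a t = 0 := by
  intro t0
  have h1 := congrArg (coeff (expo t0)) h
  simp only [prod_X_eq, coeff_sum, coeff_C_mul, coeff_monomial, coeff_zero, mul_ite, mul_one,
    mul_zero] at h1
  rw [← Finset.sum_filter] at h1
  rw [Finset.sum_congr rfl (g := fun _ => a t0)] at h1
  · rw [Finset.sum_const, nsmul_eq_mul, mul_eq_zero] at h1
    rcases h1 with h1 | h1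
    · exfalso
      rw [Nat.cast_eq_zero, Finset.card_eq_zero] at h1
      have : t0 ∈ Finset.univ.filter (fun t => expo t = expo t0) := by simp
      rw [h1] at this
      simp at this
    · exact h1
  · intro t ht
    obtain ⟨σ, rfl⟩ := expo_perm t t0 (Finset.mem_filter.mp ht).2
    exact ha _ _

theorem sym_exists {K ι : Type} {d : ℕ} [Field K] [CharZero K] [Fintype ι] [DecidableEq ι]
    (f : MvPolynomial ι K) (hf : f.IsHomogeneous d) :
    ∃ a : (Fin d → ι) → K, (∀ t (σ : Equiv.Perm (Fin d)), a (t ∘ σ) = a t) ∧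
      f = ∑ t, C (a t) * ∏ k, (X (t k) : MvPolynomial ι K) := by
  classical
  refine ⟨fun t => coeff (expo t) f / ((Finset.univ.filter (fun t' : Fin d → ι => expo t' = expo t)).card : K), ?_, ?_⟩
  · intro t σ
    simp only [expo_comp]
  · ext s
    simp only [prod_X_eq, coeff_sum, coeff_C_mul, coeff_monomial, mul_ite, mul_one,
      mul_zero]
    rw [← Finset.sum_filter]
    rw [Finset.sum_congr rfl (g := fun _ => coeff s f / ((Finset.univ.filter (fun t' : Fin d → ι => expo t' = s)).card : K))]
    · rw [Finset.sum_const, nsmul_eq_mul]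
      by_cases hc : coeff s f = 0
      · simp [hc]
      · obtain ⟨t, ht⟩ := expo_surj s (d := d) (by
          have := hf hc
          rwa [Finsupp.degree_eq_weight_one])
        rw [mul_div_cancel₀]
        rw [Nat.cast_ne_zero]
        exact Finset.card_ne_zero_of_mem (a := t) (by simp [ht])
    · intro t ht
      rw [(Finset.mem_filter.mp ht).2]

theorem sym_inv {K α ι : Type} [Field K] [CharZero K] [Fintype α] [DecidableEq α] [Fintype ι] [DecidableEq ι]
    (a : (α → ι) → K) (ha : ∀ t (σ : Equiv.Perm α), a (t ∘ σ) = a t) (G : ι → ι → K)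
    (h : aeval (fun p => ∑ q, C (G p q) * (X q : MvPolynomial ι K))
      (∑ t, C (a t) * ∏ k, (X (t k) : MvPolynomial ι K)) =
      ∑ t, C (a t) * ∏ k, (X (t k) : MvPolynomial ι K)) (u : α → ι) :
    ∑ t, a t * ∏ k, G (t k) (u k) = a u := by
  have h2 := sym_inj (fun u => (∑ t, a t * ∏ k, G (t k) (u k)) - a u) ?_ ?_ u
  · exact sub_eq_zero.mp h2
  · intro u σ
    simp only [ha]
    congr 1
    rw [← Equiv.sum_comp (σ.symm.arrowCongr (Equiv.refl ι))]
    refine Finset.sum_congr rfl fun t _ => ?_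
    have : (σ.symm.arrowCongr (Equiv.refl ι)) t = t ∘ σ := rfl
    rw [this, ha]
    congr 1
    exact Equiv.prod_comp σ (fun k => G (t k) (u k))
  · simp only [C_sub, sub_mul, Finset.sum_sub_distrib]
    rw [sub_eq_zero, ← h]
    simp only [map_sum, map_mul, map_prod, aeval_X, algHom_C, algebraMap_eq, Finset.sum_mul]
    rw [Finset.sum_comm]
    refine Finset.sum_congr rfl fun t _ => ?_
    rw [Finset.prod_univ_sum]
    simp only [Fintype.piFinset_univ, Finset.mul_sum]
    refine Finset.sum_congr rfl fun u _ => ?_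
    rw [Finset.prod_mul_distrib, mul_assoc]

theorem gl_span {K α : Type} [Field K] [CharZero K] [Fintype α] [DecidableEq α] {n : ℕ}
    (x : (α → Fin n × Fin n) → K)
    (hx : ∀ g : GeneralLinearGroup (Fin n) K, ∑ t, x t * ∏ k, g.val (t k).1 (t k).2 = 0)
    (c : (α → Fin n × Fin n) → K) (hc : ∀ t (σ : Equiv.Perm α), c (t ∘ σ) = c t) :
    ∑ t, x t * c t = 0 := by
  have hre : ∀ (σ : Equiv.Perm α) (F : (α → Fin n × Fin n) → K), ∑ t, F (t ∘ σ) = ∑ t, F t :=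
    fun σ F => Equiv.sum_comp (σ.symm.arrowCongr (Equiv.refl _)) F
  have h0 := sym_inj (fun t => ∑ σ : Equiv.Perm α, x (t ∘ σ)) ?_ ?_
  · have h1 : ∑ σ : Equiv.Perm α, ∑ t, x t * c t = 0 := by
      calc ∑ σ : Equiv.Perm α, ∑ t, x t * c t
          = ∑ σ : Equiv.Perm α, ∑ t, x (t ∘ σ) * c t := by
            refine Finset.sum_congr rfl fun σ _ => ?_
            rw [← hre σ]
            simp only [hc]
        _ = 0 := by
            rw [Finset.sum_comm]
            simp only [← Finset.sum_mul, h0]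
            simp
    rw [Finset.sum_const, nsmul_eq_mul, mul_eq_zero] at h1
    rcases h1 with h1 | h1
    · simp [Fintype.card_ne_zero] at h1
    · exact h1
  · intro t σ
    exact Equiv.sum_comp (Equiv.mulLeft σ) (fun τ : Equiv.Perm α => x (t ∘ τ))
  · apply MvPolynomial.eq_of_eval_eq_on_gl
    intro g
    simp only [map_sum, map_mul, map_prod, eval_X, eval_C, map_zero, Finset.sum_mul]
    rw [Finset.sum_comm]
    refine Finset.sum_eq_zero fun σ _ => ?_
    rw [← hx g, ← hre σ (fun t => x t * ∏ k, g.val (t k).1 (t k).2)]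
    refine Finset.sum_congr rfl fun t _ => ?_
    congr 1
    exact (Equiv.prod_comp σ (fun k => g.val (t k).1 (t k).2)).symm

noncomputable def permRep (K α : Type) [Field K] (n : ℕ) :
    Representation K (Equiv.Perm α) ((α → Fin n) → K) where
  toFun σ := { toFun := fun v I => v (I ∘ σ)
               map_add' := fun _ _ => rfl
               map_smul' := fun _ _ => rfl }
  map_one' := rfl
  map_mul' _ _ := rfl

theorem double_cent {K α : Type} [Field K] [CharZero K] [Fintype α] [DecidableEq α] {n : ℕ}
    (Φ : Matrix (α → Fin n) (α → Fin n) K)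
    (hΦ : ∀ c : Matrix (α → Fin n) (α → Fin n) K,
      (∀ I J (σ : Equiv.Perm α), c (I ∘ σ) (J ∘ σ) = c I J) → Φ * c = c * Φ) :
    ∃ r : Equiv.Perm α → K, ∀ J I, Φ J I = ∑ σ, r σ * if I = J ∘ σ then 1 else 0 := by
  classical
  let ρ := permRep K α n
  let V := (α → Fin n) → K
  have : NeZero (Nat.card (Equiv.Perm α) : K) := ⟨by simp [Fintype.card_ne_zero]⟩
  let φ : Module.End (Module.End (MonoidAlgebra K (Equiv.Perm α)) ρ.asModule) ρ.asModule :=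
    { toFun := fun v => ρ.asModuleEquiv.symm (Φ *ᵥ ρ.asModuleEquiv v)
      map_add' := by
        intro v w
        simp [Matrix.mulVec_add]
      map_smul' := by
        intro e v
        let e' : V →ₗ[K] V := ρ.asModuleEquiv.toLinearMap ∘ₗ (e.restrictScalars K) ∘ₗ ρ.asModuleEquiv.symm.toLinearMap
        have he : ∀ (σ : Equiv.Perm α) (v : V), e' (ρ σ v) = ρ σ (e' v) := by
          intro σ v
          simp only [e', LinearMap.comp_apply, LinearMap.restrictScalars_apply, LinearEquiv.coe_coe]
          rw [Representation.asModuleEquiv_symm_map_rho, map_smul, Representation.asModuleEquiv_map_smul]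
          simp
        have h1 := hΦ (LinearMap.toMatrix' e') (by
          intro I J σ
          simp only [LinearMap.toMatrix'_apply]
          have h2 := congrFun (he σ (Pi.single (J ∘ σ) 1)) I
          have h3 : ρ σ (Pi.single (J ∘ σ) 1) = (Pi.single J 1 : V) := by
            ext I'
            change (Pi.single (J ∘ σ) 1 : V) (I' ∘ σ) = _
            simp only [Pi.single_apply]
            congr 1
            simp [Function.Surjective.right_cancellable σ.surjective]
          rw [h3] at h2
          exact h2.symm)
        have h2 := congrArg (fun B => B *ᵥ (ρ.asModuleEquiv v)) h1
        simp only [← Matrix.mulVec_mulVec, LinearMap.toMatrix'_mulVec] at h2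
        exact congrArg ρ.asModuleEquiv.symm h2 }
  obtain ⟨r, hr⟩ := jacobson_density φ
    (Finset.univ.image fun I : α → Fin n => ρ.asModuleEquiv.symm (Pi.single I 1 : V))
  refine ⟨fun σ => r.coeff σ, fun J I => ?_⟩
  have h1 := hr (ρ.asModuleEquiv.symm (Pi.single I 1 : V)) (Finset.mem_image_of_mem _ (Finset.mem_univ I))
  have h2 := congrArg (fun v => ρ.asModuleEquiv v J) h1
  simp only [Representation.asModuleEquiv_map_smul] at h2
  have h3 : ρ.asModuleEquiv (φ (ρ.asModuleEquiv.symm (Pi.single I 1 : V))) J = Φ J I := by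
    change (Φ *ᵥ (Pi.single I 1 : V)) J = _
    simp
  rw [h3] at h2
  rw [h2, Representation.asAlgebraHom_def, MonoidAlgebra.lift_apply, Finsupp.sum_fintype]
  · simp only [LinearMap.sum_apply, Finset.sum_apply, LinearMap.smul_apply, Pi.smul_apply, smul_eq_mul]
    refine Finset.sum_congr rfl fun σ _ => ?_
    congr 1
    change (Pi.single I 1 : V) (J ∘ σ) = _
    simp [Pi.single_apply, eq_comm]
  · simp

theorem sum_pair {α A B R : Type} [Fintype α] [DecidableEq α] [Fintype A] [Fintype B] [AddCommMonoid R]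
    (F : (α → A × B) → R) : ∑ t, F t = ∑ I : α → A, ∑ J : α → B, F (fun k => (I k, J k)) := by
  rw [← Fintype.sum_prod_type' (fun (I : α → A) (J : α → B) => F (fun k => (I k, J k)))]
  exact (Equiv.sum_comp (Equiv.arrowProdEquivProdArrow α (fun _ => A) (fun _ => B)).symm F).symm

def kron {K α : Type} [Field K] [Fintype α] {n : ℕ} (g : Matrix (Fin n) (Fin n) K) :
    Matrix (α → Fin n) (α → Fin n) K := Matrix.of fun I J => ∏ k, g (I k) (J k)

theorem kron_mul {K α : Type} [Field K] [Fintype α] [DecidableEq α] {n : ℕ}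
    (g h : Matrix (Fin n) (Fin n) K) : kron (α := α) g * kron h = kron (g * h) := by
  ext I J
  simp only [kron, Matrix.mul_apply, Matrix.of_apply]
  rw [Finset.prod_univ_sum]
  simp [Finset.prod_mul_distrib]

theorem kron_one {K α : Type} [Field K] [Fintype α] [DecidableEq α] {n : ℕ} :
    kron (α := α) (1 : Matrix (Fin n) (Fin n) K) = 1 := by
  ext I J
  simp only [kron, Matrix.of_apply, Matrix.one_apply]
  split_ifs with h
  · subst h; simp
  · obtain ⟨k, hk⟩ := Function.ne_iff.mp h
    exact Finset.prod_eq_zero (Finset.mem_univ k) (if_neg hk)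

theorem schur_weyl {K α : Type} [Field K] [CharZero K] [Fintype α] [DecidableEq α] {n : ℕ}
    (Φ : Matrix (α → Fin n) (α → Fin n) K)
    (hΦ : ∀ g : GeneralLinearGroup (Fin n) K, Φ * kron g.val = kron g.val * Φ) :
    ∃ r : Equiv.Perm α → K, ∀ J I, Φ J I = ∑ σ, r σ * if I = J ∘ σ then 1 else 0 := by
  classical
  apply double_cent
  intro c hc
  ext A B
  have aux : ∀ c : Matrix (α → Fin n) (α → Fin n) K,
      ∑ t : α → Fin n × Fin n, ((if (fun k => (t k).2) = B then Φ A (fun k => (t k).1) else 0) -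
        (if (fun k => (t k).1) = A then Φ (fun k => (t k).2) B else 0)) *
        c (fun k => (t k).1) (fun k => (t k).2) = (Φ * c) A B - (c * Φ) A B := by
    intro c
    rw [sum_pair]
    simp only [sub_mul, Finset.sum_sub_distrib, ite_mul, zero_mul]
    congr 1
    · simp [Matrix.mul_apply]
    · rw [Finset.sum_comm]
      simp [Matrix.mul_apply, mul_comm]
  have := gl_span _ (fun g => (aux (kron g.val)).trans (by rw [hΦ g, sub_self]))
    (fun t => c (fun k => (t k).1) (fun k => (t k).2))
    (fun t σ => hc (fun k => (t k).1) (fun k => (t k).2) σ)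
  rw [aux c] at this
  exact sub_eq_zero.mp this

def conjG {K : Type} [Field K] {n m : ℕ} (g : GeneralLinearGroup (Fin n) K)
    (p q : Fin m × Fin n × Fin n) : K :=
  if p.1 = q.1 then g.val p.2.1 q.2.1 * (g⁻¹).val q.2.2 p.2.2 else 0

noncomputable def psi {K : Type} [Field K] {n m : ℕ} (g : GeneralLinearGroup (Fin n) K) :
    MvPolynomial (Fin m × Fin n × Fin n) K →ₐ[K] MvPolynomial (Fin m × Fin n × Fin n) K :=
  aeval (fun p => ∑ q, C (conjG g p q) * X q)

theorem psi_of_mem {K : Type} [Field K] [CharZero K] {n m : ℕ}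
    (f : MvPolynomial (Fin m × Fin n × Fin n) K) (hf : f ∈ matrixInvariants K n m)
    (g : GeneralLinearGroup (Fin n) K) : psi g f = f := by
  rw [mem_matInv] at hf
  apply MvPolynomial.funext
  intro y
  have h := hf g (fun i => Matrix.of fun a b => y (i, a, b))
  have h2 : matCoords (fun i => Matrix.of fun a b => y (i, a, b)) = y := rfl
  rw [h2] at h
  rw [← coe_aeval_eq_eval]
  simp only [RingHom.coe_coe]
  rw [← h]
  unfold psi
  rw [← AlgHom.comp_apply, comp_aeval]
  congr 2
  ext ⟨i, a, b⟩
  simp only [map_sum, map_mul, aeval_X, algHom_C, Algebra.algebraMap_self, RingHom.id_apply, conjG, matCoords,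
    Fintype.sum_prod_type, Matrix.mul_apply, Matrix.of_apply, ite_mul, zero_mul]
  rw [Finset.sum_eq_single i]
  · simp only [if_true, Finset.sum_mul]
    rw [Finset.sum_comm]
    refine Finset.sum_congr rfl fun x _ => Finset.sum_congr rfl fun z _ => ?_
    ring
  · intro j _ hj
    simp [hj.symm]
  · simp

theorem psi_comp {K : Type} [Field K] [CharZero K] {n m : ℕ}
    (f : MvPolynomial (Fin m × Fin n × Fin n) K) 
    (g : GeneralLinearGroup (Fin n) K) (hf : psi g f = f) (d : ℕ) :
    psi g (homogeneousComponent d f) = homogeneousComponent d f := by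
  have hh : ∀ e, (psi g (homogeneousComponent e f)).IsHomogeneous e := by
    intro e
    have := (homogeneousComponent_isHomogeneous e f).aeval (n := 1)
      (fun p => ∑ q, C (conjG g p q) * (X q : MvPolynomial (Fin m × Fin n × Fin n) K)) (by
        intro p
        refine IsHomogeneous.sum _ _ _ fun q _ => ?_
        simpa using (isHomogeneous_C _ (conjG g p q)).mul (isHomogeneous_X K q))
    rw [one_mul] at this
    exact this
  have h1 : homogeneousComponent d (psi g f) = psi g (homogeneousComponent d f) := by
    conv_lhs => rw [← sum_homogeneousComponent f]
    simp only [map_sum]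
    by_cases hd : d ≤ f.totalDegree
    · rw [Finset.sum_eq_single d]
      · exact homogeneousComponent_eq_self (hh d)
      · intro e _ he
        rw [homogeneousComponent_of_mem (hh e), if_neg he.symm]
      · intro h; exfalso; apply h; simp; omega
    · rw [homogeneousComponent_eq_zero d f (by omega), map_zero]
      refine Finset.sum_eq_zero fun e he => ?_
      rw [homogeneousComponent_of_mem (hh e), if_neg]
      simp at he; omega
  rw [← h1, hf]

theorem homog_mem {K : Type} [Field K] [CharZero K] {n m d : ℕ} 
    (f : MvPolynomial (Fin m × Fin n × Fin n) K) (hf : f.IsHomogeneous d)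
    (hψ : ∀ g : GeneralLinearGroup (Fin n) K, psi g f = f) :
    ∃ r : (Fin d → Fin m) → Equiv.Perm (Fin d) → K,
      f = ∑ w, ∑ σ, r w σ • TT σ (fun k => genX K n m (w k)) := by
  classical
  obtain ⟨a, ha, hfa⟩ := sym_exists f hf
  have hinv : ∀ (g : GeneralLinearGroup (Fin n) K) u,
      ∑ t, a t * ∏ k, conjG g (t k) (u k) = a u := by
    intro g u
    apply sym_inv a ha
    rw [← hfa]
    exact hψ g
  let Φ : (Fin d → Fin m) → Matrix (Fin d → Fin n) (Fin d → Fin n) K :=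
    fun w => Matrix.of fun J I => a (fun k => (w k, I k, J k))
  have hΦ : ∀ w, ∀ g : GeneralLinearGroup (Fin n) K, Φ w * kron g.val = kron g.val * Φ w := by
    intro w g
    have h1 : kron (g⁻¹).val * Φ w * kron g.val = Φ w := by
      ext J' I'
      have h2 := hinv g (fun k => (w k, I' k, J' k))
      rw [sum_pair, Finset.sum_eq_single w] at h2
      · rw [sum_pair] at h2
        simp only [conjG, if_true, Finset.prod_mul_distrib] at h2
        simp only [Matrix.mul_apply, Finset.sum_mul, kron, Matrix.of_apply, Φ]
        rw [← h2]
        refine Finset.sum_congr rfl fun x _ => Finset.sum_congr rfl fun z _ => ?_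
        ring
      · intro w' _ hw
        obtain ⟨k, hk⟩ := Function.ne_iff.mp hw
        refine Finset.sum_eq_zero fun t _ => ?_
        rw [Finset.prod_eq_zero (Finset.mem_univ k) (by simp [conjG, hk]), mul_zero]
      · simp
    have h3 : kron (α := Fin d) g.val * kron (g⁻¹).val = 1 := by
      rw [kron_mul, ← kron_one]
      congr 1
      simp
    calc Φ w * kron g.val = kron g.val * kron (g⁻¹).val * (Φ w * kron g.val) := by rw [h3, one_mul]
      _ = kron g.val * (kron (g⁻¹).val * Φ w * kron g.val) := by simp only [mul_assoc]
      _ = _ := by rw [h1]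
  choose r hr using fun w => schur_weyl (Φ w) (hΦ w)
  refine ⟨r, ?_⟩
  rw [hfa, sum_pair]
  refine Finset.sum_congr rfl fun w _ => ?_
  rw [sum_pair]
  simp only [TT_eq, Finset.smul_sum]
  symm
  rw [Finset.sum_comm]
  refine Finset.sum_congr rfl fun I _ => ?_
  rw [Finset.sum_comm]
  refine Finset.sum_congr rfl fun J _ => ?_
  have : a (fun k => (w k, I k, J k)) = Φ w J I := rfl
  rw [this, hr w J I, map_sum, Finset.sum_mul]
  refine Finset.sum_congr rfl fun σ _ => ?_
  split_ifs <;> simp [genX, smul_eq_C_mul]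

/-- **Procesi–Razmyslov.** Over an algebraically closed field of characteristic
zero, the ring of matrix invariants `S(n,m)` is generated by its homogeneous elements of
degree `≤ n^2`. -/
theorem stmt_3 (K : Type) [Field K] [IsAlgClosed K] [CharZero K] (n m : ℕ)
    (hn : 0 < n) (hm : 0 < m) :
    Algebra.adjoin K
        {f | f ∈ matrixInvariants K n m ∧ ∃ d ≤ n ^ 2, f.IsHomogeneous d}
      = matrixInvariants K n m := by
  apply le_antisymm
  · exact Algebra.adjoin_le fun f hf => hf.1
  · intro f hf
    rw [← sum_homogeneousComponent f]
    refine Subalgebra.sum_mem _ fun d _ => ?_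
    obtain ⟨r, hr⟩ := homog_mem (homogeneousComponent d f) (homogeneousComponent_isHomogeneous d f)
      (fun g => psi_comp f g (psi_of_mem f hf g) d)
    rw [hr]
    exact Subalgebra.sum_mem _ fun w _ => Subalgebra.sum_mem _ fun σ _ =>
      Subalgebra.smul_mem _ (TT_mem_adjoin K n m hn _ (Fin d) rfl σ w) _
end

section
/- Let K be an algebraically closed field and n, m positive integers. The homogeneous elements of degree at most n^6 in R(n,m) = K[Mat_{n,n}^m]^{SL_n × SL_n} form a separating subset of R(n,m); that is, β_sep(R(n,m)) ≤ n^6. -/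
open MvPolynomial Matrix

open MvPolynomial Matrix

namespace Sep

/-- blow-up -/
def Big {R : Type*} [CommRing R] {m : ℕ} {ι κ δ ε : Type*} (x : Fin m → Matrix ι κ R)
    (T : Fin m → Matrix δ ε R) : Matrix (ι × δ) (κ × ε) R :=
  Matrix.of fun p q => ∑ l, x l p.1 q.1 * T l p.2 q.2

theorem Big_apply {R : Type*} [CommRing R] {m : ℕ} {ι κ δ ε : Type*} (x : Fin m → Matrix ι κ R)
    (T : Fin m → Matrix δ ε R) (p q) : Big x T p q = ∑ l, x l p.1 q.1 * T l p.2 q.2 := rfl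

theorem Big_map {R S : Type*} [CommRing R] [CommRing S] (f : R →+* S)
    {m : ℕ} {ι κ δ ε : Type*} (x : Fin m → Matrix ι κ R)
    (T : Fin m → Matrix δ ε R) :
    (Big x T).map f = Big (fun l => (x l).map f) (fun l => (T l).map f) := by
  ext p q
  simp [Big_apply]

/-- flattening -/
def flat {D E : Type*} [Ring D] [CommRing E] {δ ι κ : Type*} [Fintype δ] [DecidableEq δ]
    (φ : D →+* Matrix δ δ E) (M : Matrix ι κ D) : Matrix (ι × δ) (κ × δ) E :=
  Matrix.of fun p q => φ (M p.1 q.1) p.2 q.2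

theorem flat_mul {D E : Type*} [Ring D] [CommRing E] {δ ι κ μ : Type*} [Fintype δ] [DecidableEq δ]
    [Fintype κ]
    (φ : D →+* Matrix δ δ E) (M : Matrix ι κ D) (N : Matrix κ μ D) :
    flat φ (M * N) = flat φ M * flat φ N := by
  ext p q
  simp only [flat, Matrix.of_apply, Matrix.mul_apply, map_sum, map_mul, Fintype.sum_prod_type,
    Matrix.sum_apply]

theorem flat_one {D E : Type*} [Ring D] [CommRing E] {δ ι : Type*} [Fintype δ] [DecidableEq δ]
    [DecidableEq ι] (φ : D →+* Matrix δ δ E) :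
    flat φ (1 : Matrix ι ι D) = 1 := by
  ext ⟨i, a⟩ ⟨j, b⟩
  simp only [flat, Matrix.of_apply, Matrix.one_apply, Prod.mk.injEq]
  by_cases h : i = j
  · simp [h, Matrix.one_apply]
  · simp [h]

theorem rank_div {D E : Type*} [DivisionRing D] [Field E] {δ ι : Type*} [Fintype δ] [DecidableEq δ]
    [Fintype ι] [DecidableEq ι] (φ : D →+* Matrix δ δ E) (M : Matrix ι ι D) :
    ∃ s, (flat φ M).rank = Fintype.card δ * s := by
  classical
  let f : (ι → D) →ₗ[D] (ι → D) := Matrix.toLinearMapRight' M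
  let s := Module.finrank D (LinearMap.range f)
  let e : LinearMap.range f ≃ₗ[D] (Fin s → D) := (Module.finBasis D (LinearMap.range f)).equivFun
  let π : (ι → D) →ₗ[D] (Fin s → D) := e.toLinearMap ∘ₗ f.rangeRestrict
  let inc : (Fin s → D) →ₗ[D] (ι → D) := (LinearMap.range f).subtype ∘ₗ e.symm.toLinearMap
  have hπ : LinearMap.range π = ⊤ := by
    rw [LinearMap.range_eq_top]
    exact e.surjective.comp f.surjective_rangeRestrict
  have hinc : LinearMap.ker inc = ⊥ := by
    rw [LinearMap.ker_eq_bot]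
    exact Subtype.val_injective.comp e.symm.injective
  obtain ⟨π', hπ'⟩ := π.exists_rightInverse_of_surjective hπ
  obtain ⟨inc', hinc'⟩ := inc.exists_leftInverse_of_injective hinc
  have hf : f = inc ∘ₗ π := by
    refine LinearMap.ext fun x => ?_
    simp [inc, π]
  have hM : M = LinearMap.toMatrixRight' f := by
    exact (LinearMap.toMatrixRight'.right_inv M).symm
  have hM2 : M = LinearMap.toMatrixRight' π * LinearMap.toMatrixRight' inc := by
    rw [hM, hf, LinearMap.toMatrixRight'_comp]
  have h1 : LinearMap.toMatrixRight' π' * LinearMap.toMatrixRight' π = 1 := by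
    rw [← LinearMap.toMatrixRight'_comp, hπ', LinearMap.toMatrixRight'_id]
  have h2 : LinearMap.toMatrixRight' inc * LinearMap.toMatrixRight' inc' = 1 := by
    rw [← LinearMap.toMatrixRight'_comp, hinc', LinearMap.toMatrixRight'_id]
  refine ⟨s, le_antisymm ?_ ?_⟩
  · rw [hM2, flat_mul]
    refine (Matrix.rank_mul_le_left _ _).trans ((Matrix.rank_le_card_width _).trans ?_)
    simp [mul_comm]
  · have h3 : (1 : Matrix (Fin s × δ) (Fin s × δ) E) =
        flat φ (LinearMap.toMatrixRight' π') * flat φ M * flat φ (LinearMap.toMatrixRight' inc') := by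
      rw [← flat_mul, ← flat_mul, hM2, ← Matrix.mul_assoc, h1, Matrix.one_mul, h2, flat_one]
    have h4 := congrArg Matrix.rank h3
    rw [Matrix.rank_one] at h4
    have h5 := (Matrix.rank_mul_le_left (flat φ (LinearMap.toMatrixRight' π') * flat φ M)
      (flat φ (LinearMap.toMatrixRight' inc'))).trans (Matrix.rank_mul_le_right _ _)
    rw [← h4] at h5
    simpa [mul_comm] using h5

theorem exists_rows {F : Type*} [Field F] {a b : Type*} [Fintype a] [Fintype b]
    (M : Matrix a b F) : ∃ (f : Fin M.rank → a), LinearIndependent F (M.submatrix f id).row := by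
  have h := Submodule.exists_fun_fin_finrank_span_eq F (Set.range M.row)
  rw [← Matrix.rank_eq_finrank_span_row] at h
  obtain ⟨f, hf, -, hl⟩ := h
  choose g hg using hf
  refine ⟨g, ?_⟩
  have h2 : (M.submatrix g id).row = f := by
    funext i
    rw [← hg]
    rfl
  rw [h2]
  exact hl

theorem exists_minor {F : Type*} [Field F] {a b : Type*} [Fintype a] [Fintype b]
    (M : Matrix a b F) : ∃ (f : Fin M.rank → a) (g : Fin M.rank → b),
      (M.submatrix f g).det ≠ 0 := by
  classical
  obtain ⟨f, hf⟩ := exists_rows M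
  obtain ⟨g, hg⟩ := exists_rows (M.submatrix f id)ᵀ
  have h1 : (M.submatrix f id)ᵀ.rank = M.rank := by
    rw [Matrix.rank_transpose, hf.rank_matrix]; simp
  have hg' : LinearIndependent F ((M.submatrix f id)ᵀ.submatrix (g ∘ finCongr h1.symm) id).row := by
    have := hg.comp _ (finCongr h1.symm).injective
    exact this
  refine ⟨f, g ∘ finCongr h1.symm, ?_⟩
  rw [Matrix.linearIndependent_rows_iff_isUnit, Matrix.isUnit_iff_isUnit_det] at hg'
  have h2 := hg'.ne_zero
  rw [← Matrix.det_transpose] at h2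
  exact h2

theorem le_rank_of_minor {F : Type*} [Field F] {a b : Type*} [Fintype a] [Fintype b] {r : ℕ}
    (M : Matrix a b F) (f : Fin r → a) (g : Fin r → b) (h : (M.submatrix f g).det ≠ 0) :
    r ≤ M.rank := by
  have h1 := Matrix.rank_of_det_ne_zero h
  have h2 := Matrix.rank_submatrix_le M f g
  simp at h1
  omega

end Sep

open MvPolynomial Matrix

namespace Sep

/-- coefficientwise ring hom -/
noncomputable def hmap {L : Type*} [Field L] (τ : L →+* L) : HahnSeries ℤ L →+* HahnSeries ℤ L where
  toFun x := x.map τ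
  map_one' := by
    ext z
    simp [HahnSeries.coeff_one, apply_ite τ]
  map_zero' := by ext z; simp
  map_add' x y := by ext z; simp
  map_mul' x y := by
    ext z
    have hτ := τ.injective
    have hs : ∀ x : HahnSeries ℤ L, (x.map τ).support = x.support := by
      intro x; ext z; simp
    simp only [HahnSeries.map_coeff, HahnSeries.coeff_mul, map_sum, map_mul]
    refine Finset.sum_congr ?_ (fun _ _ => rfl)
    ext p
    simp

theorem hmap_coeff {L : Type*} [Field L] (τ : L →+* L) (x : HahnSeries ℤ L) (z : ℤ) :
    (hmap τ x).coeff z = τ (x.coeff z) := rfl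

theorem hmap_order {L : Type*} [Field L] (τ : L →+* L) (x : HahnSeries ℤ L) :
    (hmap τ x).order = x.order := by
  by_cases hx : x = 0
  · simp [hx]
  have hx' : hmap τ x ≠ 0 := by simpa using hx
  apply le_antisymm
  · apply HahnSeries.order_le_of_coeff_ne_zero
    rw [hmap_coeff]
    simpa using HahnSeries.coeff_order_eq_zero.not.mpr hx
  · apply HahnSeries.order_le_of_coeff_ne_zero
    have := HahnSeries.coeff_order_eq_zero.not.mpr hx'
    rw [hmap_coeff] at this
    intro h
    simp [h] at this

theorem order_prod' {L : Type*} [Field L] {α : Type*} (s : Finset α) (f : α → HahnSeries ℤ L)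
    (h : ∀ i ∈ s, f i ≠ 0) : (∏ i ∈ s, f i).order = ∑ i ∈ s, (f i).order := by
  classical
  induction s using Finset.induction_on with
  | empty => simp
  | insert a s ha ih =>
    rw [Finset.prod_insert ha, Finset.sum_insert ha, HahnSeries.order_mul, ih]
    · intro i hi; exact h i (Finset.mem_insert_of_mem hi)
    · exact h a (Finset.mem_insert_self _ _)
    · rw [Finset.prod_ne_zero_iff]
      intro i hi; exact h i (Finset.mem_insert_of_mem hi)

/-- twist constants -/
noncomputable def cc (L : Type*) [Field L] (e : ℕ) (i : Fin (e + 1)) : HahnSeries ℤ L :=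
  if i = Fin.last e then HahnSeries.single 1 1 else 1

theorem cc_ne {L : Type*} [Field L] {e : ℕ} (i : Fin (e + 1)) : cc L e i ≠ 0 := by
  unfold cc; split_ifs <;> simp

theorem cc_order {L : Type*} [Field L] {e : ℕ} (i : Fin (e + 1)) :
    (cc L e i).order = if i = Fin.last e then 1 else 0 := by
  unfold cc; split_ifs <;> simp

theorem det_ne {L : Type*} [Field L] (τ : L →+* L) {e : ℕ}
    (M : Matrix (Fin (e + 1)) (Fin (e + 1)) (HahnSeries ℤ L)) (hM : M ≠ 0)
    (hrel : ∀ i k, cc L e i * hmap τ (M (i + 1) (k + 1)) = cc L e k * M i k) : M.det ≠ 0 := by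
  classical
  let q : Fin (e + 1) × Fin (e + 1) → ℤ := fun p =>
    (e + 1) * (M p.1 p.2).order + (p.2 : ℕ) - (p.1 : ℕ)
  have step : ∀ i k, M i k ≠ 0 → M (i + 1) (k + 1) ≠ 0 ∧ q (i + 1, k + 1) = q (i, k) := by
    intro i k h
    have h0 : cc L e k * M i k ≠ 0 := mul_ne_zero (cc_ne k) h
    have h1 : M (i + 1) (k + 1) ≠ 0 := by
      intro h1
      apply h0
      rw [← hrel, h1]; simp
    refine ⟨h1, ?_⟩
    have h2 := congrArg HahnSeries.order (hrel i k)
    have h1' : hmap τ (M (i + 1) (k + 1)) ≠ 0 := by simpa using h1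
    rw [HahnSeries.order_mul (cc_ne i) h1', HahnSeries.order_mul (cc_ne k) h, hmap_order, cc_order,
      cc_order] at h2
    have hv : ∀ j : Fin (e + 1), (((j + 1 : Fin (e + 1)) : ℕ) : ℤ) =
        (j : ℕ) + 1 - (e + 1) * (if j = Fin.last e then (1 : ℤ) else 0) := by
      intro j
      rw [Fin.val_add_one]
      split_ifs with hj
      · subst hj; simp
      · push_cast; ring
    simp only [q, hv]
    linear_combination (e + 1 : ℤ) * h2
  obtain ⟨i1, k1, h1⟩ : ∃ i k, M i k ≠ 0 := by
    by_contra! h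
    exact hM (by ext i k; simp [h])
  obtain ⟨⟨i0, k0⟩, hm, hmin⟩ := Finset.exists_min_image
    (Finset.univ.filter fun p : Fin (e + 1) × Fin (e + 1) => M p.1 p.2 ≠ 0) q ⟨(i1, k1), by simpa using h1⟩
  simp only [Finset.mem_filter, Finset.mem_univ, true_and, Prod.forall] at hm hmin
  set w := q (i0, k0) with hw
  have hall : ∀ j : Fin (e + 1), M (i0 + j) (k0 + j) ≠ 0 ∧ q (i0 + j, k0 + j) = w := by
    intro j
    induction j using Fin.induction with
    | zero => simpa [hw] using hm
    | succ j ih =>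
      rw [← Fin.coeSucc_eq_succ, ← add_assoc, ← add_assoc]
      obtain ⟨a, b⟩ := step _ _ ih.1
      exact ⟨a, b.trans ih.2⟩
  let π0 : Equiv.Perm (Fin (e + 1)) := Equiv.addRight (i0 - k0)
  have hπ0 : ∀ i, M (π0 i) i ≠ 0 ∧ q (π0 i, i) = w := by
    intro i
    have := hall (i - k0)
    simpa [π0, add_sub, add_comm, add_left_comm, sub_eq_add_neg, add_assoc] using this
  have hsum : ∀ π : Equiv.Perm (Fin (e + 1)),
      ∑ i, q (π i, i) = (e + 1) * ∑ i, (M (π i) i).order := by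
    intro π
    simp only [q, Finset.sum_sub_distrib, Finset.sum_add_distrib, Finset.mul_sum]
    rw [Equiv.sum_comp π (fun i : Fin (e + 1) => ((i : ℕ) : ℤ))]
    ring
  have hterm0 : (∏ i, M (π0 i) i).coeff w ≠ 0 := by
    have ho : (∏ i, M (π0 i) i).order = w := by
      rw [order_prod' _ _ (fun i _ => (hπ0 i).1)]
      have := hsum π0
      rw [Finset.sum_congr rfl (fun i _ => (hπ0 i).2)] at this
      simp only [Finset.sum_const, Finset.card_univ, Fintype.card_fin, nsmul_eq_mul] at this
      push_cast at this
      have he : (e + 1 : ℤ) ≠ 0 := by positivity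
      exact (mul_left_cancel₀ he this).symm
    have : ∏ i, M (π0 i) i ≠ 0 := Finset.prod_ne_zero_iff.mpr (fun i _ => (hπ0 i).1)
    have := HahnSeries.coeff_order_eq_zero.not.mpr this
    rwa [ho] at this
  have hterm : ∀ π : Equiv.Perm (Fin (e + 1)), π ≠ π0 → (∏ i, M (π i) i).coeff w = 0 := by
    intro π hπ
    by_cases hz : ∀ i, M (π i) i ≠ 0
    · apply HahnSeries.coeff_eq_zero_of_lt_order
      rw [order_prod' _ _ (fun i _ => hz i)]
      obtain ⟨i, hi⟩ : ∃ i, π i ≠ π0 i := by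
        by_contra! h
        exact hπ (Equiv.ext h)
      have hlt : ∑ i : Fin (e + 1), w < ∑ i, q (π i, i) := by
        apply Finset.sum_lt_sum
        · intro j _; exact hmin _ _ (hz j)
        · refine ⟨i, Finset.mem_univ _, lt_of_le_of_ne (hmin _ _ (hz i)) ?_⟩
          intro heq
          rw [← (hπ0 i).2] at heq
          simp only [q] at heq
          apply hi
          have hd : ((e + 1 : ℤ)) ∣ ((π i : ℕ) : ℤ) - ((π0 i : ℕ) : ℤ) :=
            ⟨(M (π i) i).order - (M (π0 i) i).order, by linear_combination heq⟩
          have hb : |((π i : ℕ) : ℤ) - ((π0 i : ℕ) : ℤ)| < (e + 1 : ℤ) := by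
            have := (π i).2
            have := (π0 i).2
            rw [abs_lt]; constructor <;> push_cast <;> omega
          have := Int.eq_zero_of_abs_lt_dvd hd hb
          apply Fin.ext
          omega
      rw [hsum] at hlt
      simp only [Finset.sum_const, Finset.card_univ, Fintype.card_fin, nsmul_eq_mul] at hlt
      push_cast at hlt
      exact lt_of_mul_lt_mul_left hlt (by positivity)
    · push Not at hz
      obtain ⟨i, hi⟩ := hz
      have h0 : ∏ i, M (π i) i = 0 :=
        Finset.prod_eq_zero (f := fun i => M (π i) i) (Finset.mem_univ i) hi
      rw [h0]
      simp
  intro hdet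
  have h3 : (M.det).coeff w = 0 := by rw [hdet]; simp
  rw [Matrix.det_apply, HahnSeries.coeff_sum, Finset.sum_eq_single π0] at h3
  · rcases Int.units_eq_one_or (Equiv.Perm.sign π0) with h | h
    · rw [h] at h3; simp at h3; exact hterm0 h3
    · rw [h] at h3; simp at h3; exact hterm0 h3
  · intro π _ hπ
    rcases Int.units_eq_one_or (Equiv.Perm.sign π) with h | h
    · rw [h]; simp [hterm π hπ]
    · rw [h]; simp [hterm π hπ]
  · simp

end Sep

open MvPolynomial Matrix

namespace Sep

theorem rank_div' {D E : Type*} [Ring D] [Nontrivial D] (hD : ∀ a : D, IsUnit a ∨ a = 0) [Field E]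
    {δ ι : Type*} [Fintype δ] [DecidableEq δ]
    [Fintype ι] [DecidableEq ι] (φ : D →+* Matrix δ δ E) (M : Matrix ι ι D) :
    ∃ s, (flat φ M).rank = Fintype.card δ * s := by
  letI : DivisionRing D := DivisionRing.ofIsUnitOrEqZero hD
  exact rank_div φ M

section
variable {L : Type*} [Field L] (τ : L →+* L) (e : ℕ)

/-- twisting matrix -/
noncomputable def CC (L : Type*) [Field L] (e : ℕ) :
    Matrix (Fin (e + 1)) (Fin (e + 1)) (HahnSeries ℤ L) :=
  Matrix.of fun i k => if k = i + 1 then cc L e i else 0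

/-- the cyclic division algebra -/
noncomputable def DD : Subring (Matrix (Fin (e + 1)) (Fin (e + 1)) (HahnSeries ℤ L)) where
  carrier := {M | CC L e * M.map (hmap τ) = M * CC L e}
  mul_mem' {a b} ha hb := by
    simp only [Set.mem_setOf_eq] at *
    rw [Matrix.map_mul, ← Matrix.mul_assoc, ha, Matrix.mul_assoc, hb, Matrix.mul_assoc]
  one_mem' := by simp
  add_mem' {a b} ha hb := by
    simp only [Set.mem_setOf_eq] at *
    rw [Matrix.map_add _ (map_add _), Matrix.mul_add, Matrix.add_mul, ha, hb]
  zero_mem' := by simp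
  neg_mem' {a} ha := by
    simp only [Set.mem_setOf_eq] at *
    have : (-a).map (hmap τ) = - a.map (hmap τ) := by ext; simp
    rw [this, Matrix.mul_neg, ha, Matrix.neg_mul]

theorem mem_DD {M : Matrix (Fin (e + 1)) (Fin (e + 1)) (HahnSeries ℤ L)} :
    M ∈ DD τ e ↔ CC L e * M.map (hmap τ) = M * CC L e := Iff.rfl

theorem mem_DD' {M : Matrix (Fin (e + 1)) (Fin (e + 1)) (HahnSeries ℤ L)} :
    M ∈ DD τ e ↔ ∀ i k, cc L e i * hmap τ (M (i + 1) (k + 1)) = cc L e k * M i k := by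
  have key : ∀ i k, (CC L e * M.map (hmap τ)) i (k + 1) = cc L e i * hmap τ (M (i + 1) (k + 1)) ∧
      (M * CC L e) i (k + 1) = cc L e k * M i k := by
    intro i k
    constructor
    · simp [CC, Matrix.mul_apply]
    · simp [CC, Matrix.mul_apply, mul_comm]
  rw [mem_DD]
  constructor
  · intro h i k
    rw [← (key i k).1, ← (key i k).2, h]
  · intro h
    ext1 i k
    obtain ⟨k, rfl⟩ : ∃ k', k = k' + 1 := ⟨k - 1, by simp⟩
    rw [(key i k).1, (key i k).2, h]

theorem DD_unit (a : DD τ e) : IsUnit a ∨ a = 0 := by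
  by_cases h : a = 0
  · exact Or.inr h
  left
  have hdet : (a : Matrix (Fin (e + 1)) (Fin (e + 1)) (HahnSeries ℤ L)).det ≠ 0 := by
    apply det_ne τ
    · simpa using h
    · exact (mem_DD' τ e).1 a.2
  have hu : IsUnit (a : Matrix (Fin (e + 1)) (Fin (e + 1)) (HahnSeries ℤ L)).det := hdet.isUnit
  set A := (a : Matrix (Fin (e + 1)) (Fin (e + 1)) (HahnSeries ℤ L)) with hA
  have h1 : A * A⁻¹ = 1 := Matrix.mul_nonsing_inv _ hu
  have h2 : A⁻¹ * A = 1 := Matrix.nonsing_inv_mul _ hu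
  have hmem : A⁻¹ ∈ DD τ e := by
    rw [mem_DD]
    have h3 : A.map (hmap τ) * A⁻¹.map (hmap τ) = 1 := by
      rw [← Matrix.map_mul, h1]; simp
    have h4 : CC L e * A.map (hmap τ) = A * CC L e := (mem_DD τ e).1 a.2
    calc CC L e * A⁻¹.map (hmap τ) = A⁻¹ * (A * CC L e) * A⁻¹.map (hmap τ) := by
          rw [← Matrix.mul_assoc, h2, Matrix.one_mul]
      _ = A⁻¹ * CC L e * (A.map (hmap τ) * A⁻¹.map (hmap τ)) := by
          rw [← h4]; simp only [Matrix.mul_assoc]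
      _ = _ := by rw [h3, Matrix.mul_one]
  exact ⟨⟨a, ⟨A⁻¹, hmem⟩, Subtype.ext h1, Subtype.ext h2⟩, rfl⟩
end

section gen
variable (K : Type*) [Field K] (m e : ℕ)

/-- polynomial ring -/
abbrev R0 := MvPolynomial (Fin m × Fin (e + 1) × Fin (e + 1)) K
/-- its fraction field -/
abbrev LL := FractionRing (R0 K m e)

/-- shift -/
noncomputable def shiftP : R0 K m e →+* R0 K m e :=
  (rename (fun p : Fin m × Fin (e + 1) × Fin (e + 1) => (p.1, p.2.1 - 1, p.2.2 - 1))).toRingHom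

theorem shiftP_inj : Function.Injective (shiftP K m e) := by
  apply rename_injective
  rintro ⟨a, b, c⟩ ⟨a', b', c'⟩ h
  simpa using h

/-- shift on fractions -/
noncomputable def shiftL : LL K m e →+* LL K m e :=
  IsFractionRing.lift (A := R0 K m e) (K := LL K m e) (L := LL K m e)
    (g := (algebraMap (R0 K m e) (LL K m e)).comp (shiftP K m e))
    ((IsFractionRing.injective (R0 K m e) (LL K m e)).comp (shiftP_inj K m e))

theorem shiftL_alg (p : R0 K m e) : shiftL K m e (algebraMap _ _ p) = algebraMap _ _ (shiftP K m e p) := by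
  simp [shiftL]

/-- embedding of polynomials -/
noncomputable def theta : Polynomial (R0 K m e) →+* HahnSeries ℤ (LL K m e) :=
  ((HahnSeries.ofPowerSeries ℤ (LL K m e)).comp
    (Polynomial.coeToPowerSeries.ringHom)).comp (Polynomial.mapRingHom (algebraMap (R0 K m e) (LL K m e)))

theorem theta_inj : Function.Injective (theta K m e) := by
  refine (HahnSeries.ofPowerSeries_injective.comp (Polynomial.coe_injective _)).comp ?_
  exact Polynomial.map_injective _ (IsFractionRing.injective _ _)

theorem theta_C (p : R0 K m e) : theta K m e (Polynomial.C p) = HahnSeries.C (algebraMap _ _ p) := by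
  simp [theta]

theorem theta_X : theta K m e Polynomial.X = HahnSeries.single 1 1 := by
  simp [theta]

/-- auxiliary -/
noncomputable def chi : R0 K m e →+* Polynomial (R0 K m e) :=
  (aeval (fun p : Fin m × Fin (e + 1) × Fin (e + 1) =>
    (Polynomial.C (X p) * (if p.2.2 < p.2.1 then Polynomial.X else 1) : Polynomial (R0 K m e)))).toRingHom

theorem chi_inj : Function.Injective (chi K m e) := by
  have : Function.LeftInverse (Polynomial.evalRingHom (1 : R0 K m e)) (chi K m e) := by
    intro p
    have : ((Polynomial.evalRingHom (1 : R0 K m e)).comp (chi K m e)) = RingHom.id _ := by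
      apply MvPolynomial.ringHom_ext
      · intro r
        simp only [chi, RingHom.comp_apply, AlgHom.toRingHom_eq_coe, RingHom.coe_coe, aeval_C]
        simp [Polynomial.algebraMap_apply]
      · intro i
        simp only [chi, RingHom.comp_apply, AlgHom.toRingHom_eq_coe, RingHom.coe_coe, aeval_X]
        split_ifs <;> simp
    exact congrArg (fun f => f p) this
  exact this.injective

/-- embedding -/
noncomputable def Psi : R0 K m e →+* HahnSeries ℤ (LL K m e) := (theta K m e).comp (chi K m e)

theorem Psi_inj : Function.Injective (Psi K m e) := (theta_inj K m e).comp (chi_inj K m e)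

theorem Psi_C (a : K) : Psi K m e (C a) = HahnSeries.C (algebraMap (R0 K m e) _ (C a)) := by
  simp only [Psi, RingHom.comp_apply]
  rw [← theta_C]
  simp [chi, Polynomial.algebraMap_apply]

theorem Psi_X (p) : Psi K m e (X p) = HahnSeries.C (algebraMap (R0 K m e) _ (X p)) *
    (if p.2.2 < p.2.1 then HahnSeries.single 1 1 else 1) := by
  simp only [Psi, RingHom.comp_apply, chi, AlgHom.toRingHom_eq_coe, RingHom.coe_coe, aeval_X]
  rw [map_mul, theta_C]
  split_ifs <;> simp [theta_X]

theorem hmap_C {L : Type*} [Field L] (τ : L →+* L) (a : L) :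
    hmap τ (HahnSeries.C a) = HahnSeries.C (τ a) := by
  ext z
  simp [hmap_coeff, HahnSeries.C_apply, HahnSeries.coeff_single, apply_ite τ]

theorem hmap_t {L : Type*} [Field L] (τ : L →+* L) :
    hmap τ (HahnSeries.single 1 1) = HahnSeries.single 1 1 := by
  ext z
  simp [hmap_coeff, HahnSeries.coeff_single, apply_ite τ]

theorem hmap_Psi_X (l i k) : hmap (shiftL K m e) (Psi K m e (X (l, i + 1, k + 1))) =
   HahnSeries.C (algebraMap (R0 K m e) _ (X (l, i, k))) *
    (if k + 1 < i + 1 then HahnSeries.single 1 1 else 1) := by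
  rw [Psi_X, map_mul, hmap_C, shiftL_alg]
  congr 1
  · simp [shiftP]
  · simp only [apply_ite (hmap (shiftL K m e)), hmap_t, map_one]

theorem gen_mem (l : Fin m) : Matrix.of (fun i k => Psi K m e (X (l, i, k))) ∈ DD (shiftL K m e) e := by
  rw [mem_DD']
  intro i k
  simp only [Matrix.of_apply]
  rw [hmap_Psi_X, Psi_X]
  simp only [cc]
  have h1 : (k + 1 < i + 1) ↔ ((k : ℕ) < i ∧ i ≠ Fin.last e) ∨ (k = Fin.last e ∧ i ≠ Fin.last e) := by
    rw [Fin.lt_def, Fin.val_add_one, Fin.val_add_one]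
    have hk := k.2
    have hi := i.2
    simp only [Fin.ext_iff, Fin.val_last]
    have hl : ((Fin.last e : Fin (e + 1)) : ℕ) = e := rfl
    split_ifs <;> omega
  have h2 : (k < i) ↔ (k : ℕ) < i := Iff.rfl
  have hk := k.2
  have hi := i.2
  simp only [h1, h2, Fin.ext_iff, Fin.val_last, ne_eq]
  by_cases a : (i : ℕ) = e <;> by_cases b : (k : ℕ) = e <;> simp [a, b]
  · intro h; omega
  · intro h; omega

theorem smul_mem (a : K) {M} (hM : M ∈ DD (shiftL K m e) e) :
    (Psi K m e (C a)) • M ∈ DD (shiftL K m e) e := by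
  rw [mem_DD'] at *
  intro i k
  have h : hmap (shiftL K m e) (Psi K m e (C a)) = Psi K m e (C a) := by
    rw [Psi_C, hmap_C, shiftL_alg]
    simp [shiftP]
  simp only [Matrix.smul_apply, smul_eq_mul, map_mul, h]
  linear_combination (Psi K m e (C a)) * hM i k

theorem det_sub {R S : Type*} [CommRing R] [CommRing S] (φ : R →+* S) {a b : Type*} {r : ℕ}
    (G : Matrix a b R) (f : Fin r → a) (g : Fin r → b) :
    ((G.map φ).submatrix f g).det = φ (G.submatrix f g).det := by
  rw [RingHom.map_det]; rfl

theorem regular [Infinite K] {ι : Type*} [Fintype ι] [DecidableEq ι] (x : Fin m → Matrix ι ι K) :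
    ∃ s, (∃ T : Fin m → Matrix (Fin (e + 1)) (Fin (e + 1)) K, (Big x T).rank = (e + 1) * s) ∧
      ∀ T : Fin m → Matrix (Fin (e + 1)) (Fin (e + 1)) K, (Big x T).rank ≤ (e + 1) * s := by
  classical
  let G : Matrix (ι × Fin (e + 1)) (ι × Fin (e + 1)) (R0 K m e) :=
    Big (fun l => (x l).map C) (fun l => Matrix.of fun i k => X (l, i, k))
  let M : Matrix ι ι (DD (shiftL K m e) e) := Matrix.of fun a b =>
    ⟨∑ l, (Psi K m e (C (x l a b))) • Matrix.of (fun i k => Psi K m e (X (l, i, k))),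
      Subring.sum_mem _ fun l _ => smul_mem K m e _ (gen_mem K m e l)⟩
  have hG : G.map (Psi K m e) = flat (DD (shiftL K m e) e).subtype M := by
    ext p q
    simp [G, M, flat, Big_apply, Matrix.sum_apply]
  obtain ⟨s, hs⟩ := rank_div' (DD_unit (shiftL K m e) e) (DD (shiftL K m e) e).subtype M
  rw [← hG, Fintype.card_fin] at hs
  have hspec : ∀ T : Fin m → Matrix (Fin (e + 1)) (Fin (e + 1)) K,
      G.map (eval (fun p => T p.1 p.2.1 p.2.2)) = Big x T := by
    intro T
    ext p q
    simp [G, Big_apply]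
  have hle : ∀ T : Fin m → Matrix (Fin (e + 1)) (Fin (e + 1)) K, (Big x T).rank ≤ (e + 1) * s := by
    intro T
    obtain ⟨f, g, hfg⟩ := exists_minor (Big x T)
    rw [← hs]
    refine le_rank_of_minor _ f g ?_
    have h0 : ((Big x T).submatrix f g).det =
        ((G.map (eval (fun p => T p.1 p.2.1 p.2.2))).submatrix f g).det := by rw [hspec]
    rw [h0, det_sub] at hfg
    rw [det_sub]
    intro h
    rw [map_eq_zero_iff _ (Psi_inj K m e)] at h
    rw [h] at hfg
    simp at hfg
  refine ⟨s, ?_, hle⟩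
  obtain ⟨f, g, hfg⟩ := exists_minor (G.map (Psi K m e))
  rw [det_sub] at hfg
  have h1 : (G.submatrix f g).det ≠ 0 := by
    intro h; rw [h] at hfg; simp at hfg
  obtain ⟨y, hy⟩ : ∃ y, eval y (G.submatrix f g).det ≠ 0 := by
    by_contra! h
    exact h1 (MvPolynomial.funext fun y => by simpa using h y)
  refine ⟨fun l => Matrix.of fun i k => y (l, i, k), le_antisymm (hle _) ?_⟩
  rw [← hs]
  refine le_rank_of_minor _ f g ?_
  rw [← det_sub] at hy
  rw [← hspec]
  exact hy
end gen
end Sep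

open MvPolynomial Matrix

namespace Sep

section nullity
variable {K : Type*} [Field K]

theorem rank_ker {a b : Type*} [Fintype a] [Fintype b] (M : Matrix a b K) :
    M.rank + Module.finrank K (LinearMap.ker M.mulVecLin) = Fintype.card b := by
  have := LinearMap.finrank_range_add_finrank_ker M.mulVecLin
  simpa [Matrix.rank] using this

variable {a b a' b' : Type*} [Fintype a] [Fintype b] [Fintype a'] [Fintype b']
  (P : Matrix a' a K) (Q : Matrix b' a K) (S : Matrix b' b K)

theorem ker_blocks (z : a ⊕ b → K) : (fromBlocks P 0 Q S) *ᵥ z = 0 ↔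
    P *ᵥ (z ∘ Sum.inl) = 0 ∧ Q *ᵥ (z ∘ Sum.inl) + S *ᵥ (z ∘ Sum.inr) = 0 := by
  rw [Matrix.fromBlocks_mulVec]
  constructor
  · intro h
    refine ⟨funext fun i => ?_, funext fun i => ?_⟩
    · simpa using congrFun h (Sum.inl i)
    · simpa using congrFun h (Sum.inr i)
  · rintro ⟨h1, h2⟩
    funext i
    rcases i with i | i
    · simpa using congrFun h1 i
    · simpa using congrFun h2 i

/-- restriction of kernel -/
def kerRes : LinearMap.ker (fromBlocks P 0 Q S).mulVecLin →ₗ[K] LinearMap.ker P.mulVecLin :=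
  LinearMap.restrict (LinearMap.funLeft K K Sum.inl) (fun z hz => by
    have := (ker_blocks P Q S z).1 (by simpa using hz)
    exact this.1)

theorem kerRes_ker : Module.finrank K (LinearMap.ker (kerRes P Q S)) ≤
    Module.finrank K (LinearMap.ker S.mulVecLin) := by
  have key : ∀ z : LinearMap.ker (kerRes P Q S), ((z : LinearMap.ker (fromBlocks P 0 Q S).mulVecLin) : a ⊕ b → K) ∘ Sum.inl = 0 := by
    intro z
    have h1 := congrArg Subtype.val (LinearMap.mem_ker.1 z.2)
    exact h1
  let f : LinearMap.ker (kerRes P Q S) →ₗ[K] LinearMap.ker S.mulVecLin :=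
    LinearMap.codRestrict _ (LinearMap.funLeft K K Sum.inr ∘ₗ
      (LinearMap.ker (fromBlocks P 0 Q S).mulVecLin).subtype ∘ₗ (LinearMap.ker (kerRes P Q S)).subtype)
      (fun z => by
        have h1 := key z
        have h2 := ((ker_blocks P Q S _).1 (LinearMap.mem_ker.1 z.1.2)).2
        rw [h1, Matrix.mulVec_zero, zero_add] at h2
        exact h2)
  refine LinearMap.finrank_le_finrank_of_injective (f := f) ?_
  intro z w hzw
  have h1 := key z
  have h1' := key w
  have h2 := congrArg (fun q : LinearMap.ker S.mulVecLin => (q : b → K)) hzw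
  apply Subtype.ext
  apply Subtype.ext
  funext i
  rcases i with i | i
  · exact (congrFun h1 i).trans (congrFun h1' i).symm
  · exact congrFun h2 i

theorem rank_blocks_ge : P.rank + S.rank ≤ (fromBlocks P 0 Q S).rank := by
  have h1 := rank_ker P
  have h2 := rank_ker S
  have h3 := rank_ker (fromBlocks P 0 Q S)
  have h4 := kerRes_ker P Q S
  have h5 := LinearMap.finrank_range_add_finrank_ker (kerRes P Q S)
  have h6 := Submodule.finrank_le (LinearMap.range (kerRes P Q S))
  rw [Fintype.card_sum] at h3
  omega

theorem ker_lift (h : (fromBlocks P 0 Q S).rank ≤ P.rank + S.rank) (z : a → K) (hz : P *ᵥ z = 0) :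
    ∃ y : b → K, Q *ᵥ z + S *ᵥ y = 0 := by
  have h1 := rank_ker P
  have h2 := rank_ker S
  have h3 := rank_ker (fromBlocks P 0 Q S)
  have h4 := kerRes_ker P Q S
  have h5 := LinearMap.finrank_range_add_finrank_ker (kerRes P Q S)
  have h6 := Submodule.finrank_le (LinearMap.range (kerRes P Q S))
  rw [Fintype.card_sum] at h3
  have h7 : LinearMap.range (kerRes P Q S) = ⊤ := Submodule.eq_top_of_finrank_eq (by omega)
  rw [LinearMap.range_eq_top] at h7
  obtain ⟨y, hy⟩ := h7 ⟨z, by simpa using hz⟩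
  have h8 := ((ker_blocks P Q S _).1 (LinearMap.mem_ker.1 y.2)).2
  have h9 : (y : a ⊕ b → K) ∘ Sum.inl = z := congrArg Subtype.val hy
  rw [h9] at h8
  exact ⟨_, h8⟩
end nullity

section bigs
variable {K : Type*} [Field K] {m : ℕ} {ι : Type*} [Fintype ι] [DecidableEq ι]
  (x : Fin m → Matrix ι ι K)

theorem Big_blocks {α β α' β' : Type*} (T : Fin m → Matrix α β K) (N : Fin m → Matrix α' β K)
    (S : Fin m → Matrix α' β' K) :
    Big x (fun l => fromBlocks (T l) 0 (N l) (S l)) =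
      (fromBlocks (Big x T) 0 (Big x N) (Big x S)).submatrix
        (Equiv.prodSumDistrib ι α α') (Equiv.prodSumDistrib ι β β') := by
  ext ⟨i, j⟩ ⟨k, l⟩
  rcases j with j | j <;> rcases l with l | l <;> simp [Big_apply]

theorem rank_equiv {a b a' b' : Type*} [Fintype a] [Fintype b] [Fintype a'] [Fintype b'] (M : Matrix a b K)
    (e : a' ≃ a) (f : b' ≃ b) : (M.submatrix e f).rank = M.rank := by
  exact Matrix.rank_submatrix M e f

theorem rank_Big_blocks {α β α' β' : Type*} [Fintype α] [Fintype β] [Fintype α'] [Fintype β']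
    (T : Fin m → Matrix α β K) (N : Fin m → Matrix α' β K)
    (S : Fin m → Matrix α' β' K) :
    (Big x (fun l => fromBlocks (T l) 0 (N l) (S l))).rank =
      (fromBlocks (Big x T) 0 (Big x N) (Big x S)).rank := by
  rw [Big_blocks, rank_equiv]

theorem Big_reindex {α β : Type*} (e : β ≃ α) (T : Fin m → Matrix α α K) :
    Big x (fun l => (T l).submatrix e e) =
      (Big x T).submatrix ((Equiv.refl ι).prodCongr e) ((Equiv.refl ι).prodCongr e) := by
  ext ⟨i, j⟩ ⟨k, l⟩
  simp [Big_apply]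

theorem rank_Big_le {δ : Type*} [Fintype δ] (T : Fin m → Matrix δ δ K) :
    (Big x T).rank ≤ Fintype.card δ * Fintype.card ι := by
  refine (Matrix.rank_le_card_width _).trans ?_
  simp [mul_comm]

theorem exists_max [Infinite K] : ∃ D s : ℕ, 0 < D ∧
    (∃ T : Fin m → Matrix (Fin D) (Fin D) K, (Big x T).rank = D * s) ∧
    ∀ (δ : Type) [Fintype δ] (T : Fin m → Matrix δ δ K), (Big x T).rank ≤ Fintype.card δ * s := by
  choose s hs1 hs2 using fun e => regular K m e x
  have hb : ∀ e, s e ≤ Fintype.card ι := by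
    intro e
    obtain ⟨T, hT⟩ := hs1 e
    have := rank_Big_le x T
    rw [hT] at this
    simp only [Fintype.card_fin] at this
    exact Nat.le_of_mul_le_mul_left this (Nat.succ_pos e)
  obtain ⟨e, he⟩ : ∃ e, ∀ e', s e' ≤ s e := by
    have hfin : (Set.range s).Finite := (Set.finite_Iic (Fintype.card ι)).subset (by
      rintro _ ⟨e, rfl⟩; exact hb e)
    obtain ⟨_, ⟨e, rfl⟩, h⟩ := hfin.exists_maximal ⟨s 0, 0, rfl⟩ |>.imp fun _ h => h
    exact ⟨e, fun e' => by
      by_contra! hc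
      have := h ⟨e', rfl⟩ hc.le
      omega⟩
  refine ⟨e + 1, s e, Nat.succ_pos _, hs1 e, ?_⟩
  intro δ _ T
  rcases Nat.eq_zero_or_pos (Fintype.card δ) with h0 | h0
  · have := rank_Big_le x T
    rw [h0] at this ⊢
    omega
  · obtain ⟨d, hd⟩ : ∃ d, Fintype.card δ = d + 1 := ⟨_, (Nat.succ_pred_eq_of_pos h0).symm⟩
    have eq := Fintype.equivFinOfCardEq hd
    have h1 := hs2 d (fun l => (T l).submatrix eq.symm eq.symm)
    rw [Big_reindex, rank_equiv] at h1
    rw [hd]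
    exact h1.trans (Nat.mul_le_mul_left _ (he d))

/-- slotwise subspace -/
def slots (δ : Type*) (U : Submodule K (ι → K)) : Submodule K (ι × δ → K) where
  carrier := {z | ∀ j, (fun i => z (i, j)) ∈ U}
  add_mem' {a b} ha hb j := U.add_mem (ha j) (hb j)
  zero_mem' j := U.zero_mem
  smul_mem' c a ha j := U.smul_mem c (ha j)

theorem mem_slots {δ : Type*} {U : Submodule K (ι → K)} {z : ι × δ → K} :
    z ∈ slots δ U ↔ ∀ j, (fun i => z (i, j)) ∈ U := Iff.rfl

theorem finrank_slots (δ : Type*) [Fintype δ] (U : Submodule K (ι → K)) :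
    Module.finrank K (slots δ U) = Fintype.card δ * Module.finrank K U := by
  let e : slots δ U ≃ₗ[K] (δ → U) :=
    { toFun := fun z j => ⟨fun i => z.1 (i, j), z.2 j⟩
      map_add' := fun _ _ => rfl
      map_smul' := fun _ _ => rfl
      invFun := fun z => ⟨fun p => (z p.2).1 p.1, fun j => (z j).2⟩
      left_inv := fun _ => rfl
      right_inv := fun _ => rfl }
  rw [e.finrank_eq]
  simp [Module.finrank_pi_fintype]

/-- no shrunk subspace -/
def NoShrunk : Prop := ∀ U : Submodule K (ι → K),
  Module.finrank K U ≤ Module.finrank K (⨆ l, U.map (x l).mulVecLin : Submodule K (ι → K))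

/-- slot -/
def slotMap {δ : Type*} [DecidableEq δ] (j : δ) : (ι → K) →ₗ[K] (ι × δ → K) where
  toFun u := fun p => if p.2 = j then u p.1 else 0
  map_add' u v := by ext p; simp only [Pi.add_apply]; split_ifs <;> simp
  map_smul' c u := by ext p; simp

theorem slots_le {δ : Type*} [Fintype δ] [DecidableEq δ] (U : Submodule K (ι → K)) (V : Submodule K (ι × δ → K))
    (h : ∀ j, ∀ u ∈ U, slotMap j u ∈ V) : slots δ U ≤ V := by
  intro z hz
  have : z = ∑ j, slotMap j (fun i => z (i, j)) := by
    funext p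
    simp [slotMap]
  rw [this]
  exact V.sum_mem fun j _ => h j _ (hz j)

theorem full [Infinite K] (h : NoShrunk x) : ∃ D : ℕ, 0 < D ∧
    (∃ T : Fin m → Matrix (Fin D) (Fin D) K, (Big x T).rank = D * Fintype.card ι) := by
  classical
  obtain ⟨D, s, hD, ⟨T0, hT0⟩, hmax⟩ := exists_max x
  refine ⟨D, hD, T0, ?_⟩
  set A := Big x T0 with hA
  let G : Set (ι → K) := {u | ∃ (δ : Type) (_ : Fintype δ) (T : Fin m → Matrix δ δ K)
    (z : ι × δ → K) (j : δ), (Big x T).rank = Fintype.card δ * s ∧ Big x T *ᵥ z = 0 ∧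
      u = fun i => z (i, j)}
  let U : Submodule K (ι → K) := Submodule.span K G
  have hker : LinearMap.ker A.mulVecLin ≤ slots (Fin D) U := by
    intro z hz j
    exact Submodule.subset_span ⟨Fin D, inferInstance, T0, z, j, by simpa using hT0, by simpa using hz, rfl⟩
  have hgen : ∀ (l : Fin m) (j : Fin D) (u : ι → K), u ∈ U →
      slotMap j (x l *ᵥ u) ∈ (slots (Fin D) U).map A.mulVecLin := by
    intro l j u hu
    induction hu using Submodule.span_induction with
    | zero => simp
    | add u v _ _ h1 h2 => rw [Matrix.mulVec_add, map_add]; exact Submodule.add_mem _ h1 h2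
    | smul c u _ h1 => rw [Matrix.mulVec_smul, map_smul]; exact Submodule.smul_mem _ _ h1
    | mem u hu =>
      obtain ⟨δ, _, T, z, j0, hT, hz, rfl⟩ := hu
      let N : Fin m → Matrix (Fin D) δ K := fun l' => if l' = l then Matrix.of fun a b =>
        if a = j ∧ b = j0 then 1 else 0 else 0
      have hN : Big x N *ᵥ z = slotMap j (x l *ᵥ fun i => z (i, j0)) := by
        funext p
        have h1 : ∀ q : ι × δ, Big x N p q = if p.2 = j ∧ q.2 = j0 then x l p.1 q.1 else 0 := by
          intro q
          rw [Big_apply, Finset.sum_eq_single l]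
          · simp [N]
          · intro b _ hb
            simp [N, hb]
          · simp
        simp only [Matrix.mulVec, dotProduct, h1, Fintype.sum_prod_type, slotMap, LinearMap.coe_mk,
          AddHom.coe_mk]
        by_cases hp : p.2 = j <;> simp [hp]
      have hr := hmax (δ ⊕ Fin D) (fun l => fromBlocks (T l) 0 (N l) (T0 l))
      have hr2 := rank_blocks_ge (Big x T) (Big x N) (Big x T0)
      rw [← rank_Big_blocks, hT, ← hA, hT0] at hr2
      rw [Fintype.card_sum, Fintype.card_fin, add_mul] at hr
      obtain ⟨y, hy⟩ := ker_lift (Big x T) (Big x N) (Big x T0) (by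
        rw [← rank_Big_blocks, hT, ← hA, hT0]; exact hr) z hz
      have hyU : y ∈ slots (Fin D) U := by
        intro k
        refine Submodule.subset_span ⟨δ ⊕ Fin D, inferInstance, (fun l => fromBlocks (T l) 0 (N l) (T0 l)),
          Sum.elim z y ∘ (Equiv.prodSumDistrib ι δ (Fin D)), Sum.inr k, ?_, ?_, ?_⟩
        · rw [Fintype.card_sum, Fintype.card_fin, add_mul]; exact le_antisymm hr hr2
        · rw [Big_blocks, Matrix.submatrix_mulVec_equiv, Function.comp_assoc, Equiv.self_comp_symm,
            Function.comp_id]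
          have : (fromBlocks (Big x T) 0 (Big x N) (Big x T0)) *ᵥ (Sum.elim z y) = 0 := by
            rw [ker_blocks]
            exact ⟨hz, hy⟩
          rw [this]; rfl
        · rfl
      rw [← hN]
      refine ⟨-y, Submodule.neg_mem _ hyU, ?_⟩
      rw [Matrix.mulVecLin_apply, Matrix.mulVec_neg]
      exact (eq_neg_of_add_eq_zero_left hy).symm
  have hW : slots (Fin D) (⨆ l, U.map (x l).mulVecLin) ≤ (slots (Fin D) U).map A.mulVecLin := by
    refine slots_le _ _ fun j => ?_
    have : (⨆ l, U.map (x l).mulVecLin) ≤ Submodule.comap (slotMap j) ((slots (Fin D) U).map A.mulVecLin) := by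
      refine iSup_le fun l => ?_
      rw [Submodule.map_le_iff_le_comap]
      intro u hu
      exact hgen l j u hu
    exact fun u hu => this hu
  have h1 := Submodule.finrank_mono hW
  rw [finrank_slots, Fintype.card_fin] at h1
  have h2 := LinearMap.finrank_range_add_finrank_ker (A.mulVecLin.domRestrict (slots (Fin D) U))
  rw [finrank_slots, Fintype.card_fin] at h2
  have h3 : LinearMap.range (A.mulVecLin.domRestrict (slots (Fin D) U)) = (slots (Fin D) U).map A.mulVecLin := by
    exact LinearMap.range_domRestrict _ _
  have h4 : Module.finrank K (LinearMap.ker A.mulVecLin) ≤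
      Module.finrank K (LinearMap.ker (A.mulVecLin.domRestrict (slots (Fin D) U))) := by
    refine LinearMap.finrank_le_finrank_of_injective (f := LinearMap.codRestrict _ (LinearMap.codRestrict _
      (LinearMap.ker A.mulVecLin).subtype fun z => hker z.2) fun z => ?_) ?_
    · exact LinearMap.mem_ker.1 z.2
    · intro z w hzw
      have := congrArg (fun q => (q.1.1 : ι × Fin D → K)) hzw
      exact Subtype.ext this
  rw [h3] at h2
  have h5 := rank_ker A
  have h6 := h U
  rw [Fintype.card_prod, Fintype.card_fin] at h5
  have h7 := Nat.mul_le_mul_left D h6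
  have h8 : A.rank ≤ D * Fintype.card ι := by simpa using rank_Big_le x T0
  rw [mul_comm (Fintype.card ι)] at h5
  omega

/-- full blow-up size -/
def FullDim (d : ℕ) : Prop :=
  ∃ T : Fin m → Matrix (Fin d) (Fin d) K, (Big x T).rank = d * Fintype.card ι

theorem FullDim.add {a b : ℕ} (ha : FullDim x a) (hb : FullDim x b) : FullDim x (a + b) := by
  obtain ⟨T, hT⟩ := ha
  obtain ⟨S, hS⟩ := hb
  have h1 := rank_blocks_ge (Big x T) (Big x (fun _ => (0 : Matrix (Fin b) (Fin a) K))) (Big x S)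
  rw [← rank_Big_blocks] at h1
  refine ⟨fun l => (fromBlocks (T l) 0 0 (S l)).submatrix finSumFinEquiv.symm finSumFinEquiv.symm, ?_⟩
  rw [Big_reindex, rank_equiv]
  refine le_antisymm ?_ ?_
  · simpa using rank_Big_le x (fun l => (fromBlocks (T l) 0 0 (S l)))
  · rw [add_mul]; omega

theorem FullDim.mul {a : ℕ} (ha : FullDim x a) (k : ℕ) : FullDim x (k * a) := by
  induction k with
  | zero =>
    rw [zero_mul]
    refine ⟨fun _ => 0, ?_⟩
    have := rank_Big_le x (fun _ => (0 : Matrix (Fin 0) (Fin 0) K))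
    simp only [Fintype.card_fin] at this
    omega
  | succ k ih => rw [Nat.succ_mul]; exact ih.add x ha

theorem FullDim.descent [Infinite K] [Nonempty ι] {e : ℕ} (he : 0 < e) (hle : Fintype.card ι ≤ e) (h : FullDim x (e + 1)) :
    FullDim x e := by
  classical
  obtain ⟨T, hT⟩ := h
  set M := Big x T with hM
  have hdet : IsUnit M := by
    have h1 : LinearMap.range M.mulVecLin = ⊤ := by
      apply Submodule.eq_top_of_finrank_eq
      have : Module.finrank K (LinearMap.range M.mulVecLin) = M.rank := rfl
      rw [this, hT]
      simp [mul_comm]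
    rw [LinearMap.range_eq_top] at h1
    exact (Matrix.mulVec_surjective_iff_isUnit).1 h1
  have hdet' := (Matrix.isUnit_iff_isUnit_det _).1 hdet
  obtain ⟨i0⟩ := ‹Nonempty ι›
  obtain ⟨⟨c, k⟩, hk⟩ : ∃ q, M⁻¹ (i0, 0) q ≠ 0 := by
    by_contra! hc
    have h1 : (M⁻¹ * M) (i0, 0) (i0, 0) = 0 := by
      rw [Matrix.mul_apply]; simp [hc]
    rw [Matrix.nonsing_inv_mul _ hdet'] at h1
    simp at h1
  let T2 : Fin m → Matrix (Fin e) (Fin e) K := fun l => (T l).submatrix k.succAbove Fin.succ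
  set M2 := Big x T2 with hM2
  -- extension by zero
  let ext : (ι × Fin e → K) →ₗ[K] (ι × Fin (e + 1) → K) :=
    { toFun := fun z p => Fin.cases 0 (fun j => z (p.1, j)) p.2
      map_add' := fun z w => by
        funext ⟨i, j⟩
        refine Fin.cases ?_ (fun j => ?_) j <;> simp
      map_smul' := fun z w => by
        funext ⟨i, j⟩
        refine Fin.cases ?_ (fun j => ?_) j <;> simp }
  have hext : ∀ z i j, (M *ᵥ ext z) (i, k.succAbove j) = (M2 *ᵥ z) (i, j) := by
    intro z i j
    simp only [Matrix.mulVec, dotProduct, Fintype.sum_prod_type, Fin.sum_univ_succ]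
    simp [ext, hM2, hM, Big_apply, T2]
  let g : LinearMap.ker M2.mulVecLin →ₗ[K] (ι → K) :=
    LinearMap.funLeft K K (fun i => (i, k)) ∘ₗ M.mulVecLin ∘ₗ ext ∘ₗ (LinearMap.ker M2.mulVecLin).subtype
  have hgz : ∀ z : LinearMap.ker M2.mulVecLin, M *ᵥ ext z = slotMap k (g z) := by
    intro z
    funext ⟨i, j⟩
    by_cases hj : j = k
    · subst hj
      simp [slotMap, g, LinearMap.funLeft_apply]
    · obtain ⟨j, rfl⟩ := Fin.exists_succAbove_eq hj
      rw [hext]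
      have : M2 *ᵥ (z : ι × Fin e → K) = 0 := LinearMap.mem_ker.1 z.2
      rw [this]
      simp [slotMap]
  have hext_inj : ∀ z, ext z = 0 → z = 0 := by
    intro z hz
    funext ⟨i, j⟩
    exact congrFun hz (i, j.succ)
  have hg : Function.Injective g := by
    rw [← LinearMap.ker_eq_bot, LinearMap.ker_eq_bot']
    intro z hz
    have h1 := hgz z
    rw [hz, map_zero] at h1
    have h2 : ext z = 0 := by
      have := congrArg (M⁻¹ *ᵥ ·) h1
      simpa [Matrix.mulVec_mulVec, Matrix.nonsing_inv_mul _ hdet'] using this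
    exact Subtype.ext (hext_inj _ h2)
  have hlt : Module.finrank K (LinearMap.ker M2.mulVecLin) < Fintype.card ι := by
    have h1 := LinearMap.finrank_le_finrank_of_injective hg
    rw [Module.finrank_pi] at h1
    refine lt_of_le_of_ne h1 fun heq => ?_
    have hs : Function.Surjective g :=
      (LinearMap.injective_iff_surjective_of_finrank_eq_finrank (by rw [heq, Module.finrank_pi])).1 hg
    obtain ⟨z, hz⟩ := hs (Pi.single c 1)
    have h2 := hgz z
    rw [hz] at h2
    have h3 : ext z = M⁻¹ *ᵥ (slotMap k (Pi.single c 1)) := by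
      rw [← h2, Matrix.mulVec_mulVec, Matrix.nonsing_inv_mul _ hdet', Matrix.one_mulVec]
    have h4 : (slotMap k (Pi.single c (1 : K)) : ι × Fin (e + 1) → K) = Pi.single (c, k) 1 := by
      funext ⟨i, j⟩
      simp only [slotMap, LinearMap.coe_mk, AddHom.coe_mk, Pi.single_apply, Prod.mk.injEq]
      by_cases h : j = k <;> simp [h]
    rw [h4] at h3
    have h5 := congrFun h3 (i0, 0)
    rw [Matrix.mulVec_single_one] at h5
    exact hk h5.symm
  obtain ⟨e, rfl⟩ : ∃ e', e = e' + 1 := ⟨e - 1, by omega⟩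
  obtain ⟨s, ⟨T3, hT3⟩, hs⟩ := regular K m e x
  have h1 := hs T2
  have h2 := rank_ker M2
  rw [← hM2] at h1
  simp only [Fintype.card_prod, Fintype.card_fin] at h2
  have h3 := rank_Big_le x T3
  rw [hT3, Fintype.card_fin] at h3
  have h4 := Nat.le_of_mul_le_mul_left h3 (Nat.succ_pos e)
  refine ⟨T3, ?_⟩
  rw [hT3]
  congr 1
  refine le_antisymm h4 ?_
  by_contra! hc
  obtain ⟨r, hr⟩ := Nat.exists_eq_add_of_lt hc
  rw [hr] at h2 hlt hle
  nlinarith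

theorem fullDim [Infinite K] [Nonempty ι] (h : NoShrunk x) (d : ℕ) (hd : 0 < d) (hle : Fintype.card ι ≤ d) :
    ∃ T : Fin m → Matrix (Fin d) (Fin d) K, IsUnit (Big x T).det := by
  classical
  obtain ⟨D, hD, hT⟩ := full x h
  have h1 : FullDim x (d * D) := FullDim.mul x hT d
  have h2 : ∀ k, FullDim x (d + k) → FullDim x d := by
    intro k
    induction k with
    | zero => exact fun h => h
    | succ k ih => exact fun h => ih (FullDim.descent x (by omega) (by omega) h)
  obtain ⟨k, hk⟩ := Nat.exists_eq_add_of_le (Nat.le_mul_of_pos_right d hD)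
  rw [hk] at h1
  obtain ⟨T, hT⟩ := h2 k h1
  refine ⟨T, ?_⟩
  rw [← Matrix.isUnit_iff_isUnit_det, ← Matrix.mulVec_surjective_iff_isUnit]
  have h1 : LinearMap.range (Big x T).mulVecLin = ⊤ := by
    apply Submodule.eq_top_of_finrank_eq
    have : Module.finrank K (LinearMap.range (Big x T).mulVecLin) = (Big x T).rank := rfl
    rw [this, hT]
    simp [mul_comm]
  exact LinearMap.range_eq_top.1 h1
end bigs
end Sep

open MvPolynomial Matrix

namespace Sep

section adapt
variable {K : Type*} [Field K] {ι : Type*} [Fintype ι] [DecidableEq ι]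

theorem adapt (U : Submodule K (ι → K)) (α β : Type*) [Fintype α] [DecidableEq α] [Fintype β] [DecidableEq β]
    (hα : Fintype.card α = Module.finrank K U) (hβ : Fintype.card α + Fintype.card β = Fintype.card ι) :
    ∃ (B : Matrix ι (α ⊕ β) K) (B' : Matrix (α ⊕ β) ι K), B * B' = 1 ∧ B' * B = 1 ∧
      ∀ z, z ∈ U ↔ ∀ j, (B' *ᵥ z) (Sum.inr j) = 0 := by
  obtain ⟨U', hU'⟩ := Submodule.exists_isCompl U
  have hd := Submodule.finrank_add_eq_of_isCompl hU'
  rw [Module.finrank_pi] at hd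
  let b1 : Module.Basis α K U := (Module.finBasis K U).reindex (Fintype.equivFinOfCardEq hα).symm
  let b2 : Module.Basis β K U' := (Module.finBasis K U').reindex
    (Fintype.equivFinOfCardEq (by omega : Fintype.card β = Module.finrank K U')).symm
  let E : (ι → K) ≃ₗ[K] (α ⊕ β → K) :=
    (Submodule.prodEquivOfIsCompl U U' hU').symm ≪≫ₗ (b1.equivFun.prodCongr b2.equivFun) ≪≫ₗ
      (LinearEquiv.sumArrowLequivProdArrow α β K K).symm
  refine ⟨LinearMap.toMatrix' E.symm.toLinearMap, LinearMap.toMatrix' E.toLinearMap, ?_, ?_, ?_⟩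
  · rw [← LinearMap.toMatrix'_comp]; simp
  · rw [← LinearMap.toMatrix'_comp]; simp
  · intro z
    rw [LinearMap.toMatrix'_mulVec]
    have h1 : ∀ j, E z (Sum.inr j) = b2.equivFun ((Submodule.prodEquivOfIsCompl U U' hU').symm z).2 j := by
      intro j; rfl
    simp only [LinearEquiv.coe_coe, h1]
    rw [← Submodule.prodEquivOfIsCompl_symm_apply_snd_eq_zero (h := hU')]
    constructor
    · intro h j; rw [h]; simp
    · intro h
      apply b2.equivFun.injective
      funext j
      rw [h]; simp
end adapt

section inv
variable {K : Type} [Field K] {m : ℕ}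

/-- abstract invariant functions -/
def IsInv {κ : Type} [Fintype κ] [DecidableEq κ] (F : (Fin m → Matrix κ κ K) → K) : Prop :=
  (∀ (A B : Matrix κ κ K) x, A.det = 1 → B.det = 1 → F (fun l => A * x l * B) = F x) ∧
  ∀ (X : Fin m → Matrix κ κ (Polynomial K)) (c : K),
    (∀ s ≠ 0, F (fun l => (X l).map (Polynomial.eval s)) = c) →
      F (fun l => (X l).map (Polynomial.eval 0)) = c

theorem map_eval {a b c : Type*} [Fintype b] (A : Matrix a b K) (M : Matrix b c (Polynomial K)) (s : K) :
    (A.map Polynomial.C * M).map (Polynomial.eval s) = A * M.map (Polynomial.eval s) := by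
  ext i j
  simp [Matrix.mul_apply, Polynomial.eval_finset_sum]

theorem map_eval' {a b c : Type*} [Fintype b] (A : Matrix a b (Polynomial K)) (M : Matrix b c K) (s : K) :
    (A * M.map Polynomial.C).map (Polynomial.eval s) = A.map (Polynomial.eval s) * M := by
  ext i j
  simp [Matrix.mul_apply, Polynomial.eval_finset_sum]

variable {ι κ μ : Type} [Fintype ι] [DecidableEq ι] [Fintype κ] [DecidableEq κ] [Fintype μ] [DecidableEq μ]

theorem IsInv.conj {F : (Fin m → Matrix κ κ K) → K} (hF : IsInv F) (C : Matrix κ ι K) (C' : Matrix ι κ K)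
    (D : Matrix ι κ K) (D' : Matrix κ ι K) (h1 : C * C' = 1) (h2 : C' * C = 1) (h3 : D * D' = 1) (h4 : D' * D = 1) :
    IsInv (fun x : Fin m → Matrix ι ι K => F (fun l => C * x l * D)) := by
  constructor
  · intro A B x hA hB
    have := hF.1 (C * A * C') (D' * B * D) (fun l => C * x l * D)
      (by rw [Matrix.det_conj_of_mul_eq_one h1 h2, hA]) (by rw [Matrix.det_conj_of_mul_eq_one h4 h3, hB])
    beta_reduce
    rw [← this]
    congr 1
    funext l
    calc C * (A * x l * B) * D = C * A * (C' * C) * x l * (D * D') * B * D := by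
          rw [h2, h3]
          simp only [Matrix.mul_assoc, Matrix.one_mul]
      _ = _ := by simp only [Matrix.mul_assoc]
  · intro X c h
    have := hF.2 (fun l => C.map Polynomial.C * X l * D.map Polynomial.C) c
    simp only [map_eval', map_eval] at this
    exact this h

theorem IsInv.block {F : (Fin m → Matrix (ι ⊕ κ) (ι ⊕ κ) K) → K} (hF : IsInv F) (S : Fin m → Matrix ι ι K) :
    IsInv (fun x : Fin m → Matrix κ κ K => F (fun l => fromBlocks (S l) 0 0 (x l))) := by
  constructor
  · intro A B x hA hB
    have := hF.1 (fromBlocks 1 0 0 A) (fromBlocks 1 0 0 B) (fun l => fromBlocks (S l) 0 0 (x l))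
      (by simp [hA]) (by simp [hB])
    beta_reduce
    rw [← this]
    congr 1
    funext l
    simp [Matrix.fromBlocks_multiply]
  · intro X c h
    have := hF.2 (fun l => fromBlocks ((S l).map Polynomial.C) 0 0 (X l)) c
    simp only [Matrix.fromBlocks_map] at this
    have h5 : ∀ l s, ((S l).map Polynomial.C).map (Polynomial.eval s) = S l := by
      intro l s; ext; simp
    have h6 : ∀ s, ∀ a b : Type, (0 : Matrix a b (Polynomial K)).map (Polynomial.eval s) = 0 := by
      intro s a b; ext; simp
    simp only [h5, h6] at this
    exact this h

theorem IsInv.gl [IsAlgClosed K] {F : (Fin m → Matrix κ κ K) → K} (hF : IsInv F) (A B : Matrix κ κ K)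
    (h : A.det * B.det = 1) (x) : F (fun l => A * x l * B) = F x := by
  rcases isEmpty_or_nonempty κ with he | he
  · congr 1
    funext l
    exact Subsingleton.elim _ _
  · obtain ⟨a, ha⟩ := IsAlgClosed.exists_pow_nat_eq A.det (n := Fintype.card κ) Fintype.card_pos
    have hA : A.det ≠ 0 := left_ne_zero_of_mul_eq_one h
    have ha0 : a ≠ 0 := by
      rintro rfl
      rw [zero_pow Fintype.card_ne_zero] at ha
      exact hA ha.symm
    have := hF.1 (a⁻¹ • A) (a • B) x (by
      rw [Matrix.det_smul, inv_pow, ha, inv_mul_cancel₀ hA]) (by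
      rw [Matrix.det_smul, ha, h])
    rw [← this]
    congr 1
    funext l
    simp [smul_smul, ha0]

/-- degeneration equivalence -/
def Rel (x : Fin m → Matrix ι ι K) (y : Fin m → Matrix κ κ K) : Prop :=
  ∃ (A : Matrix κ ι K) (A' : Matrix ι κ K) (B : Matrix ι κ K) (B' : Matrix κ ι K),
    A * A' = 1 ∧ A' * A = 1 ∧ B * B' = 1 ∧ B' * B = 1 ∧
    ∀ F : (Fin m → Matrix κ κ K) → K, IsInv F → F y = F (fun l => A * x l * B)

theorem Rel.refl (x : Fin m → Matrix ι ι K) : Rel x x :=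
  ⟨1, 1, 1, 1, by simp, by simp, by simp, by simp, fun F _ => by simp⟩

theorem Rel.symm {x : Fin m → Matrix ι ι K} {y : Fin m → Matrix κ κ K} (h : Rel x y) : Rel y x := by
  obtain ⟨A, A', B, B', h1, h2, h3, h4, h5⟩ := h
  refine ⟨A', A, B', B, h2, h1, h4, h3, fun F hF => ?_⟩
  have := h5 _ (hF.conj A' A B' B h2 h1 h4 h3)
  rw [this]
  congr 1
  funext l
  calc x l = (A' * A) * x l * (B * B') := by rw [h2, h3]; simp
    _ = _ := by simp only [Matrix.mul_assoc]

theorem Rel.trans {x : Fin m → Matrix ι ι K} {y : Fin m → Matrix κ κ K} {z : Fin m → Matrix μ μ K}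
    (h : Rel x y) (h' : Rel y z) : Rel x z := by
  obtain ⟨A, A', B, B', h1, h2, h3, h4, h5⟩ := h
  obtain ⟨C, C', D, D', k1, k2, k3, k4, k5⟩ := h'
  refine ⟨C * A, A' * C', B * D, D' * B', ?_, ?_, ?_, ?_, fun F hF => ?_⟩
  · rw [Matrix.mul_assoc, ← Matrix.mul_assoc A, h1, Matrix.one_mul, k1]
  · rw [Matrix.mul_assoc, ← Matrix.mul_assoc C', k2, Matrix.one_mul, h2]
  · rw [Matrix.mul_assoc, ← Matrix.mul_assoc D, k3, Matrix.one_mul, h3]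
  · rw [Matrix.mul_assoc, ← Matrix.mul_assoc B', h4, Matrix.one_mul, k4]
  · rw [k5 F hF, h5 _ (hF.conj C C' D D' k1 k2 k3 k4)]
    simp only [Matrix.mul_assoc]

theorem Rel.conj (x : Fin m → Matrix ι ι K) (A : Matrix κ ι K) (A' : Matrix ι κ K) (B : Matrix ι κ K) (B' : Matrix κ ι K)
    (h1 : A * A' = 1) (h2 : A' * A = 1) (h3 : B * B' = 1) (h4 : B' * B = 1) :
    Rel x (fun l => A * x l * B) := ⟨A, A', B, B', h1, h2, h3, h4, fun _ _ => rfl⟩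

theorem Rel.reindex (x : Fin m → Matrix ι ι K) (e : κ ≃ ι) :
    Rel x (fun l => (x l).submatrix e e) := by
  have h : ∀ l, (x l).submatrix e e = (1 : Matrix ι ι K).submatrix e id * x l * (1 : Matrix ι ι K).submatrix id e := by
    intro l
    ext i j
    simp [Matrix.mul_apply, Matrix.one_apply]
  simp only [h]
  have h1 : (1 : Matrix ι ι K).submatrix e id * (1 : Matrix ι ι K).submatrix id e = 1 := by
    rw [← Matrix.submatrix_mul _ _ _ id _ Function.bijective_id, Matrix.one_mul, Matrix.submatrix_one_equiv]
  have h2 : (1 : Matrix ι ι K).submatrix id e * (1 : Matrix ι ι K).submatrix e id = 1 := by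
    rw [← Matrix.submatrix_mul _ _ _ e _ e.bijective, Matrix.one_mul, Matrix.submatrix_id_id]
  exact Rel.conj x _ _ _ _ h1 h2 h2 h1

theorem Rel.block {x : Fin m → Matrix ι ι K} {y : Fin m → Matrix κ κ K} (h : Rel x y) (S : Fin m → Matrix μ μ K) :
    Rel (fun l => fromBlocks (S l) 0 0 (x l)) (fun l => fromBlocks (S l) 0 0 (y l)) := by
  obtain ⟨A, A', B, B', h1, h2, h3, h4, h5⟩ := h
  refine ⟨fromBlocks 1 0 0 A, fromBlocks 1 0 0 A', fromBlocks 1 0 0 B, fromBlocks 1 0 0 B', ?_, ?_, ?_, ?_, fun F hF => ?_⟩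
  · simp [Matrix.fromBlocks_multiply, h1]
  · simp [Matrix.fromBlocks_multiply, h2]
  · simp [Matrix.fromBlocks_multiply, h3]
  · simp [Matrix.fromBlocks_multiply, h4]
  · rw [h5 _ (hF.block S)]
    simp [Matrix.fromBlocks_multiply]

theorem Rel.degen [IsAlgClosed K] (P : Fin m → Matrix ι ι K) (Q : Fin m → Matrix ι κ K) (R : Fin m → Matrix κ κ K) :
    Rel (fun l => fromBlocks (P l) (Q l) 0 (R l)) (fun l => fromBlocks (P l) 0 0 (R l)) := by
  refine ⟨1, 1, 1, 1, by simp, by simp, by simp, by simp, fun F hF => ?_⟩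
  simp only [Matrix.one_mul, Matrix.mul_one]
  have := hF.2 (fun l => fromBlocks ((P l).map Polynomial.C) ((Polynomial.X : Polynomial K) • (Q l).map Polynomial.C) 0
    ((R l).map Polynomial.C)) (F (fun l => fromBlocks (P l) (Q l) 0 (R l)))
  have h5 : ∀ (a b : Type) (M : Matrix a b K) s, (M.map Polynomial.C).map (Polynomial.eval s) = M := by
    intro a b M s; ext; simp
  have h6 : ∀ s, ∀ a b : Type, (0 : Matrix a b (Polynomial K)).map (Polynomial.eval s) = 0 := by
    intro s a b; ext; simp
  have h7 : ∀ (a b : Type) (M : Matrix a b K) (s : K), ((Polynomial.X : Polynomial K) • M.map Polynomial.C).map (Polynomial.eval s) = s • M := by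
    intro a b M s; ext; simp; ring
  simp only [Matrix.fromBlocks_map, h5, h6, h7] at this
  have h8 := this (fun s hs => by
    rw [← hF.gl (fromBlocks (s • 1) 0 0 1) (fromBlocks (s⁻¹ • 1) 0 0 1) (by
      simp [hs]) (fun l => fromBlocks (P l) (Q l) 0 (R l))]
    congr 1
    funext l
    simp [Matrix.fromBlocks_multiply, smul_smul, hs])
  simpa using h8

theorem nullcone {F : (Fin m → Matrix ι ι K) → K} (hF : IsInv F) (v : Fin m → Matrix ι ι K) (hv : ¬ NoShrunk v) :
    F v = F 0 := by
  unfold NoShrunk at hv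
  push Not at hv
  obtain ⟨U, hU⟩ := hv
  set W : Submodule K (ι → K) := ⨆ l, U.map (v l).mulVecLin with hW
  set u := Module.finrank K U with hu
  set ω := Module.finrank K W with hω
  have hu' : u ≤ Fintype.card ι := by
    have := Submodule.finrank_le U; rwa [Module.finrank_pi] at this
  set n := Fintype.card ι with hn
  obtain ⟨B, B', hB, hB', hBU⟩ := adapt U (Fin u) (Fin (n - u)) (by simp [hu]) (by simp; omega)
  obtain ⟨C, C', hC, hC', hCW⟩ := adapt W (Fin ω) (Fin (n - ω)) (by simp [hω]) (by simp; omega)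
  have h21 : ∀ l, (C' * v l * B).toBlocks₂₁ = 0 := by
    intro l
    ext i j
    have h1 : B *ᵥ Pi.single (Sum.inl j) 1 ∈ U := by
      rw [hBU]
      intro k
      rw [Matrix.mulVec_mulVec, hB', Matrix.one_mulVec]
      simp
    have h2 : v l *ᵥ (B *ᵥ Pi.single (Sum.inl j) 1) ∈ W :=
      (le_iSup (fun l => U.map (v l).mulVecLin) l) ⟨_, h1, rfl⟩
    rw [hCW] at h2
    have h3 := h2 i
    rw [Matrix.mulVec_mulVec, Matrix.mulVec_mulVec, Matrix.mulVec_single_one] at h3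
    simpa [Matrix.toBlocks₂₁, Matrix.mul_assoc] using h3
  let P : Fin m → Matrix (Fin ω) (Fin u) K := fun l => (C' * v l * B).toBlocks₁₁
  let Q : Fin m → Matrix (Fin ω) (Fin (n - u)) K := fun l => (C' * v l * B).toBlocks₁₂
  let R : Fin m → Matrix (Fin (n - ω)) (Fin (n - u)) K := fun l => (C' * v l * B).toBlocks₂₂
  have hbl : ∀ l, C' * v l * B = fromBlocks (P l) (Q l) 0 (R l) := by
    intro l
    rw [← h21 l]
    exact (Matrix.fromBlocks_toBlocks _).symm
  let X : Fin m → Matrix ι ι (Polynomial K) := fun l =>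
    C.map Polynomial.C * (fromBlocks ((Polynomial.X : Polynomial K) ^ (u - ω) • (P l).map Polynomial.C)
      ((Polynomial.X : Polynomial K) ^ (n - ω + u) • (Q l).map Polynomial.C) 0
      ((Polynomial.X : Polynomial K) ^ (u - ω) • (R l).map Polynomial.C)) * B'.map Polynomial.C
  have h6 : ∀ s, ∀ a b : Type, (0 : Matrix a b (Polynomial K)).map (Polynomial.eval s) = 0 := by
    intro s a b; ext; simp
  have h7 : ∀ (a b : Type) (M : Matrix a b K) (s : K) (k : ℕ), ((Polynomial.X : Polynomial K) ^ k • M.map Polynomial.C).map (Polynomial.eval s) = s ^ k • M := by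
    intro a b M s k; ext; simp; ring
  have hX : ∀ l s, (X l).map (Polynomial.eval s) = C * (fromBlocks (s ^ (u - ω) • P l) (s ^ (n - ω + u) • Q l) 0
      (s ^ (u - ω) • R l)) * B' := by
    intro l s
    simp only [X, map_eval', map_eval, Matrix.fromBlocks_map, h6, h7]
  let D1 : K → Matrix (Fin ω ⊕ Fin (n - ω)) (Fin ω ⊕ Fin (n - ω)) K := fun s =>
    fromBlocks (s ^ (n - ω) • 1) 0 0 ((s⁻¹) ^ ω • 1)
  let D2 : K → Matrix (Fin u ⊕ Fin (n - u)) (Fin u ⊕ Fin (n - u)) K := fun s =>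
    fromBlocks ((s⁻¹) ^ (n - u) • 1) 0 0 (s ^ u • 1)
  have key := hF.2 X (F v) (fun s hs => by
    rw [← hF.1 (C * D1 s * C')
      (B * D2 s * B') v
      (by
        rw [Matrix.det_conj_of_mul_eq_one hC hC']
        simp only [D1, D2, det_fromBlocks_zero₂₁, det_smul, det_one, Fintype.card_fin, mul_one, ← pow_mul, inv_pow]
        rw [mul_comm ω]
        exact mul_inv_cancel₀ (pow_ne_zero _ hs))
      (by
        rw [Matrix.det_conj_of_mul_eq_one hB hB']
        simp only [D1, D2, det_fromBlocks_zero₂₁, det_smul, det_one, Fintype.card_fin, mul_one, ← pow_mul, inv_pow]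
        rw [mul_comm u]
        exact inv_mul_cancel₀ (pow_ne_zero _ hs))]
    congr 1
    funext l
    rw [hX]
    have : C * D1 s * C' * v l *
      (B * D2 s * B') =
      C * (D1 s * (C' * v l * B) *
        D2 s) * B' := by
      simp only [Matrix.mul_assoc]
    rw [this, hbl]
    congr 2
    simp only [D1, D2, Matrix.fromBlocks_multiply]
    have e1 : s⁻¹ ^ (n - u) * s ^ (n - ω) = s ^ (u - ω) := by
      have : n - ω = (n - u) + (u - ω) := by omega
      rw [this, pow_add, ← mul_assoc, ← mul_pow, inv_mul_cancel₀ hs, one_pow, one_mul]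
    have e2 : s ^ u * s⁻¹ ^ ω = s ^ (u - ω) := by
      have : u = (u - ω) + ω := by omega
      rw [this, pow_add, mul_assoc, ← mul_pow, mul_inv_cancel₀ hs, one_pow, mul_one]
      congr 1
      omega
    have e3 : s ^ u * s ^ (n - ω) = s ^ (n - ω + u) := by rw [add_comm, pow_add]
    simp [smul_smul, -inv_pow, e1, e2, e3])
  rw [← key]
  congr 1
  funext l
  rw [hX]
  have : u - ω ≠ 0 := by omega
  rw [zero_pow this, zero_pow (show n - ω + u ≠ 0 by omega)]
  simp
end inv
end Sep

open MvPolynomial Matrix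

namespace Sep

section rep
variable {K : Type} [Field K] {m : ℕ} {δ : Type} [Fintype δ] [DecidableEq δ]
  {𝒜 : Type} [Ring 𝒜] [Algebra K 𝒜]

def Vb {ι κ : Type} (T : Fin m → Matrix δ δ K) (x : Fin m → Matrix ι κ K) (j h : δ) : Matrix ι κ K :=
  ∑ l, T l j h • x l

theorem Vb_conj {ι κ μ ν : Type} [Fintype ι] [Fintype κ] (T : Fin m → Matrix δ δ K) (x : Fin m → Matrix ι κ K)
    (A : Matrix μ ι K) (B : Matrix κ ν K) (j h : δ) :
    Vb T (fun l => A * x l * B) j h = A * Vb T x j h * B := by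
  simp [Vb, Matrix.mul_sum, Matrix.sum_mul]

theorem Vb_blocks {α β α' β' : Type} (T : Fin m → Matrix δ δ K) (P : Fin m → Matrix α β K)
    (Q : Fin m → Matrix α β' K) (R : Fin m → Matrix α' β K) (S : Fin m → Matrix α' β' K) (j h : δ) :
    Vb T (fun l => fromBlocks (P l) (Q l) (R l) (S l)) j h =
      fromBlocks (Vb T P j h) (Vb T Q j h) (Vb T R j h) (Vb T S j h) := by
  ext (i | i) (k | k) <;> simp [Vb, Matrix.sum_apply]

theorem Vb_zero {α β : Type} (T : Fin m → Matrix δ δ K) (j h : δ) :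
    Vb T (fun _ => (0 : Matrix α β K)) j h = 0 := by simp [Vb]

theorem lr {ι : Type} [Fintype ι] [DecidableEq ι] (V V' : δ → δ → Matrix ι ι K)
    (h : ∀ j k, ∑ i, V' j i * V i k = if j = k then 1 else 0) :
    ∀ j k, ∑ i, V j i * V' i k = if j = k then 1 else 0 := by
  have h1 : (Matrix.of V') * (Matrix.of V) = (1 : Matrix δ δ (Matrix ι ι K)) := by
    ext1 j k
    rw [Matrix.mul_apply, Matrix.one_apply]
    exact h j k
  have h2 : (Matrix.of V) * (Matrix.of V') = (1 : Matrix δ δ (Matrix ι ι K)) := by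
    apply (Matrix.compRingEquiv δ ι K).injective
    rw [map_mul, map_one, mul_eq_one_comm, ← map_mul, h1, map_one]
  intro j k
  have := congrFun (congrFun h2 j) k
  rw [Matrix.mul_apply, Matrix.one_apply] at this
  exact this

/-- representations with a compatible regular tuple -/
structure Rep (T : Fin m → Matrix δ δ K) (y : Fin m → δ → δ → 𝒜) where
  ι : Type
  [ft : Fintype ι]
  [de : DecidableEq ι]
  x : Fin m → Matrix ι ι K
  ρ : 𝒜 →ₐ[K] Matrix ι ι K
  V' : δ → δ → Matrix ι ι K
  left : ∀ j k, ∑ h, V' j h * Vb T x h k = if j = k then 1 else 0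
  compat : ∀ l j k, ∑ h, Vb T x j h * ρ (y l h k) = if j = k then x l else 0

attribute [instance] Rep.ft Rep.de

variable {T : Fin m → Matrix δ δ K} {y : Fin m → δ → δ → 𝒜}

namespace Rep

theorem right (X : Rep T y) : ∀ j k, ∑ h, Vb T X.x j h * X.V' h k = if j = k then 1 else 0 :=
  lr _ _ X.left

def card (X : Rep T y) : ℕ := Fintype.card X.ι

theorem ite_mul_mat {a b c : Type} [Fintype b] (p : Prop) [Decidable p] (A : Matrix a b K) (B : Matrix b c K) :
    A * (if p then B else 0) = if p then A * B else 0 := by split_ifs <;> simp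

theorem mul_ite_mat {a b c : Type} [Fintype b] (p : Prop) [Decidable p] (A : Matrix a b K) (B : Matrix b c K) :
    (if p then A else 0) * B = if p then A * B else 0 := by split_ifs <;> simp

/-- base change -/
def conj (X : Rep T y) {κ : Type} [Fintype κ] [DecidableEq κ]
    (A : Matrix κ X.ι K) (A' : Matrix X.ι κ K) (B : Matrix X.ι κ K) (B' : Matrix κ X.ι K)
    (h2 : A' * A = 1) (h3 : B * B' = 1) (h4 : B' * B = 1) : Rep T y where
  ι := κ
  x l := A * X.x l * B
  ρ := AlgHom.ofLinearMap
    { toFun := fun a => B' * X.ρ a * B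
      map_add' := fun a b => by simp [Matrix.mul_add, Matrix.add_mul]
      map_smul' := fun c a => by simp }
    (by simp [h4])
    (fun a b => by
      change B' * X.ρ (a * b) * B = (B' * X.ρ a * B) * (B' * X.ρ b * B)
      rw [map_mul]
      calc B' * (X.ρ a * X.ρ b) * B = B' * (X.ρ a * (1 : Matrix X.ι X.ι K) * X.ρ b) * B := by rw [Matrix.mul_one]
        _ = _ := by rw [← h3]; simp only [Matrix.mul_assoc])
  V' j h := B' * X.V' j h * A'
  left j k := by
    simp only [Vb_conj]
    have : ∀ h, B' * X.V' j h * A' * (A * Vb T X.x h k * B) = B' * (X.V' j h * Vb T X.x h k) * B := by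
      intro h
      calc _ = B' * (X.V' j h * (A' * A) * Vb T X.x h k) * B := by simp only [Matrix.mul_assoc]
        _ = _ := by rw [h2, Matrix.mul_one]
    simp only [this, ← Matrix.sum_mul, ← Matrix.mul_sum, X.left, ite_mul_mat, mul_ite_mat, Matrix.mul_one, h4]
  compat l j k := by
    simp only [Vb_conj]
    have : ∀ h, A * Vb T X.x j h * B * (B' * X.ρ (y l h k) * B) = A * (Vb T X.x j h * X.ρ (y l h k)) * B := by
      intro h
      calc _ = A * (Vb T X.x j h * (B * B') * X.ρ (y l h k)) * B := by simp only [Matrix.mul_assoc]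
        _ = _ := by rw [h3, Matrix.mul_one]
    change ∑ h, A * Vb T X.x j h * B * (B' * X.ρ (y l h k) * B) = _
    simp only [this, ← Matrix.sum_mul, ← Matrix.mul_sum, X.compat, ite_mul_mat, mul_ite_mat]

theorem b11 {α β : Type} [Fintype α] [Fintype β] (M N : Matrix (α ⊕ β) (α ⊕ β) K) (h : N.toBlocks₂₁ = 0) :
    (M * N).toBlocks₁₁ = M.toBlocks₁₁ * N.toBlocks₁₁ := by
  rw [← fromBlocks_toBlocks M, ← fromBlocks_toBlocks N, h, fromBlocks_multiply]
  simp

theorem b22 {α β : Type} [Fintype α] [Fintype β] (M N : Matrix (α ⊕ β) (α ⊕ β) K) (h : M.toBlocks₂₁ = 0) :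
    (M * N).toBlocks₂₂ = M.toBlocks₂₂ * N.toBlocks₂₂ := by
  rw [← fromBlocks_toBlocks M, ← fromBlocks_toBlocks N, h, fromBlocks_multiply]
  simp

theorem Vb_21 {α β : Type} (x : Fin m → Matrix (α ⊕ β) (α ⊕ β) K) (hx : ∀ l, (x l).toBlocks₂₁ = 0) (j h) :
    (Vb T x j h).toBlocks₂₁ = 0 := by
  ext i k
  have : ∀ l, x l (Sum.inr i) (Sum.inl k) = 0 := fun l => congrFun (congrFun (hx l) i) k
  simp [Vb, Matrix.toBlocks₂₁, Matrix.sum_apply, this]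

theorem Vb_11 {α β : Type} (x : Fin m → Matrix (α ⊕ β) (α ⊕ β) K) (j h) :
    Vb T (fun l => (x l).toBlocks₁₁) j h = (Vb T x j h).toBlocks₁₁ := by
  ext i k
  simp [Vb, Matrix.toBlocks₁₁, Matrix.sum_apply]

theorem Vb_22 {α β : Type} (x : Fin m → Matrix (α ⊕ β) (α ⊕ β) K) (j h) :
    Vb T (fun l => (x l).toBlocks₂₂) j h = (Vb T x j h).toBlocks₂₂ := by
  ext i k
  simp [Vb, Matrix.toBlocks₂₂, Matrix.sum_apply]

theorem sum_11 {α β γ : Type} [Fintype γ] (f : γ → Matrix (α ⊕ β) (α ⊕ β) K) :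
    ∑ i, (f i).toBlocks₁₁ = (∑ i, f i).toBlocks₁₁ := by
  ext i k
  simp [Matrix.toBlocks₁₁, Matrix.sum_apply]

theorem sum_22 {α β γ : Type} [Fintype γ] (f : γ → Matrix (α ⊕ β) (α ⊕ β) K) :
    ∑ i, (f i).toBlocks₂₂ = (∑ i, f i).toBlocks₂₂ := by
  ext i k
  simp [Matrix.toBlocks₂₂, Matrix.sum_apply]

theorem one_11 {α β : Type} [DecidableEq α] [DecidableEq β] :
    (1 : Matrix (α ⊕ β) (α ⊕ β) K).toBlocks₁₁ = 1 := by
  rw [← fromBlocks_one, toBlocks_fromBlocks₁₁]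

theorem one_22 {α β : Type} [DecidableEq α] [DecidableEq β] :
    (1 : Matrix (α ⊕ β) (α ⊕ β) K).toBlocks₂₂ = 1 := by
  rw [← fromBlocks_one, toBlocks_fromBlocks₂₂]

section tri
variable {α β : Type} [Fintype α] [Fintype β] [DecidableEq α] [DecidableEq β]
  (x : Fin m → Matrix (α ⊕ β) (α ⊕ β) K) (ρ : 𝒜 →ₐ[K] Matrix (α ⊕ β) (α ⊕ β) K)
  (V' : δ → δ → Matrix (α ⊕ β) (α ⊕ β) K)
  (left : ∀ j k, ∑ h, V' j h * Vb T x h k = if j = k then 1 else 0)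
  (compat : ∀ l j k, ∑ h, Vb T x j h * ρ (y l h k) = if j = k then x l else 0)
  (hx : ∀ l, (x l).toBlocks₂₁ = 0) (hρ : ∀ a, (ρ a).toBlocks₂₁ = 0)

def tri1 : Rep T y where
  ι := α
  x l := (x l).toBlocks₁₁
  ρ := AlgHom.ofLinearMap
    { toFun := fun a => (ρ a).toBlocks₁₁
      map_add' := fun a b => by rw [map_add]; rfl
      map_smul' := fun c a => by rw [map_smul]; rfl }
    (by change (ρ 1).toBlocks₁₁ = 1; rw [map_one, one_11])
    (fun a b => by
      change (ρ (a * b)).toBlocks₁₁ = (ρ a).toBlocks₁₁ * (ρ b).toBlocks₁₁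
      rw [map_mul, b11 _ _ (hρ b)])
  V' j h := (V' j h).toBlocks₁₁
  left j k := by
    simp only [Vb_11]
    have := left j k
    rw [Finset.sum_congr rfl (fun h _ => (b11 (V' j h) _ (Vb_21 (T := T) x hx h k)).symm), sum_11, this]
    split_ifs
    · rw [one_11]
    · rfl
  compat l j k := by
    simp only [Vb_11]
    have := compat l j k
    refine (Finset.sum_congr rfl (fun h _ => (b11 (Vb T x j h) _ (hρ (y l h k))).symm)).trans ?_
    rw [sum_11, this]
    split_ifs <;> rfl

def tri2 : Rep T y where
  ι := β
  x l := (x l).toBlocks₂₂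
  ρ := AlgHom.ofLinearMap
    { toFun := fun a => (ρ a).toBlocks₂₂
      map_add' := fun a b => by rw [map_add]; rfl
      map_smul' := fun c a => by rw [map_smul]; rfl }
    (by change (ρ 1).toBlocks₂₂ = 1; rw [map_one, one_22])
    (fun a b => by
      change (ρ (a * b)).toBlocks₂₂ = (ρ a).toBlocks₂₂ * (ρ b).toBlocks₂₂
      rw [map_mul, b22 _ _ (hρ a)])
  V' j h := (V' j h).toBlocks₂₂
  left := by
    apply lr
    intro j k
    simp only [Vb_22]
    have := lr _ _ left j k
    rw [Finset.sum_congr rfl (fun h _ => (b22 _ (V' h k) (Vb_21 (T := T) x hx j h)).symm), sum_22, this]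
    split_ifs
    · rw [one_22]
    · rfl
  compat l j k := by
    simp only [Vb_22]
    have := compat l j k
    refine (Finset.sum_congr rfl (fun h _ => (b22 _ (ρ (y l h k)) (Vb_21 (T := T) x hx j h)).symm)).trans ?_
    rw [sum_22, this]
    split_ifs <;> rfl
end tri

def add (X Y : Rep T y) : Rep T y where
  ι := X.ι ⊕ Y.ι
  x l := fromBlocks (X.x l) 0 0 (Y.x l)
  ρ := AlgHom.ofLinearMap
    { toFun := fun a => fromBlocks (X.ρ a) 0 0 (Y.ρ a)
      map_add' := fun a b => by simp [fromBlocks_add]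
      map_smul' := fun c a => by simp [fromBlocks_smul] }
    (by simp)
    (fun a b => by simp [fromBlocks_multiply])
  V' j h := fromBlocks (X.V' j h) 0 0 (Y.V' j h)
  left j k := by
    simp only [Vb_blocks, Vb_zero, fromBlocks_multiply, Matrix.mul_zero, Matrix.zero_mul, add_zero, zero_add]
    have : ∑ h, fromBlocks (X.V' j h * Vb T X.x h k) 0 0 (Y.V' j h * Vb T Y.x h k) =
      fromBlocks (∑ h, X.V' j h * Vb T X.x h k) 0 0 (∑ h, Y.V' j h * Vb T Y.x h k) := by
      ext (i | i) (l | l) <;> simp [Matrix.sum_apply]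
    rw [this, X.left, Y.left]
    split_ifs <;> simp
  compat l j k := by
    change ∑ h, _ * fromBlocks (X.ρ (y l h k)) 0 0 (Y.ρ (y l h k)) = _
    simp only [Vb_blocks, Vb_zero, fromBlocks_multiply, Matrix.mul_zero, Matrix.zero_mul, add_zero, zero_add]
    have : ∑ h, fromBlocks (Vb T X.x j h * X.ρ (y l h k)) 0 0 (Vb T Y.x j h * Y.ρ (y l h k)) =
      fromBlocks (∑ h, Vb T X.x j h * X.ρ (y l h k)) 0 0 (∑ h, Vb T Y.x j h * Y.ρ (y l h k)) := by
      ext (i | i) (l | l) <;> simp [Matrix.sum_apply]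
    rw [this, X.compat, Y.compat]
    split_ifs <;> simp

/-- `X` degenerates to the sum of `Y` and `Z` -/
def Dec (X Y Z : Rep T y) : Prop :=
  Rel X.x (fun l => fromBlocks (Y.x l) 0 0 (Z.x l)) ∧ (∀ a, (X.ρ a).det = (Y.ρ a).det * (Z.ρ a).det) ∧
    X.card = Y.card + Z.card

theorem Rel_swap {ι κ : Type} [Fintype ι] [DecidableEq ι] [Fintype κ] [DecidableEq κ]
    (x : Fin m → Matrix ι ι K) (z : Fin m → Matrix κ κ K) :
    Rel (fun l => fromBlocks (x l) 0 0 (z l)) (fun l => fromBlocks (z l) 0 0 (x l)) := by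
  convert Rel.reindex (fun l => fromBlocks (x l) 0 0 (z l)) (Equiv.sumComm κ ι) using 2 with l
  ext (i | i) (j | j) <;> simp

theorem Dec.swap {X Y Z : Rep T y} (h : Dec X Y Z) : Dec X Z Y :=
  ⟨h.1.trans (Rel_swap _ _), fun a => by rw [h.2.1, mul_comm], by rw [h.2.2, add_comm]⟩

theorem Dec.assoc {X Y Z S R : Rep T y} (h : Dec X Y Z) (h' : Dec Y S R) : Dec X S (R.add Z) := by
  refine ⟨?_, ?_, ?_⟩
  · refine h.1.trans ((Rel_swap _ _).trans ((h'.1.block Z.x).trans ?_))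
    have h5 := Rel.reindex (fun l => fromBlocks (Z.x l) 0 0 (fromBlocks (S.x l) 0 0 (R.x l)))
      ((Equiv.sumAssoc S.ι R.ι Z.ι).symm.trans (Equiv.sumComm (S.ι ⊕ R.ι) Z.ι))
    have h6 : (fun l => (fromBlocks (Z.x l) 0 0 (fromBlocks (S.x l) 0 0 (R.x l))).submatrix
      ((Equiv.sumAssoc S.ι R.ι Z.ι).symm.trans (Equiv.sumComm (S.ι ⊕ R.ι) Z.ι))
      ((Equiv.sumAssoc S.ι R.ι Z.ι).symm.trans (Equiv.sumComm (S.ι ⊕ R.ι) Z.ι))) =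
      (fun l => fromBlocks (S.x l) 0 0 (fromBlocks (R.x l) 0 0 (Z.x l))) := by
      funext l
      ext (i | i | i) (j | j | j) <;> simp
    rw [h6] at h5
    exact h5
  · intro a
    have : ((R.add Z).ρ a).det = (R.ρ a).det * (Z.ρ a).det := by
      change (fromBlocks (R.ρ a) 0 0 (Z.ρ a)).det = _
      simp
    rw [h.2.1, h'.2.1, this, mul_assoc]
  · have : (R.add Z).card = R.card + Z.card := Fintype.card_sum
    rw [h.2.2, h'.2.2, this]; omega

end Rep
end rep
end Sep

open MvPolynomial Matrix

namespace Sep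
namespace Rep
section rep2
variable {K : Type} [Field K] {m : ℕ} {δ : Type} [Fintype δ] [DecidableEq δ]
  {𝒜 : Type} [Ring 𝒜] [Algebra K 𝒜] {T : Fin m → Matrix δ δ K} {y : Fin m → δ → δ → 𝒜}

theorem Big_mulVec {ι : Type} [Fintype ι] (x : Fin m → Matrix ι ι K) (T : Fin m → Matrix δ δ K) (z : ι × δ → K) (j : δ) :
    (fun i => (Big x T *ᵥ z) (i, j)) = ∑ h, Vb T x j h *ᵥ (fun i => z (i, h)) := by
  funext i
  rw [Finset.sum_apply]
  simp only [Matrix.mulVec, dotProduct, Fintype.sum_prod_type_right, Big_apply, Vb, Matrix.sum_apply, Matrix.smul_apply, smul_eq_mul]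
  refine Finset.sum_congr rfl fun h _ => Finset.sum_congr rfl fun k _ => ?_
  congr 1
  exact Finset.sum_congr rfl fun l _ => mul_comm _ _

theorem Big_inj (X : Rep T y) : Function.Injective (Big X.x T).mulVecLin := by
  rw [injective_iff_map_eq_zero]
  intro z hz
  have h1 : ∀ j, ∑ h, Vb T X.x j h *ᵥ (fun i => z (i, h)) = 0 := by
    intro j
    rw [← Big_mulVec]
    funext i
    exact congrFun hz (i, j)
  have h2 : ∀ k, (fun i => z (i, k)) = 0 := by
    intro k
    have h3 : ∑ j, X.V' k j *ᵥ (∑ h, Vb T X.x j h *ᵥ (fun i => z (i, h))) = 0 := by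
      simp [h1]
    simp only [Matrix.mulVec_sum, Matrix.mulVec_mulVec] at h3
    rw [Finset.sum_comm] at h3
    simp only [← Matrix.sum_mulVec, X.left] at h3
    rw [Finset.sum_eq_single k] at h3
    · simpa using h3
    · intro b _ hb
      rw [if_neg (Ne.symm hb)]; simp
    · simp
  funext ⟨i, k⟩
  exact congrFun (h2 k) i

/-- stable subspaces -/
def Stable (X : Rep T y) (U : Submodule K (X.ι → K)) : Prop := ∀ a, ∀ u ∈ U, X.ρ a *ᵥ u ∈ U

theorem dim_eq [Nonempty δ] (X : Rep T y) (U : Submodule K (X.ι → K)) (hU : X.Stable U) :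
    Module.finrank K (⨆ l, U.map (X.x l).mulVecLin : Submodule K (X.ι → K)) = Module.finrank K U := by
  set W : Submodule K (X.ι → K) := ⨆ l, U.map (X.x l).mulVecLin with hW
  have hxW : ∀ l, ∀ u ∈ U, X.x l *ᵥ u ∈ W := fun l u hu =>
    (le_iSup (fun l => U.map (X.x l).mulVecLin) l) ⟨u, hu, rfl⟩
  have h1 : slots δ W ≤ (slots δ U).map (Big X.x T).mulVecLin := by
    apply slots_le
    intro k u hu
    have : W ≤ ((slots δ U).map (Big X.x T).mulVecLin).comap (slotMap k) := by
      apply iSup_le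
      rintro l _ ⟨u, hu, rfl⟩
      refine ⟨fun p => (X.ρ (y l p.2 k) *ᵥ u) p.1, ?_, ?_⟩
      · intro j
        exact hU (y l j k) _ hu
      · funext ⟨i, j⟩
        have h2 := congrFun (Big_mulVec X.x T (fun p => (X.ρ (y l p.2 k) *ᵥ u) p.1) j) i
        refine h2.trans ?_
        have h3 : ∑ h, Vb T X.x j h *ᵥ (fun i => (X.ρ (y l h k) *ᵥ u) i) =
            ∑ h, (Vb T X.x j h * X.ρ (y l h k)) *ᵥ u :=
          Finset.sum_congr rfl fun h _ => Matrix.mulVec_mulVec _ _ _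
        rw [h3, ← Matrix.sum_mulVec, X.compat]
        simp only [slotMap, LinearMap.coe_mk, AddHom.coe_mk, Matrix.mulVecLin_apply]
        split_ifs <;> simp
    exact this hu
  have h2 : (slots δ U).map (Big X.x T).mulVecLin ≤ slots δ W := by
    rintro _ ⟨z, hz, rfl⟩ j
    change (fun i => (Big X.x T *ᵥ z) (i, j)) ∈ W
    rw [Big_mulVec]
    refine W.sum_mem fun h _ => ?_
    rw [Vb, Matrix.sum_mulVec]
    refine W.sum_mem fun l _ => ?_
    rw [Matrix.smul_mulVec]
    exact W.smul_mem _ (hxW l _ (hz h))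
  have h3 := le_antisymm h1 h2
  have h4 := (Submodule.equivMapOfInjective _ X.Big_inj (slots δ U)).finrank_eq.symm
  rw [← h3, finrank_slots, finrank_slots] at h4
  exact Nat.eq_of_mul_eq_mul_left Fintype.card_pos h4

theorem split [IsAlgClosed K] [Nonempty δ] (X : Rep T y) (U : Submodule K (X.ι → K)) (hU : X.Stable U)
    (h0 : U ≠ ⊥) (h1 : U ≠ ⊤) : ∃ X1 X2 : Rep T y, Dec X X1 X2 ∧ 0 < X1.card ∧ 0 < X2.card := by
  set W : Submodule K (X.ι → K) := ⨆ l, U.map (X.x l).mulVecLin with hW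
  set u := Module.finrank K U with hu
  set n := Fintype.card X.ι with hn
  have hlt : u < n := by
    have := Submodule.finrank_lt h1; rwa [Module.finrank_pi] at this
  have hpos : 0 < u := Nat.pos_of_ne_zero fun h => h0 (Submodule.finrank_eq_zero.1 h)
  have hω : Module.finrank K W = u := X.dim_eq U hU
  obtain ⟨B, B', hB, hB', hBU⟩ := adapt U (Fin u) (Fin (n - u)) (by simp [hu]) (by simp; omega)
  obtain ⟨C, C', hC, hC', hCW⟩ := adapt W (Fin u) (Fin (n - u)) (by simp [hω]) (by simp; omega)
  have hBm : ∀ j, B *ᵥ Pi.single (Sum.inl j) 1 ∈ U := by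
    intro j
    rw [hBU]
    intro k
    rw [Matrix.mulVec_mulVec, hB', Matrix.one_mulVec]
    simp
  have h21 : ∀ l, (C' * X.x l * B).toBlocks₂₁ = 0 := by
    intro l
    ext i j
    have h2 : X.x l *ᵥ (B *ᵥ Pi.single (Sum.inl j) 1) ∈ W :=
      (le_iSup (fun l => U.map (X.x l).mulVecLin) l) ⟨_, hBm j, rfl⟩
    rw [hCW] at h2
    have h3 := h2 i
    rw [Matrix.mulVec_mulVec, Matrix.mulVec_mulVec, Matrix.mulVec_single_one] at h3
    simpa [Matrix.toBlocks₂₁, Matrix.mul_assoc] using h3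
  have h21' : ∀ a, (B' * X.ρ a * B).toBlocks₂₁ = 0 := by
    intro a
    ext i j
    have h2 : X.ρ a *ᵥ (B *ᵥ Pi.single (Sum.inl j) 1) ∈ U := hU a _ (hBm j)
    rw [hBU] at h2
    have h3 := h2 i
    rw [Matrix.mulVec_mulVec, Matrix.mulVec_mulVec, Matrix.mulVec_single_one] at h3
    simpa [Matrix.toBlocks₂₁, Matrix.mul_assoc] using h3
  let Z := X.conj C' C B B' hC hB hB'
  refine ⟨tri1 (T := T) (y := y) Z.x Z.ρ Z.V' Z.left Z.compat h21 h21',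
    tri2 (T := T) (y := y) Z.x Z.ρ Z.V' Z.left Z.compat h21 h21', ⟨?_, ?_, ?_⟩, ?_, ?_⟩
  · refine (Rel.conj X.x C' C B B' hC' hC hB hB').trans ?_
    have h5 := Rel.degen (fun l => (C' * X.x l * B).toBlocks₁₁) (fun l => (C' * X.x l * B).toBlocks₁₂)
      (fun l => (C' * X.x l * B).toBlocks₂₂)
    have h6 : (fun l => fromBlocks (C' * X.x l * B).toBlocks₁₁ (C' * X.x l * B).toBlocks₁₂ 0 (C' * X.x l * B).toBlocks₂₂)
      = fun l => C' * X.x l * B := by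
      funext l
      rw [← h21 l]; exact fromBlocks_toBlocks _
    rw [h6] at h5
    exact h5
  · intro a
    change _ = (B' * X.ρ a * B).toBlocks₁₁.det * (B' * X.ρ a * B).toBlocks₂₂.det
    rw [← Matrix.det_fromBlocks_zero₂₁ _ (B' * X.ρ a * B).toBlocks₁₂, ← h21' a, fromBlocks_toBlocks,
      Matrix.det_conj_of_mul_eq_one hB' hB]
  · change n = Fintype.card (Fin u) + Fintype.card (Fin (n - u))
    simp; omega
  · change 0 < Fintype.card (Fin u)
    simpa using hpos
  · change 0 < Fintype.card (Fin (n - u))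
    simpa using hlt

/-- irreducible -/
def Irr (X : Rep T y) : Prop := 0 < X.card ∧ ∀ U, X.Stable U → U = ⊥ ∨ U = ⊤

theorem burnside [IsAlgClosed K] (X : Rep T y) (hX : X.Irr) : Function.Surjective X.ρ := by
  classical
  letI : Module 𝒜 (X.ι → K) := Module.compHom (X.ι → K) ((Matrix.toLinAlgEquiv' : Matrix X.ι X.ι K ≃ₐ[K] _).toAlgHom.comp X.ρ).toRingHom
  have hsm : ∀ (a : 𝒜) (u : X.ι → K), a • u = X.ρ a *ᵥ u := fun a u => rfl
  haveI : IsScalarTower K 𝒜 (X.ι → K) := ⟨fun c a u => by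
    simp only [hsm, map_smul, Matrix.smul_mulVec]⟩
  haveI : Nonempty X.ι := Fintype.card_pos_iff.1 hX.1
  haveI : IsSimpleModule 𝒜 (X.ι → K) := by
    rw [isSimpleModule_iff]
    refine { toNontrivial := ?_, eq_bot_or_eq_top := ?_ }
    · infer_instance
    intro U
    rcases hX.2 (U.restrictScalars K) (fun a u hu => U.smul_mem a hu) with h | h
    · left
      exact (Submodule.restrictScalars_eq_bot_iff _ _ _).1 h
    · right
      exact (Submodule.restrictScalars_eq_top_iff _ _ _).1 h
  intro M
  have hb := IsSimpleModule.algebraMap_end_bijective_of_isAlgClosed (A := 𝒜) (V := X.ι → K) K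
  let f : Module.End (Module.End 𝒜 (X.ι → K)) (X.ι → K) :=
    { toFun := fun u => M *ᵥ u
      map_add' := fun u v => Matrix.mulVec_add _ _ _
      map_smul' := fun g u => by
        obtain ⟨c, rfl⟩ := hb.2 g
        simp only [RingHom.id_apply, Module.End.smul_def, Module.algebraMap_end_apply, Matrix.mulVec_smul] }
  obtain ⟨r, hr⟩ := jacobson_density f (Finset.univ.image fun i : X.ι => (Pi.single i 1 : X.ι → K))
  refine ⟨r, ?_⟩
  ext i j
  have h1 := hr (Pi.single j 1) (Finset.mem_image_of_mem _ (Finset.mem_univ j))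
  have h2 : M *ᵥ Pi.single j 1 = X.ρ r *ᵥ Pi.single j 1 := h1
  have := congrFun h2 i
  simpa using this.symm

end rep2
end Rep
end Sep

open MvPolynomial Matrix

namespace Sep
namespace Rep
section rep3
variable {K : Type} [Field K] {m : ℕ} {δ : Type} [Fintype δ] [DecidableEq δ]
  {𝒜 : Type} [Ring 𝒜] [Algebra K 𝒜] {T : Fin m → Matrix δ δ K} {y : Fin m → δ → δ → 𝒜}

theorem sum_single {ι : Type} [Fintype ι] [DecidableEq ι] (N : Matrix ι ι K) (i j : ι) :
    ∑ p : ι, Matrix.single p i (1 : K) * N * Matrix.single j p (1 : K) = N i j • (1 : Matrix ι ι K) := by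
  have : ∀ p : ι, Matrix.single p i (1 : K) * N * Matrix.single j p (1 : K) = N i j • Matrix.single p p (1 : K) := by
    intro p
    ext a b
    simp [Matrix.single_mul_mul_single, Matrix.single_apply]
  simp only [this, ← Finset.smul_sum, Matrix.sum_single_one]

theorem dichotomy [IsAlgClosed K] (X Y : Rep T y) (hX : X.Irr) (hY : Y.Irr) :
    (∃ a, X.ρ a = 0 ∧ Y.ρ a = 1) ∨ ∃ (φ : Matrix Y.ι X.ι K) (φ' : Matrix X.ι Y.ι K), φ * φ' = 1 ∧ φ' * φ = 1 ∧
      ∀ a, φ * X.ρ a = Y.ρ a * φ := by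
  classical
  haveI : Nonempty X.ι := Fintype.card_pos_iff.1 hX.1
  haveI : Nonempty Y.ι := Fintype.card_pos_iff.1 hY.1
  have sX := X.burnside hX
  have sY := Y.burnside hY
  by_cases h : ∀ a, X.ρ a = 0 → Y.ρ a = 0
  · right
    have h' : ∀ a b, X.ρ a = X.ρ b → Y.ρ a = Y.ρ b := by
      intro a b hab
      have := h (a - b) (by rw [map_sub, hab, sub_self])
      rwa [map_sub, sub_eq_zero] at this
    choose g hg using sX
    let f : Matrix X.ι X.ι K →ₐ[K] Matrix Y.ι Y.ι K := AlgHom.ofLinearMap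
      { toFun := fun M => Y.ρ (g M)
        map_add' := fun M N => by
          rw [← map_add]; apply h'; simp [hg]
        map_smul' := fun c M => by
          rw [RingHom.id_apply, ← map_smul]; apply h'; simp [hg] }
      (by
        rw [← map_one Y.ρ]; apply h'; simp [hg])
      (fun M N => by
        change Y.ρ _ = Y.ρ _ * Y.ρ _
        rw [← map_mul]; apply h'; simp [hg])
    have hf : ∀ a, f (X.ρ a) = Y.ρ a := fun a => h' _ _ (hg _)
    have finj : Function.Injective f := RingHom.injective (f : Matrix X.ι X.ι K →+* Matrix Y.ι Y.ι K)
    have fsurj : Function.Surjective f := fun N => by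
      obtain ⟨a, rfl⟩ := sY N
      exact ⟨_, hf a⟩
    let F : Matrix X.ι X.ι K ≃ₐ[K] Matrix Y.ι Y.ι K := AlgEquiv.ofBijective f ⟨finj, fsurj⟩
    let G : Module.End K (X.ι → K) ≃ₐ[K] Module.End K (Y.ι → K) :=
      (Matrix.toLinAlgEquiv'.symm.trans F).trans Matrix.toLinAlgEquiv'
    obtain ⟨t, ht⟩ := G.eq_linearEquivConjAlgEquiv
    refine ⟨LinearMap.toMatrix' t.toLinearMap, LinearMap.toMatrix' t.symm.toLinearMap, ?_, ?_, ?_⟩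
    · rw [← LinearMap.toMatrix'_comp]; simp
    · rw [← LinearMap.toMatrix'_comp]; simp
    · intro a
      have h1 : G (Matrix.toLin' (X.ρ a)) = Matrix.toLin' (Y.ρ a) := by
        change Matrix.toLinAlgEquiv' (f (Matrix.toLinAlgEquiv'.symm (Matrix.toLinAlgEquiv' (X.ρ a)))) = _
        rw [AlgEquiv.symm_apply_apply, hf]
        rfl
      rw [ht, LinearEquiv.conjAlgEquiv_apply] at h1
      have h2 : t.toLinearMap ∘ₗ Matrix.toLin' (X.ρ a) = Matrix.toLin' (Y.ρ a) ∘ₗ t.toLinearMap := by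
        rw [← h1]
        ext; simp
      have h3 := congrArg LinearMap.toMatrix' h2
      rwa [LinearMap.toMatrix'_comp, LinearMap.toMatrix'_comp, LinearMap.toMatrix'_toLin', LinearMap.toMatrix'_toLin'] at h3
  · left
    push Not at h
    obtain ⟨a, ha, ha'⟩ := h
    obtain ⟨i, j, hij⟩ : ∃ i j, Y.ρ a i j ≠ 0 := by
      by_contra hc
      push Not at hc
      exact ha' (Matrix.ext hc)
    choose b hb using fun p => sY (Matrix.single p i 1)
    choose c hc using fun p => sY (Matrix.single j p 1)
    refine ⟨(Y.ρ a i j)⁻¹ • ∑ p, b p * a * c p, ?_, ?_⟩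
    · simp [ha]
    · simp only [map_smul, map_sum, map_mul, hb, hc, sum_single, smul_smul]
      rw [inv_mul_cancel₀ hij, one_smul]

theorem inter1 [Nonempty δ] (X Y : Rep T y) (φ : Matrix Y.ι X.ι K) (h : ∀ a, φ * X.ρ a = Y.ρ a * φ) :
    ∃ q : Matrix Y.ι X.ι K, ∀ l, q * X.x l = Y.x l * φ := by
  obtain ⟨j⟩ := ‹Nonempty δ›
  refine ⟨∑ h, Vb T Y.x j h * φ * X.V' h j, fun l => ?_⟩
  have e1 : ∀ k, (∑ h, Vb T Y.x j h * φ * X.V' h k) * (∑ i, Vb T X.x k i * X.ρ (y l i j)) =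
      ∑ h, ∑ i, Vb T Y.x j h * φ * (X.V' h k * Vb T X.x k i) * X.ρ (y l i j) := by
    intro k
    rw [Matrix.sum_mul]
    refine Finset.sum_congr rfl fun h _ => ?_
    rw [Matrix.mul_sum]
    refine Finset.sum_congr rfl fun i _ => ?_
    simp only [Matrix.mul_assoc]
  have e2 : ∑ k, (∑ h, Vb T Y.x j h * φ * X.V' h k) * (∑ i, Vb T X.x k i * X.ρ (y l i j)) =
      (∑ h, Vb T Y.x j h * φ * X.V' h j) * X.x l := by
    simp only [X.compat]
    rw [Finset.sum_eq_single j]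
    · simp
    · intro b _ hb; simp [hb]
    · simp
  rw [← e2]
  simp only [e1]
  rw [Finset.sum_comm]
  have e3 : ∀ h, ∑ k, ∑ i, Vb T Y.x j h * φ * (X.V' h k * Vb T X.x k i) * X.ρ (y l i j) =
      Vb T Y.x j h * Y.ρ (y l h j) * φ := by
    intro h
    rw [Finset.sum_comm]
    simp only [← Matrix.sum_mul, ← Matrix.mul_sum, X.left]
    rw [Finset.sum_eq_single h]
    · rw [if_pos rfl, Matrix.mul_one, Matrix.mul_assoc, ‹∀ a, φ * X.ρ a = Y.ρ a * φ›, Matrix.mul_assoc]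
    · intro b _ hb; rw [if_neg (Ne.symm hb)]; simp
    · simp
  simp only [e3, ← Matrix.sum_mul, Y.compat, if_true]

theorem cancelx [Nonempty δ] (X : Rep T y) {κ : Type} (r s : Matrix κ X.ι K) (h : ∀ l, r * X.x l = s * X.x l) : r = s := by
  obtain ⟨j⟩ := ‹Nonempty δ›
  have h1 : ∀ k i, r * Vb T X.x k i = s * Vb T X.x k i := by
    intro k i
    simp [Vb, Matrix.mul_sum, h]
  have h2 := X.right j j
  rw [if_pos rfl] at h2
  have : r * ∑ h, Vb T X.x j h * X.V' h j = s * ∑ h, Vb T X.x j h * X.V' h j := by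
    simp only [Matrix.mul_sum, ← Matrix.mul_assoc, h1]
  rwa [h2, Matrix.mul_one, Matrix.mul_one] at this

theorem inter [Nonempty δ] (X Y : Rep T y) (φ : Matrix Y.ι X.ι K) (φ' : Matrix X.ι Y.ι K) (h1 : φ * φ' = 1)
    (h2 : φ' * φ = 1) (h : ∀ a, φ * X.ρ a = Y.ρ a * φ) : Rel X.x Y.x ∧ ∀ a, (X.ρ a).det = (Y.ρ a).det := by
  have h' : ∀ a, φ' * Y.ρ a = X.ρ a * φ' := by
    intro a
    calc φ' * Y.ρ a = φ' * (Y.ρ a * φ) * φ' := by rw [Matrix.mul_assoc, Matrix.mul_assoc, h1, Matrix.mul_one]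
      _ = φ' * φ * X.ρ a * φ' := by rw [← h]; simp only [Matrix.mul_assoc]
      _ = _ := by rw [h2, Matrix.one_mul]
  obtain ⟨q, hq⟩ := inter1 X Y φ h
  obtain ⟨q', hq'⟩ := inter1 Y X φ' h'
  have e1 : q' * q = 1 := by
    apply X.cancelx
    intro l
    rw [Matrix.mul_assoc, hq, ← Matrix.mul_assoc, hq', Matrix.mul_assoc, h2, Matrix.mul_one, Matrix.one_mul]
  have e2 : q * q' = 1 := by
    apply Y.cancelx
    intro l
    rw [Matrix.mul_assoc, hq', ← Matrix.mul_assoc, hq, Matrix.mul_assoc, h1, Matrix.mul_one, Matrix.one_mul]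
  constructor
  · have := Rel.conj X.x q q' φ' φ e2 e1 h2 h1
    have h5 : (fun l => q * X.x l * φ') = Y.x := by
      funext l
      rw [hq, Matrix.mul_assoc, h1, Matrix.mul_one]
    rwa [h5] at this
  · intro a
    rw [← Matrix.det_conj_of_mul_eq_one (N := X.ρ a) h1 h2, h, Matrix.mul_assoc, h1, Matrix.mul_one]

end rep3
end Rep
end Sep

open MvPolynomial Matrix

namespace Sep
namespace Rep
section rep4
variable {K : Type} [Field K] {m : ℕ} {δ : Type} [Fintype δ] [DecidableEq δ]
  {𝒜 : Type} [Ring 𝒜] [Algebra K 𝒜] {T : Fin m → Matrix δ δ K} {y : Fin m → δ → δ → 𝒜}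

/-- the empty representation -/
def nil : Rep T y where
  ι := Empty
  x _ := 0
  ρ := AlgHom.ofLinearMap 0 (Subsingleton.elim _ _) (fun _ _ => Subsingleton.elim _ _)
  V' _ _ := 0
  left _ _ := Subsingleton.elim _ _
  compat _ _ _ := Subsingleton.elim _ _

theorem dec_nil (X S : Rep T y) (h : Rel X.x S.x) (h' : ∀ a, (X.ρ a).det = (S.ρ a).det) (hc : X.card = S.card) :
    Dec X S nil := by
  refine ⟨h.trans ?_, ?_, ?_⟩
  · have h5 := Rel.reindex S.x (Equiv.sumEmpty S.ι Empty)
    have h6 : (fun l => (S.x l).submatrix (Equiv.sumEmpty S.ι Empty) (Equiv.sumEmpty S.ι Empty)) =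
      (fun l => fromBlocks (S.x l) 0 0 ((nil : Rep T y).x l)) := by
      funext l
      ext (i | i) (j | j)
      · rfl
      · exact j.elim
      · exact i.elim
      · exact i.elim
    rw [h6] at h5
    exact h5
  · intro a
    have : ((nil : Rep T y).ρ a).det = 1 := Matrix.det_isEmpty (n := Empty)
    rw [this, mul_one, h']
  · have : (nil : Rep T y).card = 0 := rfl
    rw [this, hc]; rfl

theorem extract [IsAlgClosed K] [Nonempty δ] : ∀ (n : ℕ) (X : Rep T y), X.card = n → 0 < n →
    ∃ S R, S.Irr ∧ Dec X S R := by
  intro n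
  induction n using Nat.strong_induction_on with
  | _ n ih =>
    intro X hX hn
    by_cases hi : X.Irr
    · exact ⟨X, nil, hi, dec_nil X X (Rel.refl _) (fun _ => rfl) rfl⟩
    · unfold Irr at hi
      push Not at hi
      obtain ⟨U, hU, h0, h1⟩ := hi (by omega)
      obtain ⟨X1, X2, hd, c1, c2⟩ := X.split U hU h0 h1
      have := hd.2.2
      obtain ⟨S, R, hS, hD⟩ := ih X1.card (by omega) X1 rfl c1
      exact ⟨S, R.add X2, hS, hd.assoc hD⟩

theorem card_eq_of_inv {ι κ : Type} [Fintype ι] [Fintype κ] [DecidableEq ι] [DecidableEq κ] (φ : Matrix κ ι K) (φ' : Matrix ι κ K)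
    (h1 : φ * φ' = 1) (h2 : φ' * φ = 1) : Fintype.card ι = Fintype.card κ := by
  have h3 := congrArg Matrix.rank h1
  have h4 := congrArg Matrix.rank h2
  rw [Matrix.rank_one] at h3 h4
  have h5 := Matrix.rank_mul_le φ φ'
  have h6 := Matrix.rank_mul_le φ' φ
  have h7 := Matrix.rank_le_card_width φ
  have h8 := Matrix.rank_le_card_height φ
  omega

theorem combine [Infinite K] {ι κ : Type} [Fintype ι] [Fintype κ] [DecidableEq ι] [DecidableEq κ]
    (M N : Matrix ι ι K) (P Q : Matrix κ κ K) (hM : M.det ≠ 0) (hQ : Q.det ≠ 0) :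
    ∃ s : K, (s • N + M).det ≠ 0 ∧ (s • Q + P).det ≠ 0 := by
  let p := ((Polynomial.X : Polynomial K) • N.map Polynomial.C + M.map Polynomial.C).det
  let q := ((Polynomial.X : Polynomial K) • Q.map Polynomial.C + P.map Polynomial.C).det
  have hp : p ≠ 0 := fun h => by
    have := Polynomial.coeff_det_X_add_C_zero N M
    rw [show ((Polynomial.X : Polynomial K) • N.map Polynomial.C + M.map Polynomial.C).det = 0 from h] at this
    exact hM (by simpa using this.symm)
  have hq : q ≠ 0 := fun h => by
    have := Polynomial.coeff_det_X_add_C_card Q P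
    rw [show ((Polynomial.X : Polynomial K) • Q.map Polynomial.C + P.map Polynomial.C).det = 0 from h] at this
    exact hQ (by simpa using this.symm)
  obtain ⟨s, hs⟩ : ∃ s, (p * q).eval s ≠ 0 := by
    by_contra hc
    push Not at hc
    exact mul_ne_zero hp hq (Polynomial.funext (by simpa using hc))
  have key : ∀ (μ : Type) [Fintype μ] [DecidableEq μ] (A B : Matrix μ μ K),
      ((Polynomial.X : Polynomial K) • A.map Polynomial.C + B.map Polynomial.C).det.eval s = (s • A + B).det := by
    intro μ _ _ A B
    rw [← Polynomial.coe_evalRingHom, RingHom.map_det]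
    congr 1
    ext i j
    simp; ring
  rw [Polynomial.eval_mul] at hs
  refine ⟨s, ?_, ?_⟩
  · rw [← key]; exact left_ne_zero_of_mul hs
  · rw [← key]; exact right_ne_zero_of_mul hs

theorem BN [IsAlgClosed K] [Nonempty δ] (S : Rep T y) (hS : S.Irr) : ∀ (n : ℕ) (Y : Rep T y), Y.card = n →
    (∃ a, S.ρ a = 0 ∧ (Y.ρ a).det ≠ 0) ∨ ∃ R, Dec Y S R := by
  intro n
  induction n using Nat.strong_induction_on with
  | _ n ih =>
    intro Y hY
    by_cases hi : Y.Irr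
    · rcases dichotomy S Y hS hi with ⟨a, h1, h2⟩ | ⟨φ, φ', h1, h2, h3⟩
      · left
        exact ⟨a, h1, by rw [h2]; simp⟩
      · right
        obtain ⟨h4, h5⟩ := inter S Y φ φ' h1 h2 h3
        exact ⟨nil, dec_nil Y S h4.symm (fun a => (h5 a).symm) (card_eq_of_inv φ φ' h1 h2).symm⟩
    · by_cases hn : n = 0
      · left
        refine ⟨0, by simp, ?_⟩
        haveI : IsEmpty Y.ι := Fintype.card_eq_zero_iff.1 (hY.trans hn)
        rw [Matrix.det_isEmpty]; exact one_ne_zero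
      · unfold Irr at hi
        push Not at hi
        obtain ⟨U, hU, h0, h1⟩ := hi (by omega)
        obtain ⟨X1, X2, hd, c1, c2⟩ := Y.split U hU h0 h1
        have := hd.2.2
        rcases ih X1.card (by omega) X1 rfl with ⟨a1, ha1, ha1'⟩ | ⟨R, hR⟩
        · rcases ih X2.card (by omega) X2 rfl with ⟨a2, ha2, ha2'⟩ | ⟨R, hR⟩
          · left
            obtain ⟨s, hs1, hs2⟩ := combine (X1.ρ a1) (X1.ρ a2) (X2.ρ a1) (X2.ρ a2) ha1' ha2'
            refine ⟨s • a2 + a1, by simp [ha1, ha2], ?_⟩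
            rw [hd.2.1]
            simp only [map_add, map_smul]
            exact mul_ne_zero hs1 hs2
          · right
            exact ⟨_, hd.swap.assoc hR⟩
        · right
          exact ⟨_, hd.assoc hR⟩

theorem det_cancel [Infinite K] {ι κ μ : Type} [Fintype ι] [Fintype κ] [DecidableEq ι] [DecidableEq κ] [Fintype μ] [DecidableEq μ]
    (S : Matrix ι ι K) (R : Matrix κ κ K) (R' : Matrix μ μ K)
    (h : ∀ s : K, (Matrix.scalar ι s - S).det * (Matrix.scalar κ s - R).det = (Matrix.scalar ι s - S).det * (Matrix.scalar μ s - R').det) :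
    ∀ s : K, (Matrix.scalar κ s - R).det = (Matrix.scalar μ s - R').det := by
  have h1 : S.charpoly * R.charpoly = S.charpoly * R'.charpoly := by
    apply Polynomial.funext
    intro s
    simp only [Polynomial.eval_mul, Matrix.eval_charpoly]
    exact h s
  have h2 := mul_left_cancel₀ (Matrix.charpoly_monic S).ne_zero h1
  intro s
  rw [← Matrix.eval_charpoly, ← Matrix.eval_charpoly, h2]

theorem main [IsAlgClosed K] [Nonempty δ] : ∀ (n : ℕ) (X Y : Rep T y), X.card = n →
    (∀ a, (X.ρ a).det = (Y.ρ a).det) → Rel X.x Y.x := by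
  intro n
  induction n using Nat.strong_induction_on with
  | _ n ih =>
    intro X Y hX hd
    by_cases hn : n = 0
    · haveI : IsEmpty X.ι := Fintype.card_eq_zero_iff.1 (hX.trans hn)
      haveI : IsEmpty Y.ι := by
        by_contra hc
        rw [not_isEmpty_iff] at hc
        have := hd 0
        simp at this
      have h5 := Rel.reindex X.x (Equiv.equivOfIsEmpty Y.ι X.ι)
      have h6 : (fun l => (X.x l).submatrix (Equiv.equivOfIsEmpty Y.ι X.ι) (Equiv.equivOfIsEmpty Y.ι X.ι)) = Y.x := by
        funext l
        exact Subsingleton.elim _ _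
      rwa [h6] at h5
    · obtain ⟨S, R, hS, hD⟩ := extract n X hX (by omega)
      rcases BN S hS _ Y rfl with ⟨a, ha, ha'⟩ | ⟨R', hD'⟩
      · exfalso
        apply ha'
        haveI : Nonempty S.ι := Fintype.card_pos_iff.1 hS.1
        rw [← hd, hD.2.1, ha, Matrix.det_zero, zero_mul]
      · have hR : Rel R.x R'.x := by
          refine ih R.card ?_ R R' rfl ?_
          · have := hD.2.2
            have := hS.1
            omega
          · intro a
            have h1 := det_cancel (S.ρ (-a)) (R.ρ (-a)) (R'.ρ (-a)) (fun s => by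
              have h2 := hd (algebraMap K 𝒜 s - (-a))
              rw [hD.2.1, hD'.2.1] at h2
              simp only [map_sub, AlgHom.commutes, Matrix.algebraMap_eq_diagonal] at h2
              exact h2) 0
            simpa using h1
        exact hD.1.trans ((hR.block S.x).trans hD'.1.symm)

end rep4
end Rep
end Sep

open MvPolynomial Matrix

namespace Sep
section pf
variable {K : Type} [Field K] {n m : ℕ}

/-- evaluation of polynomials as functions -/
noncomputable def evF (K : Type) [Field K] (n m : ℕ) : MvPolynomial (Fin m × Fin n × Fin n) K →ₐ[K] ((Fin m → Matrix (Fin n) (Fin n) K) → K) :=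
  aeval (fun p x => x p.1 p.2.1 p.2.2)

theorem evF_apply (p : MvPolynomial (Fin m × Fin n × Fin n) K) (x) : evF K n m p x = aeval (matCoords x) p := by
  have : (Pi.evalAlgHom K (fun _ : (Fin m → Matrix (Fin n) (Fin n) K) => K) x).comp (evF K n m) = aeval (matCoords x) := by
    ext i
    simp [evF, matCoords]
  exact DFunLike.congr_fun this p

/-- polynomial functions -/
noncomputable def Pf (K : Type) [Field K] (n m : ℕ) : Subalgebra K ((Fin m → Matrix (Fin n) (Fin n) K) → K) := (evF K n m).range

theorem Pf_coord (l i j) : (fun x : Fin m → Matrix (Fin n) (Fin n) K => x l i j) ∈ Pf K n m :=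
  ⟨X (l, i, j), by simp [evF]⟩

theorem Pf_const (c : K) : (fun _ : Fin m → Matrix (Fin n) (Fin n) K => c) ∈ Pf K n m :=
  (Pf K n m).algebraMap_mem c

theorem Pf_sum {ι : Type} (s : Finset ι) (f : ι → (Fin m → Matrix (Fin n) (Fin n) K) → K) (h : ∀ i ∈ s, f i ∈ Pf K n m) :
    (fun x => ∑ i ∈ s, f i x) ∈ Pf K n m := by
  have := (Pf K n m).sum_mem h
  rwa [Finset.sum_fn] at this

theorem Pf_prod {ι : Type} (s : Finset ι) (f : ι → (Fin m → Matrix (Fin n) (Fin n) K) → K) (h : ∀ i ∈ s, f i ∈ Pf K n m) :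
    (fun x => ∏ i ∈ s, f i x) ∈ Pf K n m := by
  have := (Pf K n m).prod_mem h
  rwa [Finset.prod_fn] at this

theorem Pf_mul {f g : (Fin m → Matrix (Fin n) (Fin n) K) → K} (hf : f ∈ Pf K n m) (hg : g ∈ Pf K n m) :
    (fun x => f x * g x) ∈ Pf K n m := (Pf K n m).mul_mem hf hg

theorem Pf_det {ι : Type} [Fintype ι] [DecidableEq ι] (M : (Fin m → Matrix (Fin n) (Fin n) K) → Matrix ι ι K)
    (h : ∀ i j, (fun x => M x i j) ∈ Pf K n m) : (fun x => (M x).det) ∈ Pf K n m := by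
  simp only [Matrix.det_apply']
  exact Pf_sum _ _ fun σ _ => Pf_mul (Pf_const _) (Pf_prod _ _ fun i _ => h _ _)

theorem Pf_adj {ι : Type} [Fintype ι] [DecidableEq ι] (M : (Fin m → Matrix (Fin n) (Fin n) K) → Matrix ι ι K)
    (h : ∀ i j, (fun x => M x i j) ∈ Pf K n m) (i j) : (fun x => (M x).adjugate i j) ∈ Pf K n m := by
  simp only [Matrix.adjugate_apply]
  apply Pf_det
  intro a b
  by_cases hab : a = j
  · subst hab
    simp only [Matrix.updateRow_self]
    exact Pf_const _
  · simp only [Matrix.updateRow_ne hab]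
    exact h _ _

theorem scale {σ : Type} [Fintype σ] {p : MvPolynomial σ K} {d : ℕ} (hp : p.IsHomogeneous d) (z : σ → K) (c : K) :
    aeval (fun i => c * z i) p = c ^ d * aeval z p := by
  rw [aeval_def, aeval_def, eval₂_eq', eval₂_eq', Finset.mul_sum]
  refine Finset.sum_congr rfl fun e he => ?_
  have h1 : ∑ i, e i = d := by
    have := hp (mem_support_iff.1 he)
    rw [← this, Finsupp.weight_apply, Finsupp.sum_fintype]
    · simp
    · simp
  simp only [mul_pow]
  rw [Finset.prod_mul_distrib, Finset.prod_pow_eq_pow_sum, h1]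
  ring

theorem toInv [Infinite K] (G : (Fin m → Matrix (Fin n) (Fin n) K) → K) (hG : G ∈ Pf K n m) (e : ℕ)
    (he : ∀ (c : K) x, G (c • x) = c ^ e * G x)
    (hi : ∀ (A B : Matrix (Fin n) (Fin n) K) x, A.det = 1 → B.det = 1 → G (fun l => A * x l * B) = G x) :
    ∃ g ∈ matrixSemiInvariants K n m, g.IsHomogeneous e ∧ ∀ x, aeval (matCoords x) g = G x := by
  obtain ⟨p, rfl⟩ := hG
  have key : ∀ x, aeval (matCoords x) (homogeneousComponent e p) = evF K n m p x := by
    intro x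
    let q : Polynomial K := ∑ d ∈ Finset.range (p.totalDegree + 1),
      Polynomial.C (aeval (matCoords x) (homogeneousComponent d p)) * Polynomial.X ^ d
    have hq : q = Polynomial.C (evF K n m p x) * Polynomial.X ^ e := by
      apply Polynomial.funext
      intro c
      have h1 := he c x
      have h2 : matCoords (c • x) = fun i => c * matCoords x i := by
        funext i; simp [matCoords]
      have h3 : evF K n m p (c • x) = q.eval c := by
        rw [evF_apply, h2]
        conv_lhs => rw [← sum_homogeneousComponent p]
        simp only [q, map_sum, Polynomial.eval_finset_sum]
        refine Finset.sum_congr rfl fun d _ => ?_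
        rw [scale (homogeneousComponent_isHomogeneous d p), Polynomial.eval_mul, Polynomial.eval_C, Polynomial.eval_pow,
          Polynomial.eval_X, mul_comm]
      change evF K n m p (c • x) = _ at h1
      rw [← h3, h1, Polynomial.eval_mul, Polynomial.eval_C, Polynomial.eval_pow,
          Polynomial.eval_X, mul_comm]
      rfl
    have h4 := congrArg (fun r => Polynomial.coeff r e) hq
    simp only [q, Polynomial.finset_sum_coeff, Polynomial.coeff_C_mul_X_pow] at h4
    simp only [if_true] at h4
    rw [← h4, Finset.sum_ite_eq]
    split_ifs with h5
    · rfl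
    · rw [homogeneousComponent_eq_zero, map_zero]
      simp at h5; omega
  refine ⟨homogeneousComponent e p, ?_, homogeneousComponent_isHomogeneous e p, key⟩
  simp only [matrixSemiInvariants, Algebra.mem_iInf, AlgHom.mem_equalizer]
  intro A B x
  rw [key, key]
  exact hi A.val (B⁻¹).val x A.2 (B⁻¹).2

theorem isInv [Infinite K] {f : MvPolynomial (Fin m × Fin n × Fin n) K} (hf : f ∈ matrixSemiInvariants K n m) :
    IsInv (fun x : Fin m → Matrix (Fin n) (Fin n) K => aeval (matCoords x) f) := by
  simp only [matrixSemiInvariants, Algebra.mem_iInf, AlgHom.mem_equalizer] at hf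
  constructor
  · intro A B x hA hB
    obtain ⟨B', rfl⟩ : ∃ B' : SpecialLinearGroup (Fin n) K, B'.val = B := ⟨⟨B, hB⟩, rfl⟩
    obtain ⟨A', rfl⟩ : ∃ A' : SpecialLinearGroup (Fin n) K, A'.val = A := ⟨⟨A, hA⟩, rfl⟩
    have := hf A' B'⁻¹ x
    rw [inv_inv] at this
    exact this
  · intro X c h
    let P : Polynomial K := aeval (fun p : Fin m × Fin n × Fin n => X p.1 p.2.1 p.2.2) f
    have hP : ∀ s, P.eval s = aeval (matCoords fun l => (X l).map (Polynomial.eval s)) f := by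
      intro s
      have : (Polynomial.aeval s).comp (aeval (fun p : Fin m × Fin n × Fin n => X p.1 p.2.1 p.2.2)) =
          (aeval (matCoords fun l => (X l).map (Polynomial.eval s)) : MvPolynomial _ K →ₐ[K] K) := by
        ext i
        simp [matCoords, Polynomial.aeval_def, Polynomial.eval₂_eq_eval_map]
      have h2 := DFunLike.congr_fun this f
      rw [← h2]
      simp [P, Polynomial.aeval_def, Polynomial.eval₂_eq_eval_map]
    have h1 : (P - Polynomial.C c) * Polynomial.X = 0 := by
      apply Polynomial.funext
      intro s
      by_cases hs : s = 0
      · simp [hs]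
      · have := h s hs
        beta_reduce at this
        rw [← hP] at this
        simp [this]
    have h2 : P = Polynomial.C c := by
      rcases mul_eq_zero.1 h1 with h | h
      · exact sub_eq_zero.1 h
      · exact absurd h Polynomial.X_ne_zero
    beta_reduce
    rw [← hP, h2]; simp

end pf
end Sep

open MvPolynomial Matrix
open scoped Kronecker

namespace Sep
section eq
variable {K : Type} [Field K] {n m d : ℕ}

theorem Big_eq {ι κ δ ε : Type} (x : Fin m → Matrix ι κ K) (T : Fin m → Matrix δ ε K) :
    Big x T = ∑ l, x l ⊗ₖ T l := by
  ext p q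
  simp [Big_apply, Matrix.sum_apply, Matrix.kroneckerMap_apply]

theorem Big_act {ι δ : Type} [Fintype ι] [Fintype δ] [DecidableEq δ] (x : Fin m → Matrix ι ι K) (T : Fin m → Matrix δ δ K)
    (A B : Matrix ι ι K) :
    Big (fun l => A * x l * B) T = (A ⊗ₖ (1 : Matrix δ δ K)) * Big x T * (B ⊗ₖ (1 : Matrix δ δ K)) := by
  simp only [Big_eq, Matrix.mul_sum, Matrix.sum_mul]
  refine Finset.sum_congr rfl fun l _ => ?_
  rw [← Matrix.mul_kronecker_mul, ← Matrix.mul_kronecker_mul, Matrix.one_mul, Matrix.mul_one]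

theorem Big_smul {ι δ : Type} (x : Fin m → Matrix ι ι K) (T : Fin m → Matrix δ δ K) (c : K) :
    Big (c • x) T = c • Big x T := by
  ext p q
  simp [Big_apply, Finset.mul_sum, mul_assoc]

theorem Big_comb {ι δ : Type} (x : Fin m → Matrix ι ι K) (T S : Fin m → Matrix δ δ K) (c : K) :
    Big x (c • S + T) = c • Big x S + Big x T := by
  ext p q
  simp only [Big_apply, Pi.add_apply, Pi.smul_apply, Matrix.add_apply, Matrix.smul_apply, smul_eq_mul, Finset.mul_sum]
  rw [← Finset.sum_add_distrib]
  refine Finset.sum_congr rfl fun l _ => ?_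
  ring

theorem fT_act (T : Fin m → Matrix (Fin d) (Fin d) K) (x : Fin m → Matrix (Fin n) (Fin n) K) (A B : Matrix (Fin n) (Fin n) K) :
    (Big (fun l => A * x l * B) T).det = (A.det * B.det) ^ d * (Big x T).det := by
  rw [Big_act, Matrix.det_mul, Matrix.det_mul, Matrix.det_kronecker, Matrix.det_kronecker]
  simp
  ring

theorem fT_smul (T : Fin m → Matrix (Fin d) (Fin d) K) (x : Fin m → Matrix (Fin n) (Fin n) K) (c : K) :
    (Big (c • x) T).det = c ^ (n * d) * (Big x T).det := by
  rw [Big_smul, Matrix.det_smul]; simp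

theorem Big_Pf (T : Fin m → Matrix (Fin d) (Fin d) K) (p q) :
    (fun x : Fin m → Matrix (Fin n) (Fin n) K => Big x T p q) ∈ Pf K n m := by
  simp only [Big_apply]
  exact Pf_sum _ _ fun l _ => Pf_mul (Pf_coord _ _ _) (Pf_const _)

theorem fT_inv [Infinite K] (T : Fin m → Matrix (Fin d) (Fin d) K) :
    ∃ g ∈ matrixSemiInvariants K n m, g.IsHomogeneous (n * d) ∧ ∀ x, aeval (matCoords x) g = (Big x T).det := by
  refine toInv (fun x => (Big x T).det) (Pf_det _ (Big_Pf T)) _ (fun c x => fT_smul T x c) ?_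
  intro A B x hA hB
  rw [fT_act, hA, hB]; simp

/-- equivariant matrix functions, homogeneous of degree `e` -/
noncomputable def Cv (K : Type) [Field K] (n m e : ℕ) : Submodule K ((Fin m → Matrix (Fin n) (Fin n) K) → Matrix (Fin n) (Fin n) K) where
  carrier := {Φ | (∀ i j, (fun x => Φ x i j) ∈ Pf K n m) ∧ (∀ (c : K) x, Φ (c • x) = c ^ e • Φ x) ∧
    ∀ (A B : Matrix (Fin n) (Fin n) K) x, A.det = 1 → B.det = 1 → B * Φ (fun l => A * x l * B) = Φ x * B}
  add_mem' {f g} hf hg := ⟨fun i j => (Pf K n m).add_mem (hf.1 i j) (hg.1 i j),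
    fun c x => by simp [hf.2.1, hg.2.1], fun A B x hA hB => by
      simp [Matrix.mul_add, Matrix.add_mul, hf.2.2 A B x hA hB, hg.2.2 A B x hA hB]⟩
  zero_mem' := ⟨fun i j => (Pf K n m).zero_mem, fun c x => by simp, fun A B x _ _ => by simp⟩
  smul_mem' c f hf := ⟨fun i j => (Pf K n m).smul_mem (hf.1 i j) c,
    fun b x => by
      simp only [Pi.smul_apply, hf.2.1]; rw [smul_comm], fun A B x hA hB => by
      simp [hf.2.2 A B x hA hB]⟩

theorem Cv_mul {e e' : ℕ} {Φ Ψ} (h : Φ ∈ Cv K n m e) (h' : Ψ ∈ Cv K n m e') : Φ * Ψ ∈ Cv K n m (e + e') := by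
  refine ⟨?_, ?_, ?_⟩
  · intro i j
    simp only [Pi.mul_apply, Matrix.mul_apply]
    exact Pf_sum _ _ fun k _ => Pf_mul (h.1 _ _) (h'.1 _ _)
  · intro c x
    rw [Pi.mul_apply, Pi.mul_apply, h.2.1, h'.2.1, Matrix.smul_mul, Matrix.mul_smul, smul_smul, pow_add]
  · intro A B x hA hB
    rw [Pi.mul_apply, Pi.mul_apply, ← Matrix.mul_assoc, h.2.2 A B x hA hB, Matrix.mul_assoc, h'.2.2 A B x hA hB, Matrix.mul_assoc]

theorem Cv_pow (e L : ℕ) : (Cv K n m e) ^ L ≤ Cv K n m (L * e) := by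
  induction L with
  | zero =>
    rw [pow_zero, Submodule.one_le]
    refine ⟨fun i j => ?_, fun c x => by simp, fun A B x _ _ => by simp⟩
    exact Pf_const _
  | succ L ih =>
    rw [pow_succ, Submodule.mul_le, add_mul, one_mul]
    intro a ha b hb
    exact Cv_mul (ih ha) hb

theorem Cv_det [Infinite K] {e : ℕ} {Φ} (h : Φ ∈ Cv K n m e) :
    ∃ g ∈ matrixSemiInvariants K n m, g.IsHomogeneous (n * e) ∧ ∀ x, aeval (matCoords x) g = (Φ x).det := by
  refine toInv (fun x => (Φ x).det) (Pf_det _ h.1) _ ?_ ?_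
  · intro c x
    rw [h.2.1, Matrix.det_smul, ← pow_mul]; simp [mul_comm]
  · intro A B x hA hB
    have := congrArg Matrix.det (h.2.2 A B x hA hB)
    rw [Matrix.det_mul, Matrix.det_mul, hB, one_mul, mul_one] at this
    exact this

theorem Cv_scalar (T : Fin m → Matrix (Fin d) (Fin d) K) :
    (fun x => (Big x T).det • (1 : Matrix (Fin n) (Fin n) K)) ∈ Cv K n m (n * d) := by
  refine ⟨?_, ?_, ?_⟩
  · intro i j
    simp only [Matrix.smul_apply, smul_eq_mul]
    exact Pf_mul (Pf_det _ (Big_Pf T)) (Pf_const _)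
  · intro c x
    beta_reduce
    rw [fT_smul, smul_smul]
  · intro A B x hA hB
    beta_reduce
    rw [fT_act, hA, hB]; simp

/-- blocks -/
def blk {ι δ : Type} (M : Matrix (ι × δ) (ι × δ) K) (j h : δ) : Matrix ι ι K := Matrix.of fun i k => M (i, j) (k, h)

theorem blk_mul {ι δ : Type} [Fintype ι] [Fintype δ] (M N : Matrix (ι × δ) (ι × δ) K) (j k : δ) :
    blk (M * N) j k = ∑ h, blk M j h * blk N h k := by
  ext a b
  simp [blk, Matrix.mul_apply, Matrix.sum_apply, Fintype.sum_prod_type_right]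

theorem blk_kl {ι δ : Type} [Fintype ι] [Fintype δ] [DecidableEq δ] (A : Matrix ι ι K) (M : Matrix (ι × δ) (ι × δ) K) (j k : δ) :
    blk ((A ⊗ₖ (1 : Matrix δ δ K)) * M) j k = A * blk M j k := by
  ext a b
  simp [blk, Matrix.mul_apply, Fintype.sum_prod_type, Matrix.kroneckerMap_apply, Matrix.one_apply]

theorem blk_kr {ι δ : Type} [Fintype ι] [Fintype δ] [DecidableEq δ] (A : Matrix ι ι K) (M : Matrix (ι × δ) (ι × δ) K) (j k : δ) :
    blk (M * (A ⊗ₖ (1 : Matrix δ δ K))) j k = blk M j k * A := by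
  ext a b
  simp [blk, Matrix.mul_apply, Fintype.sum_prod_type, Matrix.kroneckerMap_apply, Matrix.one_apply]

theorem blk_scalar {ι δ : Type} [DecidableEq ι] [DecidableEq δ] (c : K) (j k : δ) :
    blk (c • (1 : Matrix (ι × δ) (ι × δ) K)) j k = if j = k then c • 1 else 0 := by
  ext a b
  by_cases h : j = k <;> simp [blk, Matrix.one_apply, h]

theorem Vb_blk {ι δ : Type} [Fintype δ] [DecidableEq δ] (x : Fin m → Matrix ι ι K) (T : Fin m → Matrix δ δ K) (j h : δ) :
    Vb T x j h = blk (Big x T) j h := by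
  ext a b
  simp [blk, Vb, Big_apply, Matrix.sum_apply, mul_comm]

theorem Cv_adj (hnd : 0 < n * d) (T : Fin m → Matrix (Fin d) (Fin d) K) (l : Fin m) (j k : Fin d) :
    (fun x => blk (Big x T).adjugate j k * x l) ∈ Cv K n m (n * d) := by
  refine ⟨?_, ?_, ?_⟩
  · intro a b
    simp only [Matrix.mul_apply, blk, Matrix.of_apply]
    exact Pf_sum _ _ fun i _ => Pf_mul (Pf_adj _ (Big_Pf T) _ _) (Pf_coord _ _ _)
  · intro c x
    beta_reduce
    rw [Big_smul, Matrix.adjugate_smul]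
    have : ∀ (r : K) (M : Matrix (Fin n × Fin d) (Fin n × Fin d) K), blk (r • M) j k = r • blk M j k := fun r M => rfl
    rw [this, Pi.smul_apply, Matrix.smul_mul, Matrix.mul_smul, smul_smul, ← pow_succ]
    congr 2
    simp; omega
  · intro A B x hA hB
    beta_reduce
    have h1 : (B ⊗ₖ (1 : Matrix (Fin d) (Fin d) K)) * (Big (fun l => A * x l * B) T).adjugate * (A ⊗ₖ (1 : Matrix (Fin d) (Fin d) K))
        = (Big x T).adjugate := by
      rw [Big_act, Matrix.adjugate_mul_distrib, Matrix.adjugate_mul_distrib]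
      have hb := Matrix.mul_adjugate (B ⊗ₖ (1 : Matrix (Fin d) (Fin d) K))
      have ha := Matrix.adjugate_mul (A ⊗ₖ (1 : Matrix (Fin d) (Fin d) K))
      rw [Matrix.det_kronecker, hB] at hb
      rw [Matrix.det_kronecker, hA] at ha
      simp only [one_pow, Matrix.det_one, mul_one, one_smul] at ha hb
      calc _ = ((B ⊗ₖ (1 : Matrix (Fin d) (Fin d) K)) * (B ⊗ₖ (1 : Matrix (Fin d) (Fin d) K)).adjugate) *
            (Big x T).adjugate * ((A ⊗ₖ (1 : Matrix (Fin d) (Fin d) K)).adjugate * (A ⊗ₖ (1 : Matrix (Fin d) (Fin d) K))) := by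
            simp only [Matrix.mul_assoc]
        _ = _ := by rw [ha, hb, Matrix.one_mul, Matrix.mul_one]
    rw [← h1, blk_kr, blk_kl]
    simp only [Matrix.mul_assoc]

theorem chain {E : Type} [Ring E] [Algebra K E] [FiniteDimensional K E] (Y : Submodule K E) (h1 : (1 : E) ∈ Y) (L : ℕ)
    (hL : Module.finrank K E ≤ L) : Y ^ L * Y = Y ^ L := by
  have hmono : ∀ k, Y ^ k ≤ Y ^ (k + 1) := fun k => by
    rw [pow_succ]
    intro a ha
    have := Submodule.mul_mem_mul ha h1
    rwa [mul_one] at this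
  have hst : ∀ k, Y ^ k = Y ^ (k + 1) → ∀ j, Y ^ (k + j) = Y ^ k := by
    intro k hk j
    induction j with
    | zero => rfl
    | succ j ih => rw [← add_assoc, pow_succ, ih, ← pow_succ, ← hk]
  obtain ⟨k, hk, hk'⟩ : ∃ k ≤ L, Y ^ k = Y ^ (k + 1) := by
    by_contra hc
    push Not at hc
    have : ∀ k ≤ L + 1, k ≤ Module.finrank K (Y ^ k : Submodule K E) := by
      intro k
      induction k with
      | zero => simp
      | succ k ih =>
        intro hk
        have h2 := Submodule.finrank_lt_finrank_of_lt (lt_of_le_of_ne (hmono k) (hc k (by omega)))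
        have := ih (by omega)
        omega
    have h3 := this (L + 1) le_rfl
    have h4 := Submodule.finrank_le (Y ^ (L + 1) : Submodule K E)
    omega
  obtain ⟨j, rfl⟩ := Nat.exists_eq_add_of_le hk
  rw [← pow_succ, add_assoc, hst k hk', hst k hk']

end eq
end Sep

open MvPolynomial Matrix

namespace Sep
section fin
variable {K : Type} [Field K] {n m : ℕ}

theorem bothT [Infinite K] [NeZero n] {v w : Fin m → Matrix (Fin n) (Fin n) K} (hv : NoShrunk v) (hw : NoShrunk w)
    (d : ℕ) (hd : n ≤ d) : ∃ T : Fin m → Matrix (Fin d) (Fin d) K, (Big v T).det ≠ 0 ∧ (Big w T).det ≠ 0 := by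
  have hn : 0 < n := Nat.pos_of_ne_zero (NeZero.ne n)
  obtain ⟨T, hT⟩ := fullDim v hv d (by omega) (by simpa using hd)
  obtain ⟨S, hS⟩ := fullDim w hw d (by omega) (by simpa using hd)
  obtain ⟨s, h1, h2⟩ := Rep.combine (Big v T) (Big v S) (Big w T) (Big w S) hT.ne_zero hS.ne_zero
  exact ⟨s • S + T, by rwa [Big_comb], by rwa [Big_comb]⟩

/-- the representation attached to a point -/
noncomputable def mkRep {d : ℕ} {𝒜 : Type} [Ring 𝒜] [Algebra K 𝒜] (T : Fin m → Matrix (Fin d) (Fin d) K)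
    (y : Fin m → Fin d → Fin d → 𝒜) (x : Fin m → Matrix (Fin n) (Fin n) K) (ρ : 𝒜 →ₐ[K] Matrix (Fin n) (Fin n) K)
    (c : K) (hc : c ≠ 0) (hx : (Big x T).det = c)
    (hy : ∀ l h k, ρ (y l h k) = c⁻¹ • (blk (Big x T).adjugate h k * x l)) : Rep T y where
  ι := Fin n
  x := x
  ρ := ρ
  V' h k := c⁻¹ • blk (Big x T).adjugate h k
  left j k := by
    simp only [Vb_blk, Matrix.smul_mul, ← Finset.smul_sum]
    rw [← blk_mul, Matrix.adjugate_mul, hx, blk_scalar]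
    split_ifs
    · rw [smul_smul, inv_mul_cancel₀ hc, one_smul]
    · rw [smul_zero]
  compat l j k := by
    simp only [Vb_blk, hy, Matrix.mul_smul, ← Finset.smul_sum, ← Matrix.mul_assoc, ← Finset.sum_mul]
    rw [← blk_mul, Matrix.mul_adjugate, hx, blk_scalar]
    split_ifs
    · rw [Matrix.smul_mul, smul_smul, inv_mul_cancel₀ hc, one_smul, Matrix.one_mul]
    · rw [Matrix.zero_mul, smul_zero]

/-- evaluation at two points -/
def ev2 (v w : Fin m → Matrix (Fin n) (Fin n) K) :
    ((Fin m → Matrix (Fin n) (Fin n) K) → Matrix (Fin n) (Fin n) K) →ₐ[K]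
      (Matrix (Fin n) (Fin n) K × Matrix (Fin n) (Fin n) K) :=
  (Pi.evalAlgHom K (fun _ => Matrix (Fin n) (Fin n) K) v).prod (Pi.evalAlgHom K (fun _ => Matrix (Fin n) (Fin n) K) w)

theorem ev2_apply (v w : Fin m → Matrix (Fin n) (Fin n) K) (Φ) : ev2 v w Φ = (Φ v, Φ w) := rfl

theorem relOf [IsAlgClosed K] (hn : 2 ≤ n) {v w : Fin m → Matrix (Fin n) (Fin n) K} (T : Fin m → Matrix (Fin n) (Fin n) K)
    (c : K) (hc : c ≠ 0) (hv : (Big v T).det = c) (hw : (Big w T).det = c)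
    (H : ∀ Φ ∈ Cv K n m (n ^ 3 * (n * n)), (Φ v).det = (Φ w).det) : Rel v w := by
  haveI : NeZero n := ⟨by omega⟩
  set C := Cv K n m (n * n) with hC
  set Y := C.map (ev2 v w).toLinearMap with hY
  have h1 : (1 : Matrix (Fin n) (Fin n) K × Matrix (Fin n) (Fin n) K) ∈ Y := by
    refine ⟨c⁻¹ • (fun x => (Big x T).det • (1 : Matrix (Fin n) (Fin n) K)), C.smul_mem _ (Cv_scalar T), ?_⟩
    rw [AlgHom.toLinearMap_apply, ev2_apply]
    simp only [Pi.smul_apply, hv, hw, smul_smul, inv_mul_cancel₀ hc, one_smul]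
    rfl
  have hfr : Module.finrank K (Matrix (Fin n) (Fin n) K × Matrix (Fin n) (Fin n) K) ≤ n ^ 3 := by
    rw [Module.finrank_prod, Module.finrank_matrix]
    simp
    nlinarith [Nat.mul_le_mul_right (n * n) hn]
  have hch := chain Y h1 (n ^ 3) hfr
  have hall : ∀ k, Y ^ (n ^ 3) * Y ^ k = Y ^ (n ^ 3) := by
    intro k
    induction k with
    | zero => rw [pow_zero, mul_one]
    | succ k ih => rw [pow_succ Y k, ← mul_assoc, ih, hch]
  have hone : (1 : Matrix (Fin n) (Fin n) K × Matrix (Fin n) (Fin n) K) ∈ Y ^ (n ^ 3) :=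
    Submodule.one_le.mp (one_le_pow_of_one_le' (Submodule.one_le.mpr h1) _)
  have hYL : Y ≤ Y ^ (n ^ 3) := by
    intro a ha
    have := Submodule.mul_mem_mul hone ha
    rwa [one_mul, hch] at this
  let 𝒜 : Subalgebra K (Matrix (Fin n) (Fin n) K × Matrix (Fin n) (Fin n) K) :=
    Submodule.toSubalgebra (Y ^ (n ^ 3)) hone (fun a b ha hb => by
      have := Submodule.mul_mem_mul ha hb
      rwa [hall] at this)
  have hdet : ∀ a ∈ 𝒜, a.1.det = a.2.det := by
    intro a ha
    have ha' : a ∈ Y ^ (n ^ 3) := ha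
    rw [hY, ← Submodule.map_pow] at ha'
    obtain ⟨Φ, hΦ, rfl⟩ := ha'
    exact H Φ (Cv_pow _ _ hΦ)
  have hym : ∀ l h k, c⁻¹ • ev2 v w (fun x => blk (Big x T).adjugate h k * x l) ∈ 𝒜 := by
    intro l h k
    refine 𝒜.smul_mem ?_ _
    refine hYL ⟨_, Cv_adj (Nat.mul_pos (by omega) (by omega)) T l h k, rfl⟩
  let y : Fin m → Fin n → Fin n → 𝒜 := fun l h k => ⟨_, hym l h k⟩
  let X : Rep T y := mkRep T y v ((AlgHom.fst K _ _).comp 𝒜.val) c hc hv (fun l h k => rfl)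
  let Z : Rep T y := mkRep T y w ((AlgHom.snd K _ _).comp 𝒜.val) c hc hw (fun l h k => rfl)
  exact Rep.main n X Z (Fintype.card_fin n) (fun a => hdet a.1 a.2)

theorem final [IsAlgClosed K] (hn : 2 ≤ n) (v w : Fin m → Matrix (Fin n) (Fin n) K)
    (hvw : ∃ f ∈ matrixSemiInvariants K n m, aeval (matCoords v) f ≠ aeval (matCoords w) f) :
    ∃ g ∈ matrixSemiInvariants K n m, (∃ d ≤ n ^ 6, g.IsHomogeneous d) ∧
      aeval (matCoords v) g ≠ aeval (matCoords w) g := by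
  haveI : NeZero n := ⟨by omega⟩
  haveI : Infinite K := IsAlgClosed.instInfinite
  obtain ⟨f, hf, hne⟩ := hvw
  have hF := isInv hf
  have hd1 : n * n ≤ n ^ 6 := by rw [← pow_two]; exact Nat.pow_le_pow_right (by omega) (by omega)
  have hd2 : n * (n + 1) ≤ n ^ 6 := by
    calc n * (n + 1) ≤ n * (n * n) := Nat.mul_le_mul_left _ (by nlinarith)
      _ = n ^ 3 := by ring
      _ ≤ n ^ 6 := Nat.pow_le_pow_right (by omega) (by omega)
  have hz : ∀ T : Fin m → Matrix (Fin n) (Fin n) K, (Big (0 : Fin m → Matrix (Fin n) (Fin n) K) T).det = 0 := by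
    intro T
    have h0 : Big (0 : Fin m → Matrix (Fin n) (Fin n) K) T = 0 := by
      ext p q; simp [Big_apply]
    rw [h0, Matrix.det_zero]
  by_contra hcon
  push Not at hcon
  have key : ∀ d, n * d ≤ n ^ 6 → ∀ T : Fin m → Matrix (Fin d) (Fin d) K, (Big v T).det = (Big w T).det := by
    intro d hd T
    obtain ⟨g, hg, hh, he⟩ := fT_inv (n := n) T
    rw [← he, ← he]
    exact hcon g hg ⟨_, hd, hh⟩
  have hnull : ∀ (T x : Fin m → Matrix (Fin n) (Fin n) K), ¬ NoShrunk x → (Big x T).det = 0 := by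
    intro T x hx
    obtain ⟨g, hg, hh, he⟩ := fT_inv (n := n) T
    have h3 := nullcone (isInv hg) x hx
    beta_reduce at h3
    rw [he, he, hz] at h3
    exact h3
  by_cases hv : NoShrunk v
  · by_cases hw : NoShrunk w
    · obtain ⟨T, hT, -⟩ := bothT hv hw n le_rfl
      obtain ⟨T', hT', -⟩ := bothT hv hw (n + 1) (by omega)
      have hr := relOf hn T _ hT rfl (key n hd1 T).symm (fun Φ hΦ => by
        obtain ⟨g, hg, hh, he⟩ := Cv_det hΦ
        rw [← he, ← he]
        exact hcon g hg ⟨_, le_of_eq (by ring), hh⟩)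
      obtain ⟨A, A', B, B', -, -, -, -, hAB⟩ := hr
      have hp : ∀ d, n * d ≤ n ^ 6 → ∀ T : Fin m → Matrix (Fin d) (Fin d) K, (Big v T).det ≠ 0 →
          (A.det * B.det) ^ d = 1 := by
        intro d hd T hT
        obtain ⟨g, hg, hh, he⟩ := fT_inv (n := n) T
        have h3 := hAB _ (isInv hg)
        beta_reduce at h3
        rw [he, he, fT_act, ← key d hd T] at h3
        exact (mul_eq_right₀ hT).mp h3.symm
      have e1 := hp n hd1 T hT
      have e2 := hp (n + 1) hd2 T' hT'
      rw [pow_succ, e1, one_mul] at e2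
      have h4 := hAB _ hF
      rw [IsInv.gl hF A B e2 v] at h4
      exact hne h4.symm
    · obtain ⟨T, hT⟩ := fullDim v hv n (by omega) (by simp)
      exact hT.ne_zero ((key n hd1 T).trans (hnull T w hw))
  · by_cases hw : NoShrunk w
    · obtain ⟨T, hT⟩ := fullDim w hw n (by omega) (by simp)
      exact hT.ne_zero ((key n hd1 T).symm.trans (hnull T v hv))
    · exact hne ((nullcone hF v hv).trans (nullcone hF w hw).symm)

theorem one_case (v w : Fin m → Matrix (Fin 1) (Fin 1) K)
    (hvw : ∃ f ∈ matrixSemiInvariants K 1 m, aeval (matCoords v) f ≠ aeval (matCoords w) f) :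
    ∃ g ∈ matrixSemiInvariants K 1 m, (∃ d ≤ 1 ^ 6, g.IsHomogeneous d) ∧
      aeval (matCoords v) g ≠ aeval (matCoords w) g := by
  obtain ⟨f, -, hne⟩ := hvw
  have h1 : ∃ p, matCoords v p ≠ matCoords w p := by
    by_contra h
    push Not at h
    exact hne (by rw [funext h])
  obtain ⟨p, hp⟩ := h1
  refine ⟨X p, ?_, ⟨1, by norm_num, isHomogeneous_X _ _⟩, by simpa using hp⟩
  simp only [matrixSemiInvariants, Algebra.mem_iInf, AlgHom.mem_equalizer]
  intro A B x
  have hs : ∀ A : SpecialLinearGroup (Fin 1) K, A.val = 1 := by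
    intro A
    have h := A.2
    rw [Matrix.det_fin_one] at h
    ext i j
    rw [Subsingleton.elim i 0, Subsingleton.elim j 0]
    simpa using h
  simp only [hs, Matrix.one_mul, Matrix.mul_one]

end fin
end Sep

/-- The homogeneous elements of degree `≤ n^6` in `R(n,m)` form a separating
subset: any two points of `Mat_{n,n}^m` separated by some semi-invariant are separated by a
homogeneous semi-invariant of degree `≤ n^6`. -/
theorem stmt_7 (K : Type) [Field K] [IsAlgClosed K] (n m : ℕ) (hn : 0 < n) (hm : 0 < m)
    (v w : Fin m → Matrix (Fin n) (Fin n) K)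
    (hvw : ∃ f ∈ matrixSemiInvariants K n m, aeval (matCoords v) f ≠ aeval (matCoords w) f) :
    ∃ g ∈ matrixSemiInvariants K n m, (∃ d ≤ n ^ 6, g.IsHomogeneous d) ∧
      aeval (matCoords v) g ≠ aeval (matCoords w) g := by
  by_cases h2 : 2 ≤ n
  · exact Sep.final h2 v w hvw
  · obtain rfl : n = 1 := by omega
    exact Sep.one_case v w hvw
end
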